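/- arXiv:1207.0705 — 5 statements merged into one kernel-verified Lean document; each statement's English description precedes it below -/
import Mathlib

section
/- For every finite Erdős–Szekeres set 𝚽 of one-dimensional semialgebraic predicates there exists a constant C > 0 such that for every n ≥ 1, every sequence of real numbers of length at least 2^(2^(C·n)) contains an n-term subsequence on which at least one predicate of 𝚽 holds everywhere. -/
/-- A `k`-ary predicate `Φ` holds everywhere on a sequence `a` of reals if it holds
on every increasing `k`-tuple of terms of `a`. -/
def HoldsEverywhere {k n : ℕ} (Φ : (Fin k → ℝ) → Prop) (a : Fin n → ℝ) : Prop :=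
  ∀ i : Fin k → Fin n, StrictMono i → Φ (fun j => a (i j))

/-- A `k`-ary predicate on ℝ is semialgebraic if it is determined by the sign vector of
finitely many real polynomials. -/
def IsSemialgebraic {k : ℕ} (Φ : (Fin k → ℝ) → Prop) : Prop :=
  ∃ (m : ℕ) (p : Fin m → MvPolynomial (Fin k) ℝ) (S : Set (Fin m → SignType)),
    ∀ x : Fin k → ℝ, Φ x ↔ (fun i => SignType.sign (MvPolynomial.eval x (p i))) ∈ S

/-- A finite family of predicates (of varying arities) is Erdős–Szekeres if every long
sequence contains a long subsequence on which some member holds everywhere. -/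
def IsErdosSzekeres {r : ℕ} (k : Fin r → ℕ) (Φ : ∀ i, (Fin (k i) → ℝ) → Prop) : Prop :=
  ∀ n : ℕ, ∃ N : ℕ, ∀ a : Fin N → ℝ, ∃ φ : Fin n → Fin N, StrictMono φ ∧
    ∃ i, HoldsEverywhere (Φ i) (fun j => a (φ j))

/-- Taylor expansion of a polynomial around the diagonal point `(c, …, c)`, with an index set of
monomials depending only on the total degree. -/
lemma exists_coeff_eval_add_mul {k : ℕ} (p : MvPolynomial (Fin k) ℝ) (c lam : ℝ) :
    ∃ q : (Fin k → ℕ) → ℝ, ∀ y : Fin k → ℝ,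
      MvPolynomial.eval (fun l => c + lam * y l) p =
        ∑ α ∈ Fintype.piFinset (fun _ : Fin k => Finset.range (p.totalDegree + 1)),
          q α * ∏ l, y l ^ α l := by
  refine ⟨fun α => ∑ m ∈ p.support, p.coeff m *
    ∏ l, (lam ^ α l * c ^ (m l - α l) * ((m l).choose (α l) : ℝ)), fun y => ?_⟩
  rw [MvPolynomial.eval_eq']
  simp_rw [Finset.sum_mul]
  rw [Finset.sum_comm]
  refine Finset.sum_congr rfl fun m hm => ?_
  have key : ∀ l, (c + lam * y l) ^ m l = ∑ e ∈ Finset.range (p.totalDegree + 1),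
      (lam ^ e * c ^ (m l - e) * ((m l).choose e : ℝ)) * y l ^ e := by
    intro l
    have hle : m l ≤ p.totalDegree :=
      (MvPolynomial.monomial_le_degreeOf l hm).trans (MvPolynomial.degreeOf_le_totalDegree p l)
    rw [add_comm, add_pow]
    rw [Finset.sum_subset (s₂ := Finset.range (p.totalDegree + 1))]
    · refine Finset.sum_congr rfl fun e _ => ?_
      rw [mul_pow]; ring
    · intro e he
      simp only [Finset.mem_range] at he ⊢
      omega
    · intro e _ he
      simp only [Finset.mem_range, not_lt] at he
      rw [Nat.choose_eq_zero_of_lt (by omega)]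
      simp
  simp_rw [key]
  rw [Finset.prod_univ_sum, Finset.mul_sum]
  refine Finset.sum_congr rfl fun α _ => ?_
  rw [Finset.prod_mul_distrib, mul_assoc]

/-- A sum has the sign of a term that dominates all the others. -/
lemma sign_sum_eq_of_dominant {ι : Type*} (E : Finset ι) (f : ι → ℝ) (a : ι) (ha : a ∈ E)
    (h0 : f a ≠ 0) (h : ∀ b ∈ E, b ≠ a → ((E.card : ℝ) + 1) * |f b| ≤ |f a|) :
    SignType.sign (∑ b ∈ E, f b) = SignType.sign (f a) := by
  classical
  have hpos : 0 < |f a| := abs_pos.2 h0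
  have hcard : (0 : ℝ) < E.card + 1 := by positivity
  have hrest : |∑ b ∈ E.erase a, f b| < |f a| := by
    calc |∑ b ∈ E.erase a, f b| ≤ ∑ b ∈ E.erase a, |f b| := Finset.abs_sum_le_sum_abs _ _
      _ ≤ (E.erase a).card • (|f a| / (E.card + 1)) := by
          refine Finset.sum_le_card_nsmul _ _ _ fun b hb => ?_
          rw [Finset.mem_erase] at hb
          rw [le_div_iff₀ hcard, mul_comm]
          exact h b hb.2 hb.1
      _ ≤ (E.card : ℝ) * (|f a| / (E.card + 1)) := by
          rw [nsmul_eq_mul]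
          gcongr
          exact Finset.erase_subset _ _
      _ < |f a| := by
          rw [← mul_div_assoc, div_lt_iff₀ hcard]
          nlinarith
  rw [← Finset.add_sum_erase E f ha]
  have := abs_lt.1 hrest
  rcases lt_or_gt_of_ne h0 with hn | hp
  · rw [abs_of_neg hn] at this
    rw [sign_neg hn, sign_neg (by linarith)]
  · rw [abs_of_pos hp] at this
    rw [sign_pos hp, sign_pos (by linarith)]

/-- On points growing geometrically, a linear form is governed by its last nonzero coefficient, so
its comparison with a constant `-R` is uniform as soon as no point has the magnitude of `R`. -/
lemma affine_form_uniform {ι : Type*} {k : ℕ} (D κ A R : ℝ) (hD : 0 ≤ D) (hκ : 0 < κ)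
    (hA : 2 * k * D + 2 * D + 4 ≤ A) (δ : Fin k → ℝ) (hδD : ∀ l, |δ l| ≤ D)
    (hδ1 : ∀ l, δ l ≠ 0 → 1 ≤ |δ l|) (hδ : ∃ l, δ l ≠ 0) (t : ι → ℝ) (T : Set ι)
    (hT : T.Nontrivial) (htκ : ∀ i ∈ T, 4 * κ ≤ t i)
    (hgeo : ∀ i ∈ T, ∀ j ∈ T, i ≠ j → A * t i ≤ t j ∨ A * t j ≤ t i)
    (hc₁ : ∀ i ∈ T, ∀ j ∈ T, (|R| + κ < t i / 2 ↔ |R| + κ < t j / 2))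
    (hc₂ : ∀ i ∈ T, ∀ j ∈ T, ((D + 1) * t i + κ < |R| ↔ (D + 1) * t j + κ < |R|)) :
    (∀ x : Fin k → ι, (∀ l, x l ∈ T) → (∀ l l', l < l' → A * t (x l) ≤ t (x l')) →
      κ ≤ R + ∑ l, δ l * t (x l)) ∨
    (∀ x : Fin k → ι, (∀ l, x l ∈ T) → (∀ l l', l < l' → A * t (x l) ≤ t (x l')) →
      R + ∑ l, δ l * t (x l) ≤ -κ) := by
  classical
  obtain ⟨j, hj0, hjtop⟩ : ∃ j, δ j ≠ 0 ∧ ∀ l, j < l → δ l = 0 := by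
    have hne : (Finset.univ.filter fun l => δ l ≠ 0).Nonempty := by
      obtain ⟨l, hl⟩ := hδ
      exact ⟨l, by simpa using hl⟩
    refine ⟨_, (Finset.mem_filter.1 (Finset.max'_mem _ hne)).2, fun l hl => ?_⟩
    by_contra hl0
    exact absurd (Finset.le_max' _ l (by simpa using hl0)) (not_le.2 hl)
  have hj1 := hδ1 j hj0
  have hkD : 0 ≤ (k : ℝ) * D := by positivity
  have hApos : 0 < A := by linarith
  have main : ∀ x : Fin k → ι, (∀ l, x l ∈ T) → (∀ l l', l < l' → A * t (x l) ≤ t (x l')) →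
      |∑ l, δ l * t (x l) - δ j * t (x j)| ≤ t (x j) / 2 := by
    intro x hx hgx
    have htj : 0 < t (x j) := by linarith [htκ _ (hx j)]
    rw [← Finset.add_sum_erase Finset.univ _ (Finset.mem_univ j), add_sub_cancel_left]
    calc |∑ l ∈ Finset.univ.erase j, δ l * t (x l)|
        ≤ ∑ l ∈ Finset.univ.erase j, |δ l * t (x l)| := Finset.abs_sum_le_sum_abs _ _
      _ ≤ (Finset.univ.erase j).card • (D * (t (x j) / A)) := by
          refine Finset.sum_le_card_nsmul _ _ _ fun l hl => ?_
          have hlj := Finset.ne_of_mem_erase hl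
          have htl : 0 < t (x l) := by linarith [htκ _ (hx l)]
          rcases lt_or_gt_of_ne hlj with h | h
          · rw [abs_mul, abs_of_pos htl]
            have : t (x l) ≤ t (x j) / A := by
              rw [le_div_iff₀ hApos, mul_comm]
              exact hgx l j h
            exact mul_le_mul (hδD l) this htl.le hD
          · rw [hjtop l h, zero_mul, abs_zero]
            positivity
      _ ≤ (k : ℝ) * (D * (t (x j) / A)) := by
          rw [nsmul_eq_mul]
          gcongr
          exact (Finset.card_le_univ _).trans (by simp)
      _ ≤ t (x j) / 2 := by
          have : (k : ℝ) * (D * (t (x j) / A)) = (k * D) * t (x j) / A := by ring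
          rw [this, div_le_iff₀ hApos]
          nlinarith
  have hcase : (∀ i ∈ T, |R| + κ < t i / 2) ∨ (∀ i ∈ T, (D + 1) * t i + κ < |R|) := by
    by_contra hcon
    push Not at hcon
    obtain ⟨⟨i, hi, hi'⟩, ⟨i₂, hi₂, hi₂'⟩⟩ := hcon
    have hb₁ : ∀ u ∈ T, t u / 2 ≤ |R| + κ := fun u hu =>
      not_lt.1 fun h => absurd ((hc₁ u hu i hi).1 h) (not_lt.2 hi')
    have hb₂ : ∀ u ∈ T, |R| ≤ (D + 1) * t u + κ := fun u hu =>
      not_lt.1 fun h => absurd ((hc₂ u hu i₂ hi₂).1 h) (not_lt.2 hi₂')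
    have hno : ∀ u ∈ T, ∀ v ∈ T, ¬ A * t u ≤ t v := by
      intro u hu v hv huv
      have h1 := hb₁ v hv
      have h2 := hb₂ u hu
      have h3 := htκ u hu
      have h4 : (2 * D + 4) * t u ≤ A * t u := by
        apply mul_le_mul_of_nonneg_right _ (by linarith)
        linarith
      nlinarith
    obtain ⟨u, hu, v, hv, huv⟩ := hT
    rcases hgeo u hu v hv huv with h | h
    · exact hno u hu v hv h
    · exact hno v hv u hu h
  have hR := abs_le.1 (le_refl |R|)
  rcases hcase with hc | hc
  · rcases lt_or_gt_of_ne hj0 with hneg | hpos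
    · right
      intro x hx hgx
      rw [abs_of_neg hneg] at hj1
      have h1 := abs_le.1 (main x hx hgx)
      have h2 := hc _ (hx j)
      have h3 := htκ _ (hx j)
      nlinarith
    · left
      intro x hx hgx
      rw [abs_of_pos hpos] at hj1
      have h1 := abs_le.1 (main x hx hgx)
      have h2 := hc _ (hx j)
      have h3 := htκ _ (hx j)
      nlinarith
  · have hDj := abs_le.1 (hδD j)
    rcases le_total 0 R with hRs | hRs
    · left
      intro x hx hgx
      have h1 := abs_le.1 (main x hx hgx)
      have h2 := hc _ (hx j)
      have h3 := htκ _ (hx j)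
      rw [abs_of_nonneg hRs] at h2
      nlinarith
    · right
      intro x hx hgx
      have h1 := abs_le.1 (main x hx hgx)
      have h2 := hc _ (hx j)
      have h3 := htκ _ (hx j)
      rw [abs_of_nonpos hRs] at h2
      nlinarith

/-- For a polynomial evaluated at the points `c + lam * exp (± t i)`, a coloring of the indices with
boundedly many colors makes the sign uniform on monochromatic sets along which `t` grows
geometrically. -/
lemma exists_coloring_sign_uniform {k : ℕ} (p : MvPolynomial (Fin k) ℝ) :
    ∃ (A₀ B₀ : ℝ) (Γ : Type) (_ : Finite Γ), ∀ (c lam τ : ℝ) {ι : Type} (t : ι → ℝ),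
      ∃ χ : ι → Γ, ∀ T : Set ι, |τ| = 1 → T.Nontrivial → (∀ i ∈ T, B₀ ≤ t i) →
        (∀ i ∈ T, ∀ j ∈ T, i ≠ j → A₀ * t i ≤ t j ∨ A₀ * t j ≤ t i) →
        (∀ i ∈ T, ∀ j ∈ T, χ i = χ j) →
        ∃ s : SignType, ∀ x : Fin k → ι, (∀ l, x l ∈ T) →
          (∀ l l', l < l' → A₀ * t (x l) ≤ t (x l')) →
          SignType.sign (MvPolynomial.eval
            (fun l => c + lam * Real.exp (τ * t (x l))) p) = s := by
  classical
  set D : ℕ := p.totalDegree with hDdef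
  set E : Finset (Fin k → ℕ) :=
    Fintype.piFinset (fun _ : Fin k => Finset.range (p.totalDegree + 1)) with hEdef
  have hEne : E.Nonempty := ⟨fun _ => 0, by simp [hEdef]⟩
  set κ : ℝ := Real.log (E.card + 1) with hκdef
  have hκ : 0 < κ := Real.log_pos (by
    have : (0 : ℝ) < E.card := by exact_mod_cast hEne.card_pos
    linarith)
  have hexpκ : Real.exp κ = E.card + 1 := Real.exp_log (by positivity)
  refine ⟨2 * k * D + 2 * D + 4, 4 * κ, E × E → Prop × Prop, inferInstance, ?_⟩
  intro c lam τ ι t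
  obtain ⟨q, hq⟩ := exists_coeff_eval_add_mul p c lam
  let R : E × E → ℝ := fun e => Real.log |q e.1| - Real.log |q e.2|
  refine ⟨fun i e => (|R e| + κ < t i / 2, ((D : ℝ) + 1) * t i + κ < |R e|), ?_⟩
  intro T hτ hT htκ hgeo hχ
  let good : (Fin k → ι) → Prop := fun x => (∀ l, x l ∈ T) ∧
    (∀ l l', l < l' → (2 * k * D + 2 * D + 4) * t (x l) ≤ t (x l'))
  let v : (Fin k → ℕ) → (Fin k → ι) → ℝ := fun α x =>
    Real.log |q α| + ∑ l, τ * α l * t (x l)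
  have hcmp : ∀ α ∈ E, ∀ β ∈ E, α ≠ β →
      (∀ x, good x → v β x + κ ≤ v α x) ∨ (∀ x, good x → v α x + κ ≤ v β x) := by
    intro α hα β hβ hne
    have hR : R (⟨α, hα⟩, ⟨β, hβ⟩) = Real.log |q α| - Real.log |q β| := rfl
    have hcast : ∀ l, |τ * ((α l : ℝ) - β l)| = ((|(α l : ℤ) - β l| : ℤ) : ℝ) := by
      intro l
      rw [abs_mul, hτ, one_mul]
      push_cast
      rfl
    have hdiff : ∀ x, v α x - v β x =
        R (⟨α, hα⟩, ⟨β, hβ⟩) + ∑ l, τ * ((α l : ℝ) - β l) * t (x l) := by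
      intro x
      have : ∑ l, τ * ((α l : ℝ) - β l) * t (x l) =
          ∑ l, τ * α l * t (x l) - ∑ l, τ * β l * t (x l) := by
        rw [← Finset.sum_sub_distrib]
        exact Finset.sum_congr rfl fun l _ => by ring
      rw [this, hR]
      simp only [v]
      ring
    have hτ0 : τ ≠ 0 := by
      rintro rfl
      simp at hτ
    have hχ' : ∀ i ∈ T, ∀ j ∈ T, _ := fun i hi j hj =>
      congrFun (hχ i hi j hj) (⟨α, hα⟩, ⟨β, hβ⟩)
    have hδD : ∀ l, |τ * ((α l : ℝ) - β l)| ≤ (D : ℝ) := by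
      intro l
      rw [hcast]
      have h1 := Finset.mem_range.1 (Fintype.mem_piFinset.1 hα l)
      have h2 := Finset.mem_range.1 (Fintype.mem_piFinset.1 hβ l)
      have : |(α l : ℤ) - β l| ≤ (D : ℤ) := by
        rw [abs_le]
        omega
      exact_mod_cast this
    have hδ1 : ∀ l, τ * ((α l : ℝ) - β l) ≠ 0 → 1 ≤ |τ * ((α l : ℝ) - β l)| := by
      intro l hl
      rw [hcast]
      have h0 : (α l : ℤ) - β l ≠ 0 := by
        intro h0
        apply hl
        have : (α l : ℝ) - β l = 0 := by exact_mod_cast h0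
        rw [this, mul_zero]
      exact_mod_cast Int.one_le_abs h0
    have hδ : ∃ l, τ * ((α l : ℝ) - β l) ≠ 0 := by
      obtain ⟨l, hl⟩ := Function.ne_iff.1 hne
      refine ⟨l, mul_ne_zero hτ0 (sub_ne_zero.2 ?_)⟩
      exact_mod_cast hl
    rcases affine_form_uniform (D : ℝ) κ _ (R (⟨α, hα⟩, ⟨β, hβ⟩)) (by positivity) hκ le_rfl
        (fun l => τ * ((α l : ℝ) - β l)) hδD hδ1 hδ t T hT htκ hgeo
        (fun i hi j hj => iff_of_eq (Prod.ext_iff.1 (hχ' i hi j hj)).1)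
        (fun i hi j hj => iff_of_eq (Prod.ext_iff.1 (hχ' i hi j hj)).2) with h | h
    · left
      intro x hx
      have := h x hx.1 hx.2
      rw [← hdiff] at this
      linarith
    · right
      intro x hx
      have := h x hx.1 hx.2
      rw [← hdiff] at this
      linarith
  have hterm : ∀ α x, q α ≠ 0 →
      |q α * ∏ l, Real.exp (τ * t (x l)) ^ α l| = Real.exp (v α x) := by
    intro α x h0
    simp only [v]
    rw [abs_mul, Real.exp_add, Real.exp_log (abs_pos.2 h0), Real.exp_sum,
      abs_of_pos (Finset.prod_pos fun l _ => pow_pos (Real.exp_pos _) _)]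
    congr 1
    refine Finset.prod_congr rfl fun l _ => ?_
    rw [← Real.exp_nat_mul]
    congr 1
    ring
  by_cases hex : ∃ x₀, good x₀
  swap
  · exact ⟨0, fun x hx hgx => absurd ⟨x, hx, hgx⟩ hex⟩
  obtain ⟨x₀, hx₀⟩ := hex
  by_cases hE' : (E.filter fun α => q α ≠ 0).Nonempty
  swap
  · refine ⟨0, fun x hx hgx => ?_⟩
    rw [hq, Finset.sum_eq_zero, sign_zero]
    intro α hα
    have : q α = 0 := by
      by_contra h
      exact hE' ⟨α, Finset.mem_filter.2 ⟨hα, h⟩⟩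
    rw [this, zero_mul]
  obtain ⟨α, hα, hmax⟩ := Finset.exists_max_image _ (fun α => v α x₀) hE'
  obtain ⟨hαE, hqα⟩ := Finset.mem_filter.1 hα
  refine ⟨SignType.sign (q α), fun x hx hgx => ?_⟩
  have hprod : 0 < ∏ l, Real.exp (τ * t (x l)) ^ α l :=
    Finset.prod_pos fun l _ => pow_pos (Real.exp_pos _) _
  rw [hq, sign_sum_eq_of_dominant E _ α hαE (mul_ne_zero hqα hprod.ne'), sign_mul,
    sign_pos hprod, mul_one]
  intro β hβ hβα
  by_cases hqβ : q β = 0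
  · rw [hqβ, zero_mul, abs_zero, mul_zero]
    exact abs_nonneg _
  · rw [hterm α x hqα, hterm β x hqβ, ← hexpκ, ← Real.exp_add, Real.exp_le_exp]
    rcases hcmp α hαE β hβ hβα.symm with h | h
    · linarith [h x ⟨hx, hgx⟩]
    · have h1 := h x₀ hx₀
      have h2 := hmax β (Finset.mem_filter.2 ⟨hβ, hqβ⟩)
      linarith

/-- The version of `exists_coloring_sign_uniform` for sequences that are geometric in either
direction, with uniform constants for finitely many polynomials. -/
lemma exists_coloring_sign_uniform_family {I : Type} [Finite I] (k : I → ℕ)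
    (p : ∀ i, MvPolynomial (Fin (k i)) ℝ) :
    ∃ (A B : ℝ) (Γ : Type) (_ : Finite Γ), 0 < B ∧
      ∀ (c lam τ : ℝ) {ι : Type} [LinearOrder ι] (t : ι → ℝ),
      ∃ χ : ι → Γ, ∀ T : Set ι, |τ| = 1 → T.Nontrivial → (∀ i ∈ T, B ≤ t i) →
        ((∀ i ∈ T, ∀ j ∈ T, i < j → A * t j ≤ t i) ∨
          (∀ i ∈ T, ∀ j ∈ T, i < j → A * t i ≤ t j)) →
        (∀ i ∈ T, ∀ j ∈ T, χ i = χ j) →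
        ∀ i, ∃ s : SignType, ∀ x : Fin (k i) → ι, StrictMono x → (∀ l, x l ∈ T) →
          SignType.sign (MvPolynomial.eval
            (fun l => c + lam * Real.exp (τ * t (x l))) (p i)) = s := by
  choose A₁ B₁ Γ₁ fin₁ h₁ using fun i => exists_coloring_sign_uniform (p i)
  choose A₂ B₂ Γ₂ fin₂ h₂ using fun i =>
    exists_coloring_sign_uniform (MvPolynomial.rename Fin.rev (p i))
  obtain ⟨A₁', hA₁⟩ := Finite.exists_le A₁
  obtain ⟨A₂', hA₂⟩ := Finite.exists_le A₂
  obtain ⟨B₁', hB₁⟩ := Finite.exists_le B₁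
  obtain ⟨B₂', hB₂⟩ := Finite.exists_le B₂
  refine ⟨max A₁' A₂', max (max B₁' B₂') 1, (∀ i, Γ₁ i) × (∀ i, Γ₂ i), inferInstance,
    by positivity, ?_⟩
  intro c lam τ ι _ t
  choose χ₁ hχ₁ using fun i => h₁ i c lam τ t
  choose χ₂ hχ₂ using fun i => h₂ i c lam τ t
  refine ⟨fun u => (fun i => χ₁ i u, fun i => χ₂ i u), ?_⟩
  intro T hτ hT hB hgeo hχ i
  have hpos : ∀ u ∈ T, 0 < t u := fun u hu =>
    lt_of_lt_of_le one_pos ((le_max_right _ _).trans (hB u hu))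
  have hle₁ : A₁ i ≤ max A₁' A₂' := (hA₁ i).trans (le_max_left _ _)
  have hle₂ : A₂ i ≤ max A₁' A₂' := (hA₂ i).trans (le_max_right _ _)
  have hB' : max B₁' B₂' ≤ max (max B₁' B₂') 1 := le_max_left _ _
  have scale : ∀ A' ≤ max A₁' A₂', ∀ u ∈ T, ∀ w : ℝ, max A₁' A₂' * t u ≤ w → A' * t u ≤ w :=
    fun A' hA' u hu w hw => (mul_le_mul_of_nonneg_right hA' (hpos u hu).le).trans hw
  have either : ∀ A' ≤ max A₁' A₂', ∀ u ∈ T, ∀ w ∈ T, u ≠ w →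
      A' * t u ≤ t w ∨ A' * t w ≤ t u := by
    intro A' hA' u hu w hw huw
    rcases hgeo with hg | hg <;> rcases lt_or_gt_of_ne huw with h | h
    · exact Or.inr (scale A' hA' w hw _ (hg u hu w hw h))
    · exact Or.inl (scale A' hA' u hu _ (hg w hw u hu h))
    · exact Or.inl (scale A' hA' u hu _ (hg u hu w hw h))
    · exact Or.inr (scale A' hA' w hw _ (hg w hw u hu h))
  rcases hgeo with hg | hg
  · obtain ⟨s, hs⟩ := hχ₂ i T hτ hT
      (fun u hu => ((hB₂ i).trans (le_max_right _ _)).trans (hB'.trans (hB u hu)))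
      (either _ hle₂)
      (fun u hu w hw => congrFun (Prod.ext_iff.1 (hχ u hu w hw)).2 i)
    refine ⟨s, fun x hx hxT => ?_⟩
    rw [← hs (x ∘ Fin.rev) (fun l => hxT _) (fun l l' hll => scale _ hle₂ _ (hxT _) _
      (hg _ (hxT _) _ (hxT _) (hx (Fin.rev_lt_rev.2 hll)))), MvPolynomial.eval_rename]
    congr 3
    funext l
    simp
  · obtain ⟨s, hs⟩ := hχ₁ i T hτ hT
      (fun u hu => ((hB₁ i).trans (le_max_left _ _)).trans (hB'.trans (hB u hu)))
      (either _ hle₁)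
      (fun u hu w hw => congrFun (Prod.ext_iff.1 (hχ u hu w hw)).1 i)
    exact ⟨s, fun x hx hxT => hs x hxT fun l l' hll => scale _ hle₁ _ (hxT _) _
      (hg _ (hxT _) _ (hxT _) (hx hll))⟩

/-- Among exponentially many distinct reals there is a center and a subsequence along which the
distances to the center decrease, or increase, geometrically. -/
lemma exists_geometric_chain (A : ℝ) :
    ∃ K : ℕ, 1 ≤ K ∧ ∀ {ι : Type} [LinearOrder ι] (a : ι → ℝ) (m₁ m₂ : ℕ) (S : Finset ι),
      Set.InjOn a S → K ^ (m₁ + m₂) ≤ S.card →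
      ∃ c ∈ S, ∃ T ⊆ S, c ∉ T ∧
        ((T.card = m₁ ∧ ∀ i ∈ T, ∀ j ∈ T, i < j → A * |a j - a c| ≤ |a i - a c|) ∨
         (T.card = m₂ ∧ ∀ i ∈ T, ∀ j ∈ T, i < j → A * |a i - a c| ≤ |a j - a c|)) := by
  obtain ⟨W, hW⟩ := exists_nat_ge (4 * |A| + 4)
  have hWpos : (0 : ℝ) < W := by linarith [abs_nonneg A]
  refine ⟨2 * (W + 1), by omega, ?_⟩
  intro ι _ a m₁ m₂
  induction hM : m₁ + m₂ generalizing m₁ m₂ with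
  | zero =>
    intro S _ hcard
    obtain ⟨c, hc⟩ : S.Nonempty := Finset.card_pos.1 (by simpa using hcard)
    exact ⟨c, hc, ∅, by simp, by simp, Or.inl ⟨by simp; omega, by simp⟩⟩
  | succ M ih =>
    intro S hinj hcard
    have hKM : 1 ≤ (2 * (W + 1)) ^ M := Nat.one_le_pow _ _ (by omega)
    have hS2 : 1 < S.card := by
      rw [pow_succ] at hcard
      nlinarith
    have hSne : S.Nonempty := Finset.card_pos.1 (by omega)
    rcases Nat.eq_zero_or_pos m₁ with h₁ | h₁
    · obtain ⟨c, hc⟩ := hSne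
      exact ⟨c, hc, ∅, by simp, by simp, Or.inl ⟨by simp [h₁], by simp⟩⟩
    rcases Nat.eq_zero_or_pos m₂ with h₂ | h₂
    · obtain ⟨c, hc⟩ := hSne
      exact ⟨c, hc, ∅, by simp, by simp, Or.inr ⟨by simp [h₂], by simp⟩⟩
    obtain ⟨lo, hlo, hlo'⟩ := S.exists_min_image a hSne
    obtain ⟨hi, hhi, hhi'⟩ := S.exists_max_image a hSne
    have hD : 0 < a hi - a lo := by
      obtain ⟨u, hu, v, hv, huv⟩ := Finset.one_lt_card.1 hS2
      have hne : a u ≠ a v := fun h => huv (hinj hu hv h)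
      rcases lt_or_gt_of_ne hne with h | h
      · linarith [hlo' u hu, hhi' v hv]
      · linarith [hlo' v hv, hhi' u hu]
    set D := a hi - a lo with hDdef
    let bin : ι → ℕ := fun i => ⌊(a i - a lo) * (W / D)⌋₊
    have hbin : ∀ i ∈ S, bin i ∈ Finset.range (W + 1) := by
      intro i hi
      rw [Finset.mem_range]
      have h0 : (a i - a lo) * (W / D) ≤ W := by
        rw [← mul_div_assoc, div_le_iff₀ hD]
        have := hhi' i hi
        nlinarith
      have := Nat.floor_le_floor h0
      rw [Nat.floor_natCast] at this
      exact Nat.lt_succ_of_le this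
    obtain ⟨b, -, hb⟩ := Finset.exists_le_card_fiber_of_mul_le_card_of_maps_to
      (n := 2 * (2 * (W + 1)) ^ M) hbin ⟨0, by simp⟩ (by
        rw [Finset.card_range]
        refine le_trans (le_of_eq ?_) hcard
        ring)
    set Q := S.filter fun i => bin i = b with hQdef
    have hQS : Q ⊆ S := Finset.filter_subset _ _
    have hQdiam : ∀ i ∈ Q, ∀ j ∈ Q, |a i - a j| ≤ D / W := by
      intro i hi j hj
      have hi' := Finset.mem_filter.1 hi
      have hj' := Finset.mem_filter.1 hj
      have e : bin i = bin j := hi'.2.trans hj'.2.symm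
      have hi0 : 0 ≤ (a i - a lo) * (W / D) :=
        mul_nonneg (sub_nonneg.2 (hlo' i hi'.1)) (by positivity)
      have hj0 : 0 ≤ (a j - a lo) * (W / D) :=
        mul_nonneg (sub_nonneg.2 (hlo' j hj'.1)) (by positivity)
      have i1 := Nat.floor_le hi0
      have i2 := Nat.lt_floor_add_one ((a i - a lo) * (W / D))
      have j1 := Nat.floor_le hj0
      have j2 := Nat.lt_floor_add_one ((a j - a lo) * (W / D))
      have e' : (⌊(a i - a lo) * (W / D)⌋₊ : ℝ) = ⌊(a j - a lo) * (W / D)⌋₊ := by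
        exact_mod_cast e
      have hWD : D / W * (W / D) = 1 := by field_simp
      have hWD0 : 0 < (W : ℝ) / D := by positivity
      rw [abs_le]
      constructor
      · by_contra hcon
        push Not at hcon
        nlinarith
      · by_contra hcon
        push Not at hcon
        nlinarith
    have hQne : Q.Nonempty := Finset.card_pos.1 (by omega)
    have hDW : D / W ≤ D / 4 := by
      apply div_le_div_of_nonneg_left hD.le (by norm_num)
      linarith [abs_nonneg A]
    have hADW : |A| * (D / W) ≤ D / 4 := by
      rw [← mul_div_assoc, div_le_iff₀ hWpos]
      nlinarith [abs_nonneg A]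
    obtain ⟨x, hxS, hxfar⟩ : ∃ x ∈ S, ∀ q ∈ Q, D / 4 ≤ |a x - a q| := by
      obtain ⟨q, hq⟩ := hQne
      rcases le_total (a q - a lo) (D / 2) with h | h
      · refine ⟨hi, hhi, fun q' hq' => ?_⟩
        have := abs_le.1 (hQdiam q hq q' hq')
        exact le_trans (by linarith) (le_abs_self _)
      · refine ⟨lo, hlo, fun q' hq' => ?_⟩
        have := abs_le.1 (hQdiam q hq q' hq')
        exact le_trans (by linarith) (neg_le_abs _)
    have hxQ : x ∉ Q := by
      intro h
      have := hxfar x h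
      rw [sub_self, abs_zero] at this
      linarith
    have hdom : ∀ q ∈ Q, ∀ c ∈ Q, A * |a q - a c| ≤ |a x - a c| := by
      intro q hq c hc
      calc A * |a q - a c| ≤ |A| * |a q - a c| :=
            mul_le_mul_of_nonneg_right (le_abs_self A) (abs_nonneg _)
        _ ≤ |A| * (D / W) := mul_le_mul_of_nonneg_left (hQdiam q hq c hc) (abs_nonneg _)
        _ ≤ D / 4 := hADW
        _ ≤ |a x - a c| := hxfar c hc
    have hsplit : (Q.filter (x < ·)).card + (Q.filter (· < x)).card = Q.card := by
      rw [← Finset.card_filter_add_card_filter_not (s := Q) (x < ·)]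
      congr 2
      refine Finset.filter_congr fun i hi => ?_
      have : i ≠ x := fun h => hxQ (h ▸ hi)
      rw [not_lt]
      exact ⟨le_of_lt, fun h => lt_of_le_of_ne h this⟩
    rcases le_total (Q.filter (· < x)).card (Q.filter (x < ·)).card with hle | hle
    · have hsub : Q.filter (x < ·) ⊆ Q := Finset.filter_subset _ _
      obtain ⟨c, hc, T, hT, hcT, h⟩ := ih (m₁ - 1) m₂ (by omega) (Q.filter (x < ·))
        (hinj.mono (by exact_mod_cast hsub.trans hQS)) (by omega)
      have hTQ := hT.trans hsub
      have hcx : c ≠ x := fun h => hxQ (h ▸ hsub hc)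
      rcases h with ⟨hcard', hch⟩ | h
      · refine ⟨c, hQS (hsub hc), insert x T, ?_, ?_, Or.inl ⟨?_, ?_⟩⟩
        · exact Finset.insert_subset hxS (hTQ.trans hQS)
        · simp [hcx, hcT]
        · rw [Finset.card_insert_of_notMem fun h => hxQ (hTQ h)]
          omega
        · intro i hi j hj hij
          rcases Finset.mem_insert.1 hi with rfl | hi'
          · rcases Finset.mem_insert.1 hj with rfl | hj'
            · exact absurd hij (lt_irrefl _)
            · exact hdom j (hTQ hj') c (hsub hc)
          · rcases Finset.mem_insert.1 hj with rfl | hj'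
            · exact absurd hij (not_lt.2 (Finset.mem_filter.1 (hT hi')).2.le)
            · exact hch i hi' j hj' hij
      · exact ⟨c, hQS (hsub hc), T, hTQ.trans hQS, hcT, Or.inr h⟩
    · have hsub : Q.filter (· < x) ⊆ Q := Finset.filter_subset _ _
      obtain ⟨c, hc, T, hT, hcT, h⟩ := ih m₁ (m₂ - 1) (by omega) (Q.filter (· < x))
        (hinj.mono (by exact_mod_cast hsub.trans hQS)) (by omega)
      have hTQ := hT.trans hsub
      have hcx : c ≠ x := fun h => hxQ (h ▸ hsub hc)
      rcases h with h | ⟨hcard', hch⟩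
      · exact ⟨c, hQS (hsub hc), T, hTQ.trans hQS, hcT, Or.inl h⟩
      · refine ⟨c, hQS (hsub hc), insert x T, ?_, ?_, Or.inr ⟨?_, ?_⟩⟩
        · exact Finset.insert_subset hxS (hTQ.trans hQS)
        · simp [hcx, hcT]
        · rw [Finset.card_insert_of_notMem fun h => hxQ (hTQ h)]
          omega
        · intro i hi j hj hij
          rcases Finset.mem_insert.1 hj with rfl | hj'
          · rcases Finset.mem_insert.1 hi with rfl | hi'
            · exact absurd hij (lt_irrefl _)
            · exact hdom i (hTQ hi') c (hsub hc)
          · rcases Finset.mem_insert.1 hi with rfl | hi'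
            · exact absurd hij (not_lt.2 (Finset.mem_filter.1 (hT hj')).2.le)
            · exact hch i hi' j hj' hij

lemma exists_homogeneous_finset {I : Type} [Finite I] (k : I → ℕ)
    (p : ∀ i, MvPolynomial (Fin (k i)) ℝ) :
    ∃ K₁ K₂ G : ℕ, ∀ n, 2 ≤ n → ∀ N, n * K₁ ^ (2 * K₂ ^ (2 * (G * n))) ≤ N →
      ∀ a : Fin N → ℝ, ∃ T : Finset (Fin N), n ≤ T.card ∧
        ∀ i, ∃ s : SignType, ∀ x : Fin (k i) → Fin N, StrictMono x → (∀ l, x l ∈ T) →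
          SignType.sign (MvPolynomial.eval (fun l => a (x l)) (p i)) = s := by
  classical
  obtain ⟨A, B, Γ, hΓ, hB, hχ⟩ := exists_coloring_sign_uniform_family k p
  obtain ⟨K₁, hK₁, h₁⟩ := exists_geometric_chain (Real.exp B)
  obtain ⟨K₂, hK₂, h₂⟩ := exists_geometric_chain A
  have : Fintype Γ := Fintype.ofFinite Γ
  refine ⟨K₁, K₂, Fintype.card (SignType × SignType × Γ), ?_⟩
  intro n hn N hN a
  by_cases hfib : ∃ v, n ≤ (Finset.univ.filter fun i => a i = v).card
  · obtain ⟨v, hv⟩ := hfib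
    refine ⟨_, hv, fun i => ⟨SignType.sign (MvPolynomial.eval (fun _ => v) (p i)),
      fun x _ hxT => ?_⟩⟩
    congr 3
    funext l
    exact (Finset.mem_filter.1 (hxT l)).2
  push Not at hfib
  set m := K₂ ^ (2 * (Fintype.card (SignType × SignType × Γ) * n)) with hm
  have himg : K₁ ^ (2 * m) ≤ (Finset.univ.image a).card := by
    have hle := Finset.card_le_mul_card_image (f := a) Finset.univ n
      (fun v _ => (hfib v).le)
    rw [Finset.card_univ, Fintype.card_fin] at hle
    exact Nat.le_of_mul_le_mul_left (hN.trans hle) (by omega)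
  obtain ⟨S, -, hSinj, hSimg⟩ := Finset.exists_subset_injOn_image_eq_of_surjOn
    (f := a) (s := Set.univ) (t := Finset.univ.image a) (by
      intro v hv
      simpa using hv)
  have hScard : K₁ ^ (m + m) ≤ S.card := by
    rw [← Finset.card_image_of_injOn hSinj, hSimg, ← two_mul]
    exact himg
  obtain ⟨c, hcS, T₁, hT₁S, hcT₁, hT₁⟩ := h₁ a m m S hSinj hScard
  have hT₁card : T₁.card = m := by
    rcases hT₁ with h | h <;> exact h.1
  have hu : ∀ i ∈ T₁, 0 < |a i - a c| := fun i hi => abs_pos.2 (sub_ne_zero.2 fun h =>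
    hcT₁ ((hSinj (hT₁S hi) hcS h) ▸ hi))
  let s : Fin N → ℝ := fun i => Real.log |a i - a c|
  have hlog : ∀ i ∈ T₁, ∀ j ∈ T₁, Real.exp B * |a i - a c| ≤ |a j - a c| → B ≤ |s i - s j| := by
    intro i hi j hj h
    have := Real.log_le_log (mul_pos (Real.exp_pos B) (hu i hi)) h
    rw [Real.log_mul (Real.exp_pos B).ne' (hu i hi).ne', Real.log_exp] at this
    rw [abs_sub_comm]
    exact le_trans (by simp only [s]; linarith) (le_abs_self _)
  have hsep : ∀ i ∈ T₁, ∀ j ∈ T₁, i ≠ j → B ≤ |s i - s j| := by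
    intro i hi j hj hij
    rcases hT₁ with ⟨-, h⟩ | ⟨-, h⟩ <;> rcases lt_or_gt_of_ne hij with hlt | hlt
    · rw [abs_sub_comm]
      exact hlog j hj i hi (h i hi j hj hlt)
    · exact hlog i hi j hj (h j hj i hi hlt)
    · exact hlog i hi j hj (h i hi j hj hlt)
    · rw [abs_sub_comm]
      exact hlog j hj i hi (h j hj i hi hlt)
  have hsinj : Set.InjOn s T₁ := by
    intro i hi j hj hs
    by_contra hij
    have := hsep i hi j hj hij
    rw [hs, sub_self, abs_zero] at this
    linarith
  obtain ⟨L, hL, T₂, hT₂, hLT₂, hT₂geo⟩ := h₂ s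
    (Fintype.card (SignType × SignType × Γ) * n) (Fintype.card (SignType × SignType × Γ) * n)
    T₁ hsinj (by rw [hT₁card, ← two_mul])
  have hT₂card : Fintype.card (SignType × SignType × Γ) * n ≤ T₂.card := by
    rcases hT₂geo with h | h <;> exact h.1.ge
  let t : Fin N → ℝ := fun i => |s i - s L|
  choose χ hχ using fun σ τ : SignType =>
    hχ (a c) ((σ : ℝ) * Real.exp (s L)) (τ : ℝ) t
  let color : Fin N → SignType × SignType × Γ := fun i =>
    (SignType.sign (a i - a c), SignType.sign (s i - s L),
      χ (SignType.sign (a i - a c)) (SignType.sign (s i - s L)) i)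
  obtain ⟨⟨σ, τ, γ⟩, -, hcol⟩ := Finset.exists_le_card_fiber_of_mul_le_card_of_maps_to
    (s := T₂) (t := Finset.univ) (f := color) (n := n) (fun _ _ => Finset.mem_univ _)
    ⟨color c, Finset.mem_univ _⟩ hT₂card
  set T := T₂.filter fun i => color i = (σ, τ, γ) with hTdef
  have hTT₂ : T ⊆ T₂ := Finset.filter_subset _ _
  have hTcol : ∀ i ∈ T, SignType.sign (a i - a c) = σ ∧ SignType.sign (s i - s L) = τ ∧
      χ σ τ i = γ := by
    intro i hi
    have h := (Finset.mem_filter.1 hi).2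
    simp only [color, Prod.mk.injEq] at h
    obtain ⟨h1, h2, h3⟩ := h
    rw [h1, h2] at h3
    exact ⟨h1, h2, h3⟩
  have ht : ∀ i ∈ T, B ≤ t i := fun i hi =>
    hsep i (hT₂ (hTT₂ hi)) L hL fun h => hLT₂ (h ▸ hTT₂ hi)
  have hTnt : (T : Set (Fin N)).Nontrivial := by
    refine Finset.one_lt_card_iff_nontrivial.1 ?_
    omega
  have hτ : |(τ : ℝ)| = 1 := by
    obtain ⟨i, hi⟩ := hTnt.nonempty
    have h := (hTcol i hi).2.1
    have hne : s i - s L ≠ 0 := abs_pos.1 (lt_of_lt_of_le hB (ht i hi))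
    rcases lt_or_gt_of_ne hne with h' | h'
    · rw [sign_neg h'] at h
      simp [← h]
    · rw [sign_pos h'] at h
      simp [← h]
  have hval : ∀ i ∈ T, a c + (σ : ℝ) * Real.exp (s L) * Real.exp ((τ : ℝ) * t i) = a i := by
    intro i hi
    obtain ⟨h1, h2, -⟩ := hTcol i hi
    rw [← h1, ← h2, sign_mul_abs, mul_assoc, ← Real.exp_add, add_sub_cancel,
      Real.exp_log (hu i (hT₂ (hTT₂ hi))), sign_mul_abs, add_sub_cancel]
  refine ⟨T, hcol, fun i => ?_⟩
  obtain ⟨r, hr⟩ := hχ σ τ (T : Set (Fin N)) hτ hTnt ht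
    (hT₂geo.imp (fun h i hi j hj => h.2 i (hTT₂ hi) j (hTT₂ hj))
      (fun h i hi j hj => h.2 i (hTT₂ hi) j (hTT₂ hj)))
    (fun i hi j hj => (hTcol i hi).2.2.trans (hTcol j hj).2.2.symm) i
  refine ⟨r, fun x hx hxT => ?_⟩
  rw [← hr x hx hxT]
  congr 3
  funext l
  exact (hval _ (hxT l)).symm

lemma exists_double_exponential_bound (K₁ K₂ G : ℕ) :
    ∃ C : ℕ, 1 ≤ C ∧ ∀ n, 1 ≤ n →
      n * K₁ ^ (2 * K₂ ^ (2 * (G * n))) ≤ 2 ^ 2 ^ (C * n) := by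
  refine ⟨K₂ * (2 * G) + 1 + 2 * K₁, by omega, fun n hn => ?_⟩
  have hK₁ : K₁ ≤ 2 ^ K₁ := Nat.lt_two_pow_self.le
  have hn' : n < 2 ^ n := Nat.lt_two_pow_self
  set b := 2 ^ (K₂ * (2 * G) * n) with hb
  have hb1 : 1 ≤ b := Nat.one_le_two_pow
  have hK₂ : K₂ ^ (2 * (G * n)) ≤ b := by
    calc K₂ ^ (2 * (G * n)) ≤ (2 ^ K₂) ^ (2 * (G * n)) :=
          Nat.pow_le_pow_left Nat.lt_two_pow_self.le _
      _ = b := by rw [hb, ← pow_mul]; congr 1; ring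
  have hd : 2 * K₁ + 1 ≤ 2 ^ (2 * K₁ * n) :=
    (Nat.lt_two_pow_self (n := 2 * K₁)).trans_le
      (Nat.pow_le_pow_right (by norm_num) (Nat.le_mul_of_pos_right _ hn))
  have hexp : n + K₁ * (2 * b) ≤ 2 ^ ((K₂ * (2 * G) + 1 + 2 * K₁) * n) := by
    have : 2 ^ ((K₂ * (2 * G) + 1 + 2 * K₁) * n) = 2 ^ n * b * 2 ^ (2 * K₁ * n) := by
      rw [hb, ← pow_add, ← pow_add]; congr 1; ring
    rw [this]
    have h1 : b ≤ 2 ^ n * b := Nat.le_mul_of_pos_left _ (by positivity)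
    have h2 : 2 ^ n ≤ 2 ^ n * b := Nat.le_mul_of_pos_right _ hb1
    calc n + K₁ * (2 * b) ≤ 2 ^ n * b + 2 * K₁ * (2 ^ n * b) := by nlinarith
      _ = 2 ^ n * b * (2 * K₁ + 1) := by ring
      _ ≤ _ := Nat.mul_le_mul_left _ hd
  calc n * K₁ ^ (2 * K₂ ^ (2 * (G * n)))
      ≤ 2 ^ n * (2 ^ K₁) ^ (2 * K₂ ^ (2 * (G * n))) :=
        Nat.mul_le_mul hn'.le (Nat.pow_le_pow_left hK₁ _)
    _ ≤ 2 ^ n * (2 ^ K₁) ^ (2 * b) :=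
        Nat.mul_le_mul_left _ (Nat.pow_le_pow_right (by positivity) (Nat.mul_le_mul_left _ hK₂))
    _ = 2 ^ (n + K₁ * (2 * b)) := by rw [← pow_mul, ← pow_add]
    _ ≤ _ := Nat.pow_le_pow_right (by norm_num) hexp

/-- In an Erdős–Szekeres family, some predicate holds everywhere on every sufficiently long sequence
on which all the defining polynomials have uniform signs. -/
lemma exists_holdsEverywhere_of_homogeneous {r : ℕ} (k : Fin r → ℕ)
    (Φ : ∀ i, (Fin (k i) → ℝ) → Prop) (hES : IsErdosSzekeres k Φ) (m : Fin r → ℕ)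
    (p : ∀ i, Fin (m i) → MvPolynomial (Fin (k i)) ℝ) (S : ∀ i, Set (Fin (m i) → SignType))
    (hS : ∀ i x, Φ i x ↔ (fun j => SignType.sign (MvPolynomial.eval x (p i j))) ∈ S i) :
    ∃ n₀ : ℕ, ∀ n, n₀ ≤ n → ∀ b : Fin n → ℝ,
      (∀ i j, ∃ s : SignType, ∀ x : Fin (k i) → Fin n, StrictMono x →
        SignType.sign (MvPolynomial.eval (fun l => b (x l)) (p i j)) = s) →
      ∃ i, HoldsEverywhere (Φ i) b := by
  classical
  let IsOfType : (∀ i, Fin (m i) → SignType) → ∀ n : ℕ, (Fin n → ℝ) → Prop := fun τ n b =>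
    ∀ i j, ∀ x : Fin (k i) → Fin n, StrictMono x →
      SignType.sign (MvPolynomial.eval (fun l => b (x l)) (p i j)) = τ i j
  have hbdd : ∀ τ, ∃ nτ : ℕ, (∃ b, IsOfType τ nτ b) → ∀ n, ∃ b, IsOfType τ n b := by
    intro τ
    by_cases h : ∀ n, ∃ b, IsOfType τ n b
    · exact ⟨0, fun _ => h⟩
    · push Not at h
      obtain ⟨n, hn⟩ := h
      exact ⟨n, fun ⟨b, hb⟩ => absurd hb (hn b)⟩
  choose nτ hnτ using hbdd
  obtain ⟨n₀, hn₀⟩ := Finite.exists_le nτ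
  refine ⟨n₀, fun n hn b hb => ?_⟩
  choose τ hτ using hb
  have hlong := hnτ τ ⟨fun u => b (Fin.castLE ((hn₀ τ).trans hn) u), fun i j x hx =>
    hτ i j (fun l => Fin.castLE ((hn₀ τ).trans hn) (x l))
      ((Fin.strictMono_castLE _).comp hx)⟩
  obtain ⟨K, hK⟩ := Finite.exists_le k
  obtain ⟨N, hN⟩ := hES K
  obtain ⟨b', hb'⟩ := hlong N
  obtain ⟨φ, hφ, i, hi⟩ := hN b'
  have hmem := (hS i _).1 (hi (Fin.castLE (hK i)) (Fin.strictMono_castLE _))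
  have hτi : τ i ∈ S i := by
    convert hmem using 1
    funext j
    exact (hb' i j (fun l => φ (Fin.castLE (hK i) l))
      (hφ.comp (Fin.strictMono_castLE _))).symm
  refine ⟨i, fun x hx => (hS i _).2 ?_⟩
  convert hτi using 1
  funext j
  exact hτ i j x hx

/-- for every finite Erdős–Szekeres set of one-dimensional semialgebraic
predicates there is `C > 0` such that every sequence of length at least `2^(2^(C·n))`
has an `n`-term subsequence on which some member of the family holds everywhere. -/
theorem stmt0 {r : ℕ} (k : Fin r → ℕ) (Φ : ∀ i, (Fin (k i) → ℝ) → Prop)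
    (hsa : ∀ i, IsSemialgebraic (Φ i)) (hES : IsErdosSzekeres k Φ) :
    ∃ C : ℝ, 0 < C ∧ ∀ n : ℕ, 1 ≤ n → ∀ N : ℕ,
      (2 : ℝ) ^ ((2 : ℝ) ^ (C * (n : ℝ))) ≤ (N : ℝ) →
      ∀ a : Fin N → ℝ, ∃ φ : Fin n → Fin N, StrictMono φ ∧
        ∃ i, HoldsEverywhere (Φ i) (fun j => a (φ j)) := by
  classical
  choose m p S hS using hsa
  obtain ⟨n₀, hn₀⟩ := exists_holdsEverywhere_of_homogeneous k Φ hES m p S hS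
  obtain ⟨K₁, K₂, G, hG⟩ := exists_homogeneous_finset (I := Σ i, Fin (m i))
    (fun e => k e.1) (fun e => p e.1 e.2)
  obtain ⟨C, hC, hbound⟩ := exists_double_exponential_bound K₁ K₂ G
  refine ⟨((C * (n₀ + 2) : ℕ) : ℝ), by positivity, fun n hn N hN a => ?_⟩
  have hN' : 2 ^ 2 ^ (C * ((n₀ + 2) * n)) ≤ N := by
    rw [← Nat.cast_mul, Real.rpow_natCast, mul_assoc] at hN
    have h2 : ((2 : ℝ) ^ (C * ((n₀ + 2) * n))) = ((2 ^ (C * ((n₀ + 2) * n)) : ℕ) : ℝ) := by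
      push_cast
      rfl
    rw [h2, Real.rpow_natCast] at hN
    exact_mod_cast hN
  have hle : n₀ + 2 ≤ (n₀ + 2) * n := Nat.le_mul_of_pos_right _ hn
  obtain ⟨T, hT, hsign⟩ := hG ((n₀ + 2) * n) (by omega) N
    ((hbound _ (by omega)).trans hN') a
  obtain ⟨T', hT'T, hT'⟩ := Finset.exists_subset_card_eq hT
  let ψ := T'.orderEmbOfFin hT'
  obtain ⟨i, hi⟩ := hn₀ ((n₀ + 2) * n) (by omega) (fun u => a (ψ u)) fun i j => by
    obtain ⟨s, hs⟩ := hsign ⟨i, j⟩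
    exact ⟨s, fun x hx => hs (fun l => ψ (x l)) (ψ.strictMono.comp hx)
      fun l => hT'T (Finset.orderEmbOfFin_mem _ _ _)⟩
  have hnle : n ≤ (n₀ + 2) * n := Nat.le_mul_of_pos_left _ (by omega)
  exact ⟨fun u => ψ (Fin.castLE hnle u), ψ.strictMono.comp (Fin.strictMono_castLE _), i,
    fun x hx => hi (fun l => Fin.castLE hnle (x l)) ((Fin.strictMono_castLE _).comp hx)⟩
end

section
/- For every finite set 𝚽 of one-dimensional semialgebraic predicates there exists a constant C > 0 such that for every n ≥ 1, every sequence of real numbers of length at least 2^(2^(C·n)) contains an n-term subsequence b such that each predicate Φ ∈ 𝚽 holds either everywhere on b or nowhere on b (i.e., for each Φ ∈ 𝚽, either Φ holds on every increasing k_Φ-tuple of terms of b, or Φ fails on every increasing k_Φ-tuple of terms of b). -/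
theorem exists_chain_of_step {α T : Type*} (Q : T → α → α → α → Prop)
    (step : ∀ S : Finset α, S.Nonempty → ∃ x ∈ S, ∃ t, ∃ S' ⊆ S, S.card ≤ 4 * S'.card + 2 ∧
      ∀ y ∈ S', ∀ z ∈ S', Q t x y z) (m : ℕ) :
    ∀ S : Finset α, 8 ^ m ≤ S.card → ∃ (x : Fin m → α) (t : Fin m → T), (∀ i, x i ∈ S) ∧
      ∀ i j l, i < j → i < l → Q (t i) (x i) (x j) (x l) := by
  induction m with
  | zero => exact fun S _ => ⟨Fin.elim0, Fin.elim0, fun i => i.elim0, fun i => i.elim0⟩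
  | succ m ih =>
    intro S hS
    have hpos : 0 < 8 ^ m := by positivity
    obtain ⟨x₀, hx₀, t₀, S', hS', hcard, hQ⟩ :=
      step S (Finset.card_pos.1 (by rw [pow_succ] at hS; omega))
    obtain ⟨x, t, hx, h⟩ := ih S' (by rw [pow_succ] at hS; omega)
    refine ⟨Fin.cons x₀ x, Fin.cons t₀ t, ?_, ?_⟩
    · intro i
      refine Fin.cases ?_ (fun i => ?_) i
      · simpa using hx₀
      · simpa using hS' (hx i)
    · intro i j l hij hil
      obtain ⟨j, rfl⟩ := Fin.exists_succ_eq.2 (Fin.ne_zero_of_lt hij)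
      obtain ⟨l, rfl⟩ := Fin.exists_succ_eq.2 (Fin.ne_zero_of_lt hil)
      induction i using Fin.cases with
      | zero => simpa using hQ _ (hx j) _ (hx l)
      | succ i => simpa using h i j l (by simpa using hij) (by simpa using hil)

theorem exists_halving_step {N : ℕ} (a : Fin N → ℝ) (S : Finset (Fin N)) (hS : S.Nonempty) :
    ∃ x ∈ S, ∃ t : Bool × Bool, ∃ S' ⊆ S, S.card ≤ 4 * S'.card + 2 ∧
      ∀ y ∈ S', ∀ z ∈ S', (if t.2 then x < y else y < x) ∧
        (if t.1 then a y - a z ≤ a x - a y else a z - a y ≤ a y - a x) := by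
  have split : ∀ (U : Finset (Fin N)) (x : Fin N), ∃ (o : Bool), ∃ U' ⊆ U,
      U.card ≤ 2 * U'.card + 1 ∧ ∀ y ∈ U', if o then x < y else y < x := by
    intro U x
    have h1 : U ⊆ insert x (U.filter (x < ·) ∪ U.filter (· < x)) := by
      intro y hy
      rcases lt_trichotomy x y with h | h | h <;> simp [hy, h]
    have h2 := (Finset.card_le_card h1).trans ((Finset.card_insert_le _ _).trans
      (Nat.add_le_add_right (Finset.card_union_le _ _) 1))
    rcases le_total (U.filter (x < ·)).card (U.filter (· < x)).card with h | h
    · exact ⟨false, U.filter (· < x), Finset.filter_subset _ _, by omega, by simp⟩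
    · exact ⟨true, U.filter (x < ·), Finset.filter_subset _ _, by omega, by simp⟩
  obtain ⟨r, hr, hmax⟩ := S.exists_max_image a hS
  obtain ⟨l, hl, hmin⟩ := S.exists_min_image a hS
  have h1 : S ⊆ S.filter (fun y => a y - a l ≤ a r - a y) ∪
      S.filter (fun y => a r - a y ≤ a y - a l) := by
    intro y hy
    rw [Finset.mem_union, Finset.mem_filter, Finset.mem_filter]
    exact (le_total (a y - a l) (a r - a y)).imp (⟨hy, ·⟩) (⟨hy, ·⟩)
  have h2 := (Finset.card_le_card h1).trans (Finset.card_union_le _ _)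
  rcases le_total (S.filter (fun y => a y - a l ≤ a r - a y)).card
    (S.filter (fun y => a r - a y ≤ a y - a l)).card with h | h
  · obtain ⟨o, U, hU, hc, ho⟩ := split (S.filter (fun y => a r - a y ≤ a y - a l)) l
    refine ⟨l, hl, (false, o), U, hU.trans (Finset.filter_subset _ _), by omega, ?_⟩
    intro y hy z hz
    have hy' := (Finset.mem_filter.1 (hU hy)).2
    have hz' := hmax z (Finset.mem_filter.1 (hU hz)).1
    refine ⟨ho y hy, ?_⟩
    simp only [Bool.false_eq_true, if_false]
    linarith
  · obtain ⟨o, U, hU, hc, ho⟩ := split (S.filter (fun y => a y - a l ≤ a r - a y)) r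
    refine ⟨r, hr, (true, o), U, hU.trans (Finset.filter_subset _ _), by omega, ?_⟩
    intro y hy z hz
    have hy' := (Finset.mem_filter.1 (hU hy)).2
    have hz' := hmin z (Finset.mem_filter.1 (hU hz)).1
    refine ⟨ho y hy, ?_⟩
    simp only [if_true]
    linarith

theorem exists_geometric_subsequence {N : ℕ} (a : Fin N → ℝ) (S : Finset (Fin N))
    (hinj : Set.InjOn a S) (n : ℕ) (hS : 8 ^ (4 * n + 1) ≤ S.card) :
    ∃ (φ : Fin n → Fin N) (p : Fin N) (σ : ℝ) (t : Fin n → ℝ),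
      (StrictMono φ ∨ StrictAnti φ) ∧ (σ = 1 ∨ σ = -1) ∧ (∀ i, 0 < t i) ∧
      (∀ i j, i < j → 2 * t i ≤ t j) ∧ ∀ i, a (φ i) = a p + σ * t i := by
  obtain ⟨x, t, hx, h⟩ := exists_chain_of_step _ (fun S hS => exists_halving_step a S hS) _ S hS
  obtain ⟨τ, hτ⟩ := Fintype.exists_lt_card_fiber_of_mul_lt_card t (n := n) (by simp)
  set ψ : Fin (n + 1) ↪o Fin (4 * n + 1) :=
    (Fin.castLEOrderEmb hτ).trans (Finset.orderEmbOfFin _ rfl)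
  have htψ : ∀ i, t (ψ i) = τ := by
    intro i
    have := Finset.orderEmbOfFin_mem (Finset.univ.filter (fun x => t x = τ)) rfl
      (Fin.castLE hτ i)
    exact (Finset.mem_filter.1 this).2
  have hlast : ∀ i : Fin n, i.castSucc < Fin.last n := Fin.castSucc_lt_last
  have hQ : ∀ i j l, i < j → i < l → _ := fun i j l (hij : i < j) (hil : i < l) =>
    h (ψ i) (ψ j) (ψ l) (ψ.strictMono hij) (ψ.strictMono hil)
  simp only [htψ] at hQ
  obtain ⟨s, o⟩ := τ
  have hne : ∀ i : Fin n, a (x (ψ i.castSucc)) ≠ a (x (ψ (Fin.last n))) := by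
    intro i hi
    have h1 := hinj (hx _) (hx _) hi
    have h2 := (hQ _ _ _ (hlast i) (hlast i)).1
    cases o <;> simp [h1] at h2
  refine ⟨fun i => x (ψ i.rev.castSucc), x (ψ (Fin.last n)), if s then 1 else -1,
    fun i => (if s then 1 else -1) * (a (x (ψ i.rev.castSucc)) - a (x (ψ (Fin.last n)))),
    ?_, ?_, ?_, ?_, ?_⟩
  · cases o
    · left
      intro i j hij
      have := (hQ j.rev.castSucc i.rev.castSucc i.rev.castSucc
        (by simpa using hij) (by simpa using hij)).1
      simpa using this
    · right
      intro i j hij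
      have := (hQ j.rev.castSucc i.rev.castSucc i.rev.castSucc
        (by simpa using hij) (by simpa using hij)).1
      simpa using this
  · cases s <;> simp
  · intro i
    have h1 := (hQ _ _ _ (hlast i.rev) (hlast i.rev)).2
    have h2 := hne i.rev
    cases s
    · simp only [Bool.false_eq_true, if_false] at h1 ⊢
      have := lt_of_le_of_ne (by linarith) h2
      linarith
    · simp only [if_true] at h1 ⊢
      have := lt_of_le_of_ne (by linarith) h2.symm
      linarith
  · intro i j hij
    have h1 := (hQ j.rev.castSucc i.rev.castSucc (Fin.last n)
        (by simpa using hij) (hlast _)).2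
    cases s
    · simp only [Bool.false_eq_true, if_false] at h1 ⊢
      linarith
    · simp only [if_true] at h1 ⊢
      linarith
  · intro i
    cases s <;> simp

theorem exists_expansion {k : ℕ} (f : MvPolynomial (Fin k) ℝ) :
    ∃ A : Finset (Fin k →₀ ℕ), ∀ p c : ℝ, ∃ C : (Fin k →₀ ℕ) → ℝ, ∀ y : Fin k → ℝ,
      MvPolynomial.eval (fun j => p + c * y j) f = ∑ α ∈ A, C α * ∏ j, y j ^ α j := by
  let F : MvPolynomial (Fin k) (MvPolynomial (Fin 2) ℝ) :=
    MvPolynomial.aeval (fun j => MvPolynomial.C (MvPolynomial.X 0) +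
      MvPolynomial.C (MvPolynomial.X 1) * MvPolynomial.X j) f
  refine ⟨F.support, fun p c =>
    ⟨fun α => MvPolynomial.eval ![p, c] (F.coeff α), fun y => ?_⟩⟩
  rw [← MvPolynomial.eval₂_eq']
  simp only [F]
  induction f using MvPolynomial.induction_on with
  | C r =>
    rw [MvPolynomial.aeval_C, IsScalarTower.algebraMap_apply ℝ (MvPolynomial (Fin 2) ℝ)]
    simp [MvPolynomial.algebraMap_eq]
  | add f g hf hg => simp [hf, hg, MvPolynomial.eval₂_add]
  | mul_X f j hf => simp [hf, MvPolynomial.eval₂_mul, MvPolynomial.eval₂_add]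

theorem exists_sign_of_dominance {ι X : Type*} [DecidableEq ι] (A : Finset ι) (C : ι → ℝ)
    (E : ι → X → ℝ)
    (h : ∀ α ∈ A, ∀ β ∈ A, α ≠ β →
      (∀ x, (A.card : ℝ) ≤ Real.log |C α| - Real.log |C β| + (E α x - E β x)) ∨
      (∀ x, Real.log |C α| - Real.log |C β| + (E α x - E β x) ≤ -(A.card : ℝ))) :
    ∃ s : SignType, ∀ x, SignType.sign (∑ α ∈ A, C α * Real.exp (E α x)) = s := by
  rcases isEmpty_or_nonempty X with hX | ⟨⟨x₀⟩⟩
  · exact ⟨0, fun x => (IsEmpty.false x).elim⟩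
  rcases (A.filter (fun α => C α ≠ 0)).eq_empty_or_nonempty with hA | hA
  · refine ⟨0, fun x => ?_⟩
    rw [Finset.sum_eq_zero, sign_zero]
    intro α hα
    have : α ∉ A.filter (fun α => C α ≠ 0) := by simp [hA]
    have : C α = 0 := by simpa [hα] using this
    simp [this]
  obtain ⟨α, hα, hmax⟩ := Finset.exists_max_image _
    (fun α => Real.log |C α| + E α x₀) hA
  obtain ⟨hαA, hα0⟩ := Finset.mem_filter.1 hα
  have hcard : (0 : ℝ) < A.card := by exact_mod_cast Finset.card_pos.2 ⟨α, hαA⟩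
  have hexp : (A.card : ℝ) * Real.exp (-A.card) < 1 := by
    rw [Real.exp_neg, ← div_eq_mul_inv, div_lt_one (Real.exp_pos _)]
    linarith [Real.add_one_le_exp (A.card : ℝ)]
  refine ⟨SignType.sign (C α), fun x => ?_⟩
  set m := |C α| * Real.exp (E α x) with hm
  have hmpos : 0 < m := by positivity
  have hle : ∀ β ∈ A.erase α, |C β * Real.exp (E β x)| ≤ Real.exp (-A.card) * m := by
    intro β hβ
    obtain ⟨hne, hβA⟩ := Finset.mem_erase.1 hβ
    by_cases hβ0 : C β = 0
    · rw [hβ0]; simp; positivity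
    have key : (A.card : ℝ) ≤ Real.log |C α| - Real.log |C β| + (E α x - E β x) := by
      rcases h α hαA β hβA hne.symm with h | h
      · exact h x
      · have h1 := h x₀
        have h2 := hmax β (Finset.mem_filter.2 ⟨hβA, hβ0⟩)
        linarith
    have h1 : |C β| = Real.exp (Real.log |C β|) := (Real.exp_log (by positivity)).symm
    have h2 : |C α| = Real.exp (Real.log |C α|) := (Real.exp_log (by positivity)).symm
    rw [abs_mul, Real.abs_exp, hm, h1, h2, ← Real.exp_add, ← Real.exp_add, ← Real.exp_add]
    exact Real.exp_le_exp.2 (by linarith)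
  have hrest : |∑ β ∈ A.erase α, C β * Real.exp (E β x)| < m := by
    calc _ ≤ ∑ β ∈ A.erase α, |C β * Real.exp (E β x)| := Finset.abs_sum_le_sum_abs _ _
      _ ≤ ∑ β ∈ A.erase α, Real.exp (-A.card) * m := Finset.sum_le_sum hle
      _ ≤ ∑ β ∈ A, Real.exp (-A.card) * m :=
        Finset.sum_le_sum_of_subset_of_nonneg (Finset.erase_subset _ _)
          (fun _ _ _ => by positivity)
      _ = (A.card * Real.exp (-A.card)) * m := by rw [Finset.sum_const, nsmul_eq_mul]; ring
      _ < 1 * m := by gcongr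
      _ = m := one_mul m
  rw [← Finset.add_sum_erase _ _ hαA]
  obtain ⟨hr1, hr2⟩ := abs_lt.1 hrest
  rcases lt_or_gt_of_ne hα0 with h0 | h0
  · rw [sign_neg h0]
    rw [hm, abs_of_neg h0] at hr1 hr2
    exact sign_neg (by linarith)
  · rw [sign_pos h0]
    rw [hm, abs_of_pos h0] at hr1 hr2
    exact sign_pos (by linarith)

/-- A sequence whose terms are at least `H` and grow at least by the factor `H ^ 2`. -/
def RapidlyGrowing (H : ℝ) {n : ℕ} (t : Fin n → ℝ) : Prop :=
  (∀ i, H ≤ t i) ∧ ∀ i j, i < j → H ^ 2 * t i ≤ t j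

theorem RapidlyGrowing.comp {H : ℝ} {n m : ℕ} {t : Fin n → ℝ} (ht : RapidlyGrowing H t)
    {φ : Fin m → Fin n} (hφ : StrictMono φ) : RapidlyGrowing H (fun i => t (φ i)) :=
  ⟨fun _ => ht.1 _, fun _ _ hij => ht.2 _ _ (hφ hij)⟩

/-- The number `c` is much larger than all terms of `t`, or much smaller than all of them. -/
def IsFarFrom (H c : ℝ) {n : ℕ} (t : Fin n → ℝ) : Prop :=
  (∀ i, H * t i ≤ |c|) ∨ ∀ i, H * |c| ≤ t i

theorem affine_dichotomy {k n : ℕ} {H B L c : ℝ} {t : Fin n → ℝ} {δ : Fin k → ℝ}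
    (hB : 0 ≤ B) (hL : 0 ≤ L) (hH : 4 + 4 * (k * B) + 2 * L ≤ H) (ht : RapidlyGrowing H t)
    (hc : IsFarFrom H c t) (hδ : ∃ j, δ j ≠ 0) (hδ1 : ∀ j, δ j ≠ 0 → 1 ≤ |δ j|)
    (hδB : ∀ j, |δ j| ≤ B) :
    (∀ i : {i : Fin k → Fin n // StrictMono i}, L ≤ c + ∑ j, δ j * t (i.1 j)) ∨
      (∀ i : {i : Fin k → Fin n // StrictMono i}, c + ∑ j, δ j * t (i.1 j) ≤ -L) := by
  have hkB : 0 ≤ k * B := by positivity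
  have hsum : ∀ (i : Fin k → Fin n) (J : Finset (Fin k)) (b : ℝ), 0 ≤ b →
      (∀ j ∈ J, |t (i j)| ≤ b) → |∑ j ∈ J, δ j * t (i j)| ≤ k * B * b := by
    intro i J b _ hJ
    calc _ ≤ ∑ j ∈ J, |δ j * t (i j)| := Finset.abs_sum_le_sum_abs _ _
      _ ≤ ∑ j ∈ J, B * b := Finset.sum_le_sum fun j hj => by
          rw [abs_mul]
          exact mul_le_mul (hδB j) (hJ j hj) (abs_nonneg _) hB
      _ ≤ ∑ j : Fin k, B * b := Finset.sum_le_sum_of_subset_of_nonneg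
          (Finset.subset_univ _) (fun _ _ _ => by positivity)
      _ = k * B * b := by simp; ring
  have htpos : ∀ i, 0 < t i := fun i => by linarith [ht.1 i]
  have hH0 : 0 < H := by linarith
  rcases hc with hc | hc
  · obtain ⟨j₁, -⟩ := hδ
    have key : ∀ i : Fin k → Fin n, |∑ j, δ j * t (i j)| + L ≤ |c| := by
      intro i
      have h1 := hsum i Finset.univ (|c| / H) (by positivity) (fun j _ => by
        rw [le_div_iff₀ hH0, abs_of_pos (htpos _), mul_comm]
        exact hc _)
      have h2 : k * B * (|c| / H) ≤ |c| / 2 := by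
        rw [← mul_div_assoc, div_le_div_iff₀ hH0 two_pos]
        nlinarith [abs_nonneg c]
      have h3 : L ≤ |c| / 2 := by
        have h4 := hc (i j₁)
        have h5 := ht.1 (i j₁)
        nlinarith
      linarith
    rcases le_total 0 c with h0 | h0
    · left
      rintro ⟨i, -⟩
      have := key i
      rw [abs_of_nonneg h0] at this
      linarith [neg_abs_le (∑ j, δ j * t (i j))]
    · right
      rintro ⟨i, -⟩
      have := key i
      rw [abs_of_nonpos h0] at this
      linarith [le_abs_self (∑ j, δ j * t (i j))]
  · obtain ⟨j₁, hj₁⟩ := hδ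
    obtain ⟨j₀, hj₀, hmax⟩ := (Finset.univ.filter (fun j => δ j ≠ 0)).exists_max_image id
      ⟨j₁, by simpa using hj₁⟩
    replace hj₀ : δ j₀ ≠ 0 := by simpa using hj₀
    have key : ∀ i : Fin k → Fin n, StrictMono i →
        |c + ∑ j ∈ Finset.univ.erase j₀, δ j * t (i j)| + L ≤ t (i j₀) := by
      intro i hi
      have h0 : ∑ j ∈ Finset.univ.erase j₀, δ j * t (i j) =
          ∑ j ∈ Finset.univ.filter (· < j₀), δ j * t (i j) := by
        symm
        apply Finset.sum_subset
        · intro j hj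
          simpa using (Finset.mem_filter.1 hj).2.ne
        · intro j hj hj'
          have h1 : j ≠ j₀ := by simpa using hj
          have h2 : ¬ j < j₀ := by simpa using hj'
          by_cases h3 : δ j = 0
          · simp [h3]
          · exact absurd (lt_of_le_of_ne (hmax j (by simpa using h3)) h1) h2
      have h1 := hsum i (Finset.univ.filter (· < j₀)) (t (i j₀) / H ^ 2)
        (div_nonneg (htpos _).le (by positivity)) (fun j hj => by
          rw [le_div_iff₀ (by positivity), abs_of_pos (htpos _), mul_comm]
          exact ht.2 _ _ (hi (Finset.mem_filter.1 hj).2))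
      have h2 : k * B * (t (i j₀) / H ^ 2) ≤ t (i j₀) / 4 := by
        rw [← mul_div_assoc, div_le_div_iff₀ (by positivity) (by norm_num)]
        have : k * B * 4 ≤ H ^ 2 := by nlinarith
        nlinarith [htpos (i j₀)]
      have h3 : |c| ≤ t (i j₀) / 4 := by
        have := hc (i j₀)
        nlinarith [abs_nonneg c]
      have h4 : L ≤ t (i j₀) / 2 := by linarith [ht.1 (i j₀)]
      rw [h0]
      linarith [abs_add_le c (∑ j ∈ Finset.univ.filter (· < j₀), δ j * t (i j))]
    have hsplit : ∀ i : Fin k → Fin n, c + ∑ j, δ j * t (i j) = δ j₀ * t (i j₀) +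
        (c + ∑ j ∈ Finset.univ.erase j₀, δ j * t (i j)) := by
      intro i
      rw [← Finset.add_sum_erase _ _ (Finset.mem_univ j₀)]
      ring
    have h1 := hδ1 j₀ hj₀
    rcases lt_or_gt_of_ne hj₀ with h0 | h0
    · right
      rintro ⟨i, hi⟩
      rw [abs_of_neg h0] at h1
      rw [hsplit]
      nlinarith [key i hi, htpos (i j₀),
        le_abs_self (c + ∑ j ∈ Finset.univ.erase j₀, δ j * t (i j))]
    · left
      rintro ⟨i, hi⟩
      rw [abs_of_pos h0] at h1
      rw [hsplit]
      nlinarith [key i hi, htpos (i j₀),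
        neg_abs_le (c + ∑ j ∈ Finset.univ.erase j₀, δ j * t (i j))]

theorem exists_constant_sign {k : ℕ} (f : MvPolynomial (Fin k) ℝ) :
    ∃ (H₀ : ℝ) (M : ℕ), ∀ p c ε : ℝ, ε = 1 ∨ ε = -1 → ∃ cs : Finset ℝ, cs.card ≤ M ∧
      ∀ H, H₀ ≤ H → ∀ (n : ℕ) (t : Fin n → ℝ), RapidlyGrowing H t →
        (∀ b ∈ cs, IsFarFrom H b t) → ∃ s : SignType, ∀ i : Fin k → Fin n, StrictMono i →
          SignType.sign (MvPolynomial.eval (fun j => p + c * Real.exp (ε * t (i j))) f) = s := by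
  obtain ⟨A, hA⟩ := exists_expansion f
  obtain ⟨B, hB⟩ : ∃ B : ℕ, ∀ α ∈ A, ∀ j, α j ≤ B :=
    ⟨A.sup fun α => Finset.univ.sup fun j => α j, fun α hα j =>
      (Finset.le_sup (f := fun j => α j) (Finset.mem_univ j)).trans
        (Finset.le_sup (f := fun α : Fin k →₀ ℕ => Finset.univ.sup fun j => α j) hα)⟩
  refine ⟨4 + 4 * (k * B) + 2 * A.card, (A ×ˢ A).card, fun p c ε hε => ?_⟩
  obtain ⟨C, hC⟩ := hA p c
  refine ⟨(A ×ˢ A).image (fun x => Real.log |C x.1| - Real.log |C x.2|),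
    Finset.card_image_le, fun H hH n t ht hfar => ?_⟩
  obtain ⟨s, hs⟩ := exists_sign_of_dominance (X := {i : Fin k → Fin n // StrictMono i}) A C
    (fun α i => ∑ j, ε * α j * t (i.1 j)) (by
      intro α hα β hβ hne
      simp only [← Finset.sum_sub_distrib, ← sub_mul, ← mul_sub]
      have hεabs : |ε| = 1 := by rcases hε with rfl | rfl <;> simp
      have hε0 : ε ≠ 0 := by rintro rfl; simp at hεabs
      refine affine_dichotomy (B := B) (by positivity) (by positivity) hH ht
        (hfar _ (Finset.mem_image_of_mem _ (Finset.mk_mem_product hα hβ))) ?_ ?_ ?_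
      · obtain ⟨j, hj⟩ := Finsupp.ne_iff.1 hne
        exact ⟨j, mul_ne_zero hε0 (sub_ne_zero.2 (by exact_mod_cast hj))⟩
      · intro j hj
        rw [abs_mul, hεabs, one_mul]
        have : (α j : ℤ) - β j ≠ 0 := by
          intro h0
          apply hj
          have : ((α j : ℤ) - β j : ℝ) = 0 := by exact_mod_cast h0
          simp at this
          simp [this]
        exact_mod_cast Int.one_le_abs this
      · intro j
        rw [abs_mul, hεabs, one_mul, abs_le]
        have h1 : (α j : ℝ) ≤ B := by exact_mod_cast hB α hα j
        have h2 : (β j : ℝ) ≤ B := by exact_mod_cast hB β hβ j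
        have h3 : (0 : ℝ) ≤ α j := by positivity
        have h4 : (0 : ℝ) ≤ β j := by positivity
        constructor <;> linarith)
  refine ⟨s, fun i hi => ?_⟩
  rw [hC, ← hs ⟨i, hi⟩]
  congr 1
  refine Finset.sum_congr rfl fun α _ => ?_
  rw [Real.exp_sum]
  congr 1
  refine Finset.prod_congr rfl fun j _ => ?_
  rw [← Real.exp_nat_mul]
  congr 1
  ring

theorem exists_far_block {M n : ℕ} {H : ℝ} (hH : 0 < H) (cs : Finset ℝ) (hcs : cs.card ≤ M)
    (t : Fin ((M + 1) * n) → ℝ) (ht : RapidlyGrowing H t) :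
    ∃ φ : Fin n → Fin ((M + 1) * n), StrictMono φ ∧
      ∀ c ∈ cs, IsFarFrom H c (fun i => t (φ i)) := by
  let φ : Fin (M + 1) → Fin n → Fin ((M + 1) * n) := fun b i => finProdFinEquiv (b, i)
  have hlt : ∀ b b' i i', b < b' → φ b i < φ b' i' := by
    intro b b' i i' hb
    have h1 : n * (b + 1 : ℕ) ≤ n * b' := Nat.mul_le_mul_left n hb
    have h2 := i.2
    rw [Fin.lt_def]
    simp only [φ, finProdFinEquiv_apply_val]
    rw [mul_add] at h1
    omega
  have hmono : ∀ b, StrictMono (φ b) := by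
    intro b i j hij
    rw [Fin.lt_def] at hij ⊢
    simp only [φ, finProdFinEquiv_apply_val]
    omega
  by_contra! hcon
  choose g hg hbad using fun b => hcon (φ b) (hmono b)
  obtain ⟨b, b', hne, heq⟩ := Fintype.exists_ne_map_eq_of_card_lt
    (fun b => (⟨g b, hg b⟩ : cs)) (by simp; omega)
  replace heq : g b = g b' := congrArg Subtype.val heq
  wlog hbb : b < b' generalizing b b'
  · exact this b' b hne.symm heq.symm (lt_of_le_of_ne (not_lt.1 hbb) hne.symm)
  have h1 := hbad b
  have h2 := hbad b'
  simp only [IsFarFrom, not_or, not_forall, not_le] at h1 h2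
  obtain ⟨⟨i, hi⟩, -⟩ := h1
  obtain ⟨-, ⟨i', hi'⟩⟩ := h2
  have h3 := ht.2 _ _ (hlt b b' i i' hbb)
  rw [← heq] at hi'
  nlinarith

theorem two_pow_mul_le_of_doubling {n : ℕ} {t : Fin n → ℝ} (ht : ∀ i j, i < j → 2 * t i ≤ t j)
    (m : ℕ) : ∀ i j : Fin n, (i : ℕ) + m = j → 2 ^ m * t i ≤ t j := by
  induction m with
  | zero =>
    intro i j hij
    rw [Fin.ext (show (i : ℕ) = j from hij)]
    simp
  | succ m ih =>
    intro i j hij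
    have h1 := ih i ⟨i + m, by omega⟩ rfl
    have h2 := ht ⟨i + m, by omega⟩ j (by rw [Fin.lt_def]; simp; omega)
    rw [pow_succ]
    linarith

theorem exists_rapidlyGrowing_subsequence {g n : ℕ} (hg : 1 ≤ g)
    {t : Fin (2 * g * n + 2 * g) → ℝ} (ht0 : ∀ i, 1 / 2 ≤ t i)
    (ht : ∀ i j, i < j → 2 * t i ≤ t j) :
    ∃ φ : Fin n → Fin (2 * g * n + 2 * g), StrictMono φ ∧
      RapidlyGrowing (2 ^ g) (fun i => t (φ i)) := by
  have hlt : ∀ i : Fin n, 2 * g * i + 2 * g < 2 * g * n + 2 * g := fun i => by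
    have : 2 * g * i < 2 * g * n := Nat.mul_lt_mul_of_pos_left i.2 (by omega)
    omega
  have hstep : ∀ i j : Fin n, i < j → 2 * g * (i : ℕ) + 2 * g ≤ 2 * g * j := fun i j hij => by
    have := Nat.mul_le_mul_left (2 * g) (show (i : ℕ) + 1 ≤ j from hij)
    rwa [mul_add, mul_one] at this
  have hpow : (1 : ℝ) ≤ 2 ^ g := one_le_pow₀ one_le_two
  have hsq : ((2 : ℝ) ^ g) ^ 2 = 2 ^ (2 * g) := by rw [← pow_mul, mul_comm]
  have hmul : ∀ i j : Fin (2 * g * n + 2 * g), (i : ℕ) + 2 * g ≤ j →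
      (2 ^ g) ^ 2 * t i ≤ t j := by
    intro i j hij
    have h1 := two_pow_mul_le_of_doubling ht (j - i) i j (by omega)
    refine le_trans ?_ h1
    have := ht0 i
    rw [hsq]
    gcongr
    · norm_num
    · omega
  refine ⟨fun i => ⟨_, hlt i⟩, fun i j hij => ?_, fun i => ?_, fun i j hij => ?_⟩
  · have := hstep i j hij
    rw [Fin.lt_def]
    simp only
    omega
  · have h1 := hmul ⟨0, by omega⟩ ⟨_, hlt i⟩ (by simp)
    have h2 := ht0 ⟨0, by omega⟩
    have h3 : (2 : ℝ) ≤ 2 ^ g := by simpa using pow_le_pow_right₀ one_le_two hg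
    nlinarith
  · apply hmul
    have := hstep i j hij
    simp only
    omega

theorem exists_finset_injOn {N n m : ℕ} (a : Fin N → ℝ) (hN : n * m ≤ N) (hn : 1 ≤ n) :
    (∃ (v : ℝ) (φ : Fin n → Fin N), StrictMono φ ∧ ∀ i, a (φ i) = v) ∨
      ∃ S : Finset (Fin N), Set.InjOn a S ∧ m ≤ S.card := by
  by_cases h : ∃ v, n ≤ (Finset.univ.filter (fun i => a i = v)).card
  · obtain ⟨v, hv⟩ := h
    refine Or.inl ⟨v, _, (Finset.orderEmbOfFin _ rfl).strictMono.comp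
      (Fin.strictMono_castLE hv), fun i => ?_⟩
    exact (Finset.mem_filter.1 (Finset.orderEmbOfFin_mem
      (Finset.univ.filter (fun i => a i = v)) rfl (Fin.castLE hv i))).2
  · push Not at h
    right
    obtain ⟨S, -, hS⟩ := (Set.surjOn_image a Set.univ).exists_bijOn_subset
    lift S to Finset (Fin N) using S.toFinite
    have hinj := hS.injOn
    replace hS : S.image a = Finset.univ.image a := by
      rw [← Finset.coe_inj, Finset.coe_image, hS.image_eq, Finset.coe_image, Finset.coe_univ]
    refine ⟨S, hinj, ?_⟩
    have h1 := Finset.card_le_mul_card_image (f := a) Finset.univ n (fun v _ => (h v).le)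
    rw [Finset.card_univ, Fintype.card_fin, ← hS, Finset.card_image_of_injOn hinj] at h1
    exact Nat.le_of_mul_le_mul_left (hN.trans h1) hn

theorem exists_exponential_subsequence {N g n : ℕ} (hg : 1 ≤ g) (a : Fin N → ℝ)
    (S : Finset (Fin N)) (hinj : Set.InjOn a S)
    (hS : 8 ^ (4 * 8 ^ (4 * (2 * g * n + 2 * g) + 1) + 1) ≤ S.card) :
    ∃ (φ : Fin n → Fin N) (p c ε : ℝ) (t : Fin n → ℝ), (StrictMono φ ∨ StrictAnti φ) ∧
      (ε = 1 ∨ ε = -1) ∧ RapidlyGrowing (2 ^ g) t ∧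
      ∀ i, a (φ i) = p + c * Real.exp (ε * t i) := by
  obtain ⟨φ₁, p₁, σ, u, hφ₁, -, hu0, hu, ha⟩ := exists_geometric_subsequence a S hinj _ hS
  have hgap : ∀ i j, i < j → 1 / 2 ≤ Real.log (u j) - Real.log (u i) := by
    intro i j hij
    have h1 := Real.log_le_log (mul_pos two_pos (hu0 i)) (hu i j hij)
    rw [Real.log_mul two_ne_zero (hu0 i).ne'] at h1
    linarith [Real.log_two_gt_d9]
  have hmono : StrictMono (fun i => Real.log (u i)) := fun i j hij => by
    have := hgap i j hij
    simp only
    linarith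
  obtain ⟨φ₂, p₂, ε, t, hφ₂, hε, ht0, ht, hlog⟩ := exists_geometric_subsequence
    (fun i => Real.log (u i)) Finset.univ hmono.injective.injOn (2 * g * n + 2 * g) (by simp)
  have ht1 : ∀ i, 1 / 2 ≤ t i := by
    intro i
    have h1 := hlog i
    have h2 := ht0 i
    rcases lt_trichotomy (φ₂ i) p₂ with h | h | h
    · have := hgap _ _ h
      rcases hε with rfl | rfl <;> linarith
    · rw [h] at h1
      rcases hε with rfl | rfl <;> linarith
    · have := hgap _ _ h
      rcases hε with rfl | rfl <;> linarith
  obtain ⟨ψ, hψ, hgrow⟩ := exists_rapidlyGrowing_subsequence hg ht1 ht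
  refine ⟨fun i => φ₁ (φ₂ (ψ i)), a p₁, σ * u p₂, ε, fun i => t (ψ i), ?_, hε, hgrow, ?_⟩
  · rcases hφ₁ with h₁ | h₁ <;> rcases hφ₂ with h₂ | h₂
    · exact Or.inl (h₁.comp (h₂.comp hψ))
    · exact Or.inr (h₁.comp_strictAnti (h₂.comp_strictMono hψ))
    · exact Or.inr (h₁.comp_strictMono (h₂.comp hψ))
    · exact Or.inl (h₁.comp (h₂.comp_strictMono hψ))
  · intro i
    rw [ha, ← Real.exp_log (hu0 (φ₂ (ψ i))), hlog, Real.exp_add, Real.exp_log (hu0 _), mul_assoc]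

theorem length_bound {n E : ℕ} (hE : 1 ≤ E) :
    n * 8 ^ (4 * 8 ^ (E * n) + 1) ≤ 2 ^ 2 ^ (4 + 3 * (E * n)) := by
  have h8 : ∀ m : ℕ, 8 ^ m = 2 ^ (3 * m) := fun m => by rw [pow_mul]; norm_num
  have h1 : n ≤ 8 ^ (E * n) :=
    (Nat.lt_pow_self (by norm_num)).le.trans
      (Nat.pow_le_pow_right (by norm_num) (Nat.le_mul_of_pos_left n hE))
  have h2 : 1 ≤ 8 ^ (E * n) := Nat.one_le_pow _ _ (by norm_num)
  calc n * 8 ^ (4 * 8 ^ (E * n) + 1) ≤ 2 ^ n * 2 ^ (3 * (4 * 8 ^ (E * n) + 1)) := by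
        rw [← h8]
        exact Nat.mul_le_mul_right _ (Nat.lt_pow_self (by norm_num)).le
    _ = 2 ^ (n + 3 * (4 * 8 ^ (E * n) + 1)) := (pow_add _ _ _).symm
    _ ≤ 2 ^ (16 * 8 ^ (E * n)) := Nat.pow_le_pow_right (by norm_num) (by omega)
    _ = 2 ^ 2 ^ (4 + 3 * (E * n)) := by rw [h8, pow_add]; norm_num

theorem exists_subsequence_constant_sign {ι : Type*} [Fintype ι] (k : ι → ℕ)
    (f : ∀ x, MvPolynomial (Fin (k x)) ℝ) :
    ∃ D : ℕ, 0 < D ∧ ∀ n N : ℕ, 1 ≤ n → 2 ^ 2 ^ (D * n) ≤ N → ∀ a : Fin N → ℝ,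
      ∃ φ : Fin n → Fin N, StrictMono φ ∧ ∀ x, ∃ s : SignType,
        ∀ i : Fin (k x) → Fin n, StrictMono i →
          SignType.sign (MvPolynomial.eval (fun j => a (φ (i j))) (f x)) = s := by
  classical
  choose H₁ M₁ h₁ using fun x => exists_constant_sign (f x)
  choose H₂ M₂ h₂ using fun x => exists_constant_sign (MvPolynomial.rename Fin.rev (f x))
  obtain ⟨g, hg, hgH⟩ : ∃ g : ℕ, 1 ≤ g ∧ ∀ x, H₁ x ≤ 2 ^ g ∧ H₂ x ≤ 2 ^ g := by
    obtain ⟨b, hb⟩ := (Set.finite_range fun x => max (H₁ x) (H₂ x)).bddAbove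
    obtain ⟨g, hg⟩ := pow_unbounded_of_one_lt b (one_lt_two : (1 : ℝ) < 2)
    have hg' : (2 : ℝ) ^ g ≤ 2 ^ (g + 1) := pow_le_pow_right₀ one_le_two (by omega)
    refine ⟨g + 1, by omega, fun x => max_le_iff.1 ?_⟩
    exact (hb (Set.mem_range_self x)).trans (hg.le.trans hg')
  obtain ⟨M, hM⟩ : ∃ M, ∑ x, (M₁ x + M₂ x) = M := ⟨_, rfl⟩
  obtain ⟨E, hE⟩ : ∃ E, E = 4 * (2 * g * (M + 1) + 2 * g) + 1 := ⟨_, rfl⟩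
  refine ⟨4 + 3 * E, by omega, fun n N hn hN a => ?_⟩
  have hlen : n * 8 ^ (4 * 8 ^ (4 * (2 * g * ((M + 1) * n) + 2 * g) + 1) + 1) ≤ N := by
    refine le_trans (le_trans ?_ (length_bound (n := n) (E := E) (by omega))) (le_trans ?_ hN)
    · gcongr
      · norm_num
      · norm_num
      · rw [hE]
        nlinarith
    · gcongr
      · norm_num
      · norm_num
      · nlinarith
  rcases exists_finset_injOn a hlen hn with ⟨v, φ, hφ, hv⟩ | ⟨S, hinj, hS⟩
  · exact ⟨φ, hφ, fun x => ⟨SignType.sign (MvPolynomial.eval (fun _ => v) (f x)),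
      fun i _ => by simp only [hv]⟩⟩
  obtain ⟨φ, p, c, ε, t, hφ, hε, ht, ha⟩ := exists_exponential_subsequence (n := (M + 1) * n) hg a S hinj hS
  choose cs₁ hcs₁ hs₁ using fun x => h₁ x p c ε hε
  choose cs₂ hcs₂ hs₂ using fun x => h₂ x p c ε hε
  obtain ⟨ψ, hψ, hfar⟩ := exists_far_block (M := M) (by positivity)
    (Finset.univ.biUnion fun x => cs₁ x ∪ cs₂ x)
    (hM ▸ Finset.card_biUnion_le.trans (Finset.sum_le_sum fun x _ =>
      (Finset.card_union_le _ _).trans (Nat.add_le_add (hcs₁ x) (hcs₂ x)))) t ht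
  have hfar₁ : ∀ x, ∀ b ∈ cs₁ x, IsFarFrom (2 ^ g) b (fun i => t (ψ i)) := fun x b hb =>
    hfar b (Finset.mem_biUnion.2 ⟨x, Finset.mem_univ x, Finset.mem_union_left _ hb⟩)
  have hfar₂ : ∀ x, ∀ b ∈ cs₂ x, IsFarFrom (2 ^ g) b (fun i => t (ψ i)) := fun x b hb =>
    hfar b (Finset.mem_biUnion.2 ⟨x, Finset.mem_univ x, Finset.mem_union_right _ hb⟩)
  have hgrow := ht.comp hψ
  rcases hφ with hφ | hφ
  · refine ⟨fun i => φ (ψ i), hφ.comp hψ, fun x => ?_⟩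
    simp only [ha]
    exact hs₁ x _ (hgH x).1 n (fun i => t (ψ i)) hgrow (hfar₁ x)
  · refine ⟨fun i => φ (ψ i.rev), fun i j hij => hφ (hψ (Fin.rev_lt_rev.2 hij)), fun x => ?_⟩
    obtain ⟨s, hs⟩ := hs₂ x _ (hgH x).2 n (fun i => t (ψ i)) hgrow (hfar₂ x)
    refine ⟨s, fun i hi => ?_⟩
    rw [← hs (fun j => (i j.rev).rev)
      fun j l hjl => Fin.rev_lt_rev.2 (hi (Fin.rev_lt_rev.2 hjl)), MvPolynomial.eval_rename]
    simp only [ha, Function.comp_def, Fin.rev_rev]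

/-- for every finite set of one-dimensional semialgebraic predicates there
is `C > 0` such that every sequence of length at least `2^(2^(C·n))` has an `n`-term
subsequence on which each predicate holds either everywhere or nowhere. -/
theorem stmt1 {r : ℕ} (k : Fin r → ℕ) (Φ : ∀ i, (Fin (k i) → ℝ) → Prop)
    (hsa : ∀ i, IsSemialgebraic (Φ i)) :
    ∃ C : ℝ, 0 < C ∧ ∀ n : ℕ, 1 ≤ n → ∀ N : ℕ,
      (2 : ℝ) ^ ((2 : ℝ) ^ (C * (n : ℝ))) ≤ (N : ℝ) →
      ∀ a : Fin N → ℝ, ∃ φ : Fin n → Fin N, StrictMono φ ∧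
        ∀ i, HoldsEverywhere (Φ i) (fun j => a (φ j)) ∨
          HoldsEverywhere (fun x => ¬ Φ i x) (fun j => a (φ j)) := by
  choose m p S hS using hsa
  obtain ⟨D, hD, h⟩ := exists_subsequence_constant_sign (ι := Σ i, Fin (m i)) (fun x => k x.1)
    (fun x => p x.1 x.2)
  refine ⟨D, by exact_mod_cast hD, fun n hn N hN a => ?_⟩
  have hN' : 2 ^ 2 ^ (D * n) ≤ N := by
    have h1 : (2 : ℝ) ^ ((D : ℝ) * n) = ((2 ^ (D * n) : ℕ) : ℝ) := by
      rw [← Nat.cast_mul, Real.rpow_natCast]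
      push_cast
      rfl
    rw [h1, Real.rpow_natCast] at hN
    exact_mod_cast hN
  obtain ⟨φ, hφ, hs⟩ := h n N hn hN' a
  choose s hs using hs
  refine ⟨φ, hφ, fun i => ?_⟩
  have key : ∀ e : Fin (k i) → Fin n, StrictMono e →
      (Φ i (fun j => a (φ (e j))) ↔ (fun l => s ⟨i, l⟩) ∈ S i) := by
    intro e he
    rw [hS]
    simp only [fun l => hs ⟨i, l⟩ e he]
  by_cases hmem : (fun l => s ⟨i, l⟩) ∈ S i
  · exact Or.inl fun e he => (key e he).2 hmem
  · exact Or.inr fun e he => mt (key e he).1 hmem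
end

section
/- Effective compactness for the multipartite setting: for all positive integers d, D, k there exists N such that for all finite sets P and Q of real polynomials in the d·k coordinates of k points of ℝ^d, each polynomial of total degree at most D, the following are equivalent for the predicate Φ(x₁,…,x_k) := (∀p ∈ P, p(x₁,…,x_k) = 0) ∧ (∀q ∈ Q, q(x₁,…,x_k) > 0): (i) there exist sets A₁,…,A_k ⊆ ℝ^d, each of cardinality N, such that Φ(a₁,…,a_k) holds for every choice of a₁ ∈ A₁, …, a_k ∈ A_k; (ii) there exist infinite sets X₁,…,X_k ⊆ ℝ^d such that Φ(x₁,…,x_k) holds for every choice of x₁ ∈ X₁, …, x_k ∈ X_k. -/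
section

open Filter Topology MvPolynomial

theorem eventuallyEq_zero_of_hasDerivAt_linear {E : Type*} [NormedAddCommGroup E]
    [NormedSpace ℝ E] {L : ℝ → E →L[ℝ] E} {u : ℝ → E} {t₀ : ℝ} (hL : ContinuousAt L t₀)
    (hu : ∀ᶠ t in 𝓝 t₀, HasDerivAt u (L t (u t)) t) (h₀ : u t₀ = 0) : u =ᶠ[𝓝 t₀] 0 := by
  refine ODE_solution_unique_of_eventually (v := fun t => L t) (s := fun _ => Set.univ)
    (K := ‖L t₀‖₊ + 1) ?_ (hu.mono fun t ht => ⟨ht, trivial⟩)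
    (Eventually.of_forall fun t => ⟨?_, trivial⟩) h₀
  · have h : ∀ᶠ t in 𝓝 t₀, ‖L t‖₊ < ‖L t₀‖₊ + 1 :=
      hL.nnnorm.eventually_lt_const (lt_add_one _)
    filter_upwards [h] with t ht
    exact ((L t).lipschitz.weaken ht.le).lipschitzOnWith
  · simp

namespace MvPolynomial

variable {σ C : Type*} [CommRing C]

theorem contDiff_eval₂ [Fintype σ] (c : C →+* ℝ) (g : MvPolynomial σ C) {n : WithTop ℕ∞} :
    ContDiff ℝ n fun x : σ → ℝ => eval₂ c x g := by
  induction g using MvPolynomial.induction_on with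
  | C a => simpa using contDiff_const
  | add p q hp hq => simpa using hp.add hq
  | mul_X p i hp => simpa using hp.mul (contDiff_apply ℝ ℝ i)

theorem hasDerivAt_eval₂_comp [Fintype σ] (c : C →+* ℝ)
    (θ : Derivation C (MvPolynomial σ C) (MvPolynomial σ C)) {γ : ℝ → σ → ℝ} {t : ℝ}
    (hγ : HasDerivAt γ (fun i => eval₂ c (γ t) (θ (X i))) t) (g : MvPolynomial σ C) :
    HasDerivAt (fun s => eval₂ c (γ s) g) (eval₂ c (γ t) (θ g)) t := by
  induction g using MvPolynomial.induction_on with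
  | C a => simpa using hasDerivAt_const t (c a)
  | add p q hp hq => simpa using hp.fun_add hq
  | mul_X p i hp =>
    have h := hp.fun_mul (hasDerivAt_pi.1 hγ i)
    simp only [eval₂_mul, eval₂_X, Derivation.leibniz, smul_eq_mul, eval₂_add]
    exact h.congr_deriv (by ring)

/-- The common real zeros of the ideal `I` after specializing the coefficients along `c`. -/
def fiberZeros (c : C →+* ℝ) (I : Ideal (MvPolynomial σ C)) : Set (σ → ℝ) :=
  {x | ∀ g ∈ I, eval₂ c x g = 0}

theorem fiberZeros_anti (c : C →+* ℝ) {I J : Ideal (MvPolynomial σ C)} (h : I ≤ J) :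
    fiberZeros c J ⊆ fiberZeros c I := fun _ hx g hg => hx g (h hg)

theorem mem_fiberZeros_sup_span {c : C →+* ℝ} {I : Ideal (MvPolynomial σ C)}
    {a : MvPolynomial σ C} {x : σ → ℝ} :
    x ∈ fiberZeros c (I ⊔ Ideal.span {a}) ↔ x ∈ fiberZeros c I ∧ eval₂ c x a = 0 := by
  have key : ∀ J : Ideal (MvPolynomial σ C),
      x ∈ fiberZeros c J ↔ J ≤ RingHom.ker (eval₂Hom c x) := fun J => Iff.rfl
  rw [key, key, sup_le_iff, Ideal.span_singleton_le_iff_mem, RingHom.mem_ker, coe_eval₂Hom]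

theorem accPt_fiberZeros_of_derivation [Fintype σ] (c : C →+* ℝ) {I : Ideal (MvPolynomial σ C)}
    (hI : I.FG) (θ : Derivation C (MvPolynomial σ C) (MvPolynomial σ C))
    (hθ : ∀ g ∈ I, θ g ∈ I) {x : σ → ℝ} (hx : x ∈ fiberZeros c I) {i : σ}
    (hi : eval₂ c x (θ (X i)) ≠ 0) : AccPt x (𝓟 (fiberZeros c I)) := by
  classical
  obtain ⟨γ, hγ0, ε, hε, hγ⟩ :=
    ContDiffAt.exists_forall_mem_closedBall_exists_eq_forall_mem_Ioo_hasDerivAt₀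
      (f := fun x : σ → ℝ => fun i => eval₂ c x (θ (X i)))
      (contDiff_pi.2 fun i => contDiff_eval₂ c (θ (X i))).contDiffAt (x₀ := x) 0
  have hγ' : ∀ᶠ t in 𝓝 (0 : ℝ), HasDerivAt γ (fun i => eval₂ c (γ t) (θ (X i))) t := by
    filter_upwards [Ioo_mem_nhds (a := 0 - ε) (b := 0 + ε) (by linarith) (by linarith)] with t ht
    exact hγ t ht
  have hγd := hγ'.self_of_nhds
  obtain ⟨S, rfl⟩ := hI
  have hq : ∀ g : S, ∃ q : S → MvPolynomial σ C, ∑ h : S, q h * h.1 = θ g.1 := fun g => by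
    have h := hθ g (Ideal.subset_span g.2)
    rw [Ideal.span, ← Subtype.range_coe (s := (S : Set (MvPolynomial σ C))),
      Submodule.mem_span_range_iff_exists_fun] at h
    exact h
  choose q hq using hq
  let L : ℝ → (S → ℝ) →L[ℝ] (S → ℝ) := fun t => ContinuousLinearMap.pi fun g =>
    ∑ h : S, eval₂ c (γ t) (q g h) • ContinuousLinearMap.proj h
  have hL : ContinuousAt L 0 := by
    refine ContinuousAt.comp 
      (g := ContinuousLinearMap.piEquivL ℝ (S → ℝ) (fun _ : S => ℝ))
      (ContinuousLinearEquiv.continuous _).continuousAt ?_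
    refine continuousAt_pi.2 fun g => tendsto_finsetSum _ fun h _ => ?_
    exact (((contDiff_eval₂ (n := 0) c (q g h)).continuous.continuousAt).comp
      hγd.continuousAt).smul continuousAt_const
  have hu : ∀ᶠ t in 𝓝 (0 : ℝ), HasDerivAt (fun t => fun g : S => eval₂ c (γ t) g.1)
      (L t (fun g : S => eval₂ c (γ t) g.1)) t := by
    filter_upwards [hγ'] with t ht
    refine hasDerivAt_pi.2 fun g => ?_
    have h := hasDerivAt_eval₂_comp c θ ht g.1
    rw [← hq] at h
    simpa [L, eval₂_sum] using h
  have hz := eventuallyEq_zero_of_hasDerivAt_linear hL hu (by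
    funext g; simpa [hγ0] using hx g.1 (Ideal.subset_span g.2))
  have hmem : ∀ᶠ t in 𝓝 (0 : ℝ), γ t ∈ fiberZeros c (Ideal.span (S : Set (MvPolynomial σ C))) := by
    filter_upwards [hz] with t ht
    have : Ideal.span (S : Set (MvPolynomial σ C)) ≤ RingHom.ker (eval₂Hom c (γ t)) :=
      Ideal.span_le.2 fun g hg => congrFun ht ⟨g, hg⟩
    exact this
  have hne : Tendsto γ (𝓝[≠] 0) (𝓝[≠] x) := by
    have := hγd.tendsto_nhdsNE (fun h => hi (by simpa [hγ0] using congrFun h i))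
    rwa [hγ0] at this
  rw [accPt_iff_frequently_nhdsNE]
  exact hne.frequently (hmem.filter_mono nhdsWithin_le_nhds).frequently

end MvPolynomial

theorem exists_derivation_ne_zero_of_not_isAlgebraic (K L : Type*) [Field K] [Field L] [CharZero K]
    [Algebra K L] [Algebra.EssFiniteType K L] (h : ¬ Algebra.IsAlgebraic K L) :
    ∃ D : Derivation K L L, D ≠ 0 := by
  by_contra! hD
  refine h ?_
  have : Algebra.FormallyUnramified K L := by
    refine ⟨⟨fun a b => ?_⟩⟩
    rw [← sub_eq_zero, ← Module.forall_dual_apply_eq_zero_iff L]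
    intro f
    have hf : f = 0 := (KaehlerDifferential.linearMapEquivDerivation K L).injective
      ((hD _).trans (hD _).symm)
    simp [hf]
  have := (Algebra.FormallyUnramified.iff_isSeparable K L).1 this
  infer_instance

theorem algebraic_relation_or_exists_derivation_ne_zero_aux (C C' K L : Type*) [CommRing C]
    [CommRing C'] [IsDomain C'] [Field K] [Field L] [Algebra C C'] [Algebra C K] [Algebra C L]
    [Algebra C' K] [IsScalarTower C C' K] [IsFractionRing C' K]
    [Algebra C' L] [IsScalarTower C C' L] [FaithfulSMul C' L]
    [Algebra K L] [IsScalarTower C' K L] [IsScalarTower C K L]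
    [CharZero L] [Algebra.EssFiniteType C L]
    (hsurj : Function.Surjective (algebraMap C C')) :
    (∀ y : L, ∃ p : Polynomial C, (∃ n, algebraMap C L (p.coeff n) ≠ 0) ∧
      Polynomial.aeval y p = 0) ∨ ∃ D : Derivation C L L, D ≠ 0 := by
  have : Algebra.EssFiniteType K L := Algebra.EssFiniteType.of_comp C K L
  have : CharZero K := (algebraMap K L).charZero
  by_cases halg : Algebra.IsAlgebraic K L
  · left
    intro y
    have : Algebra.IsAlgebraic C' L := (IsFractionRing.comap_isAlgebraic_iff (K := K)).2 halg
    obtain ⟨p, hp0, hp⟩ := Algebra.IsAlgebraic.isAlgebraic (R := C') y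
    obtain ⟨p, rfl⟩ := Polynomial.map_surjective _ hsurj p
    refine ⟨p, ?_, by rwa [← Polynomial.aeval_map_algebraMap C']⟩
    obtain ⟨n, hn⟩ : ∃ n, (p.map (algebraMap C C')).coeff n ≠ 0 := by
      by_contra! h
      exact hp0 (Polynomial.ext (by simpa using h))
    refine ⟨n, fun h => hn ?_⟩
    rwa [IsScalarTower.algebraMap_apply C C' L, FaithfulSMul.algebraMap_eq_zero_iff,
      ← Polynomial.coeff_map] at h
  · right
    obtain ⟨D, hD⟩ := exists_derivation_ne_zero_of_not_isAlgebraic K L halg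
    refine ⟨D.restrictScalars C, fun h => hD ?_⟩
    ext y
    exact congrArg (fun E : Derivation C L L => E y) h

theorem algebraic_relation_or_exists_derivation_ne_zero (C L : Type*) [CommRing C]
    [Field L] [Algebra C L] [CharZero L] [Algebra.EssFiniteType C L] :
    (∀ y : L, ∃ p : Polynomial C, (∃ n, algebraMap C L (p.coeff n) ≠ 0) ∧
      Polynomial.aeval y p = 0) ∨ ∃ D : Derivation C L L, D ≠ 0 := by
  let C' := (⊥ : Subalgebra C L)
  let _ : Algebra (FractionRing C') L := FractionRing.liftAlgebra C' L
  have h1 : IsScalarTower C' (FractionRing C') L := FractionRing.isScalarTower_liftAlgebra C' L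
  have h2 : IsScalarTower C (FractionRing C') L := IsScalarTower.of_algebraMap_eq fun x => by
    rw [IsScalarTower.algebraMap_apply C C' (FractionRing C'),
      ← IsScalarTower.algebraMap_apply C' (FractionRing C') L]
    rfl
  refine algebraic_relation_or_exists_derivation_ne_zero_aux C C' (FractionRing C') L fun y => ?_
  obtain ⟨x, hx⟩ := Algebra.mem_bot.1 y.2
  exact ⟨x, Subtype.ext hx⟩

namespace MvPolynomial

variable {σ C : Type*} [CommRing C]

theorem algebraic_relation_or_exists_derivation_aux [Finite σ] [Algebra ℚ C]
    (I : Ideal (MvPolynomial σ C)) [I.IsPrime] (L : Type*) [Field L]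
    [Algebra (MvPolynomial σ C ⧸ I) L] [IsFractionRing (MvPolynomial σ C ⧸ I) L]
    [Algebra C L] [Algebra (MvPolynomial σ C) L] [IsScalarTower C (MvPolynomial σ C) L]
    [IsScalarTower (MvPolynomial σ C) (MvPolynomial σ C ⧸ I) L]
    [IsScalarTower C (MvPolynomial σ C ⧸ I) L] :
    (∀ i, ∃ p : Polynomial C, (∃ n, MvPolynomial.C (p.coeff n) ∉ I) ∧
      Polynomial.aeval (X i : MvPolynomial σ C) p ∈ I) ∨
    ∃ θ : Derivation C (MvPolynomial σ C) (MvPolynomial σ C),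
      (∀ g ∈ I, θ g ∈ I) ∧ ∃ i, θ (X i) ∉ I := by
  set A := MvPolynomial σ C ⧸ I
  have : Algebra.EssFiniteType A L := .of_isLocalization _ (nonZeroDivisors A)
  have : Algebra.EssFiniteType C L := .comp C A L
  have : CharZero L := charZero_of_injective_ringHom
    ((algebraMap C L).comp (algebraMap ℚ C)).injective
  have hker : ∀ g : MvPolynomial σ C, algebraMap (MvPolynomial σ C) L g = 0 ↔ g ∈ I := fun g => by
    rw [IsScalarTower.algebraMap_apply (MvPolynomial σ C) A L,
      FaithfulSMul.algebraMap_eq_zero_iff]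
    exact Ideal.Quotient.eq_zero_iff_mem
  obtain halg | ⟨D, hD⟩ := algebraic_relation_or_exists_derivation_ne_zero C L
  · left
    intro i
    obtain ⟨p, ⟨n, hn⟩, hp⟩ := halg (algebraMap (MvPolynomial σ C) L (X i))
    refine ⟨p, ⟨n, fun h => hn ?_⟩, ?_⟩
    · rwa [← hker, ← algebraMap_eq, ← IsScalarTower.algebraMap_apply] at h
    · rwa [← hker, ← Polynomial.aeval_algebraMap_apply]
  · right
    obtain ⟨s, hs⟩ := IsLocalization.exist_integer_multiples_of_finite (nonZeroDivisors A)
      fun i : σ => D (algebraMap (MvPolynomial σ C) L (X i))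
    choose h hh using hs
    choose h' hh' using fun i => Ideal.Quotient.mk_surjective (h i)
    have hs0 : algebraMap A L s ≠ 0 := by simp
    set θ := mkDerivation C h' with hθ
    have hX : ∀ i, algebraMap (MvPolynomial σ C) L (θ (X i)) =
        algebraMap A L s * D (algebraMap (MvPolynomial σ C) L (X i)) := fun i => by
      rw [hθ, mkDerivation_X, ← Algebra.smul_def, ← hh, ← hh']
      exact IsScalarTower.algebraMap_apply _ _ _ _
    have hπ : ∀ g, algebraMap (MvPolynomial σ C) L (θ g) =
        algebraMap A L s * D (algebraMap (MvPolynomial σ C) L g) := by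
      intro g
      induction g using MvPolynomial.induction_on with
      | C a =>
        rw [← algebraMap_eq, ← IsScalarTower.algebraMap_apply]
        simp
      | add p q hp hq => simp only [map_add, hp, hq, mul_add]
      | mul_X p i hp =>
        simp only [Derivation.leibniz, map_add, smul_eq_mul, map_mul, hp, hX]
        ring
    refine ⟨θ, fun g hg => ?_, ?_⟩
    · rw [← hker] at hg ⊢
      rw [hπ, hg, map_zero, mul_zero]
    · by_contra! hi
      refine hD (Derivation.ext fun y => ?_)
      have hX0 : ∀ i, D (algebraMap (MvPolynomial σ C) L (X i)) = 0 := fun i => by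
        have := (hker _).2 (hi i)
        rw [hX] at this
        exact (mul_eq_zero.1 this).resolve_left hs0
      have h0 : ∀ g, D (algebraMap (MvPolynomial σ C) L g) = 0 := by
        intro g
        induction g using MvPolynomial.induction_on with
        | C a =>
          rw [← algebraMap_eq, ← IsScalarTower.algebraMap_apply]
          simp
        | add p q hp hq => simp only [map_add, hp, hq, add_zero]
        | mul_X p i hp => simp [Derivation.leibniz, hp, hX0]
      obtain ⟨a, b, hb, rfl⟩ := IsFractionRing.div_surjective (A := A) y
      obtain ⟨a, rfl⟩ := Ideal.Quotient.mk_surjective a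
      obtain ⟨b, rfl⟩ := Ideal.Quotient.mk_surjective b
      rw [← Ideal.Quotient.algebraMap_eq, ← IsScalarTower.algebraMap_apply,
        ← IsScalarTower.algebraMap_apply, Derivation.leibniz_div]
      simp [h0]

theorem algebraic_relation_or_exists_derivation [Finite σ] [Algebra ℚ C]
    (I : Ideal (MvPolynomial σ C)) [I.IsPrime] :
    (∀ i, ∃ p : Polynomial C, (∃ n, MvPolynomial.C (p.coeff n) ∉ I) ∧
      Polynomial.aeval (X i : MvPolynomial σ C) p ∈ I) ∨
    ∃ θ : Derivation C (MvPolynomial σ C) (MvPolynomial σ C),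
      (∀ g ∈ I, θ g ∈ I) ∧ ∃ i, θ (X i) ∉ I :=
  algebraic_relation_or_exists_derivation_aux I (FractionRing (MvPolynomial σ C ⧸ I))
theorem card_fiberZeros_le_of_algebraic [Fintype σ] (c : C →+* ℝ)
    {I : Ideal (MvPolynomial σ C)} (p : σ → Polynomial C)
    (hp : ∀ i, Polynomial.aeval (X i : MvPolynomial σ C) (p i) ∈ I)
    (h0 : ∀ i, (p i).map c ≠ 0) {S : Finset (σ → ℝ)} (hS : ∀ x ∈ S, x ∈ fiberZeros c I) :
    S.card ≤ ∏ i, (p i).natDegree := by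
  classical
  calc S.card ≤ (Fintype.piFinset fun i => ((p i).map c).roots.toFinset).card := by
        refine Finset.card_le_card fun x hx => Fintype.mem_piFinset.2 fun i => ?_
        rw [Multiset.mem_toFinset, Polynomial.mem_roots (h0 i), Polynomial.IsRoot.def,
          Polynomial.eval_map]
        have h := hS x hx _ (hp i)
        have hc : (eval₂Hom c x).comp (algebraMap C (MvPolynomial σ C)) = c := by
          ext a
          simp
        rwa [← coe_eval₂Hom, Polynomial.aeval_def, Polynomial.hom_eval₂, hc, coe_eval₂Hom,
          eval₂_X] at h
    _ = ∏ i, ((p i).map c).roots.toFinset.card := Fintype.card_piFinset _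
    _ ≤ ∏ i, (p i).natDegree := Finset.prod_le_prod' fun i _ =>
        (Multiset.toFinset_card_le _).trans
          ((Polynomial.card_roots' _).trans Polynomial.natDegree_map_le)

/-- The number of isolated real zeros of the fibers of a polynomial family is uniformly bounded. -/
theorem exists_card_isolated_fiberZeros_le [Fintype σ] [IsNoetherianRing C] [Algebra ℚ C]
    (I : Ideal (MvPolynomial σ C)) :
    ∃ N : ℕ, ∀ (c : C →+* ℝ) (S : Finset (σ → ℝ)),
      (∀ x ∈ S, x ∈ fiberZeros c I ∧ ¬ AccPt x (𝓟 (fiberZeros c I))) → S.card ≤ N := by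
  classical
  induction I using WellFoundedGT.induction with
  | ind I ih =>
  have ih' : ∀ a ∉ I, ∃ N : ℕ, ∀ (c : C →+* ℝ) (S : Finset (σ → ℝ)),
      (∀ x ∈ S, (x ∈ fiberZeros c I ∧ ¬ AccPt x (𝓟 (fiberZeros c I))) ∧ eval₂ c x a = 0) →
      S.card ≤ N := fun a ha => by
    have hlt : I < I ⊔ Ideal.span {a} := by
      refine lt_of_le_of_ne le_sup_left fun h => ha ?_
      rw [h]
      exact Ideal.mem_sup_right (Ideal.mem_span_singleton_self a)
    obtain ⟨N, hN⟩ := ih _ hlt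
    refine ⟨N, fun c S hS => hN c S fun x hx => ?_⟩
    obtain ⟨⟨h1, h2⟩, h3⟩ := hS x hx
    exact ⟨mem_fiberZeros_sup_span.2 ⟨h1, h3⟩,
      fun h => h2 (h.mono (principal_mono.2 (fiberZeros_anti c hlt.le)))⟩
  by_cases htop : I = ⊤
  · refine ⟨0, fun c S hS => ?_⟩
    rw [Nat.le_zero, Finset.card_eq_zero, Finset.eq_empty_iff_forall_notMem]
    intro x hx
    have := (hS x hx).1 1 (htop ▸ Submodule.mem_top)
    simp at this
  by_cases hprime : I.IsPrime
  · obtain halg | ⟨θ, hθ, i, hi⟩ := algebraic_relation_or_exists_derivation I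
    · choose p hcoeff hp using halg
      choose n hn using hcoeff
      choose N hN using fun i => ih' _ (hn i)
      refine ⟨(∏ i, (p i).natDegree) + ∑ i, N i, fun c S hS => ?_⟩
      by_cases h0 : ∀ i, c ((p i).coeff (n i)) ≠ 0
      · refine le_add_right (card_fiberZeros_le_of_algebraic c p hp (fun i h => h0 i ?_)
          fun x hx => (hS x hx).1)
        rw [← Polynomial.coeff_map, h, Polynomial.coeff_zero]
      · push Not at h0
        obtain ⟨i, hi⟩ := h0
        exact le_add_left ((hN i c S fun x hx => ⟨hS x hx, by simpa using hi⟩).trans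
          (Finset.single_le_sum (fun _ _ => Nat.zero_le _) (Finset.mem_univ i)))
    · obtain ⟨N, hN⟩ := ih' _ hi
      refine ⟨N, fun c S hS => hN c S fun x hx => ⟨hS x hx, ?_⟩⟩
      by_contra h
      exact (hS x hx).2 (accPt_fiberZeros_of_derivation c (IsNoetherian.noetherian I) θ hθ
        (hS x hx).1 h)
  · obtain ⟨a, ha, b, hb, hab⟩ : ∃ a ∉ I, ∃ b ∉ I, a * b ∈ I := by
      by_contra! h
      refine hprime ⟨htop, fun {a b} hab => ?_⟩
      by_contra! h'
      exact h a h'.1 b h'.2 hab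
    obtain ⟨M, hM⟩ := ih' a ha
    obtain ⟨N, hN⟩ := ih' b hb
    refine ⟨M + N, fun c S hS => ?_⟩
    rw [← Finset.card_filter_add_card_filter_not (s := S) fun x => eval₂ c x a = 0]
    refine add_le_add (hM c _ fun x hx => ?_) (hN c _ fun x hx => ?_)
    · rw [Finset.mem_filter] at hx
      exact ⟨hS x hx.1, hx.2⟩
    · rw [Finset.mem_filter] at hx
      have h := (hS x hx.1).1 _ hab
      rw [eval₂_mul] at h
      exact ⟨hS x hx.1, (mul_eq_zero.1 h).resolve_left hx.2⟩

/-- A real zero set cut out by polynomials of bounded degree has boundedly many isolated points. -/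
theorem exists_accPt_zeros_of_lt_card (σ : Type) [Fintype σ] (D : ℕ) :
    ∃ N : ℕ, ∀ (P : Set (MvPolynomial σ ℝ)), (∀ p ∈ P, p.totalDegree ≤ D) →
      ∀ S : Finset (σ → ℝ), (∀ x ∈ S, ∀ p ∈ P, eval x p = 0) → N < S.card →
        ∃ x ∈ S, AccPt x (𝓟 {x | ∀ p ∈ P, eval x p = 0}) := by
  classical
  let E : Finset (σ →₀ ℕ) := Finset.Iic (Finsupp.equivFunOnFinite.symm fun _ => 2 * D)
  let F : MvPolynomial σ (MvPolynomial E ℚ) := ∑ e : E, monomial e.1 (X e)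
  obtain ⟨N, hN⟩ := exists_card_isolated_fiberZeros_le (Ideal.span {F})
  refine ⟨N, fun P hP S hS hcard => ?_⟩
  obtain ⟨T, hTP, hT⟩ := Submodule.fg_span_iff_fg_span_finset_subset P |>.1
    (IsNoetherian.noetherian (Ideal.span P))
  let f : MvPolynomial σ ℝ := ∑ p ∈ T, p ^ 2
  have hf : f.totalDegree ≤ 2 * D := totalDegree_finsetSum_le fun p hp =>
    (totalDegree_pow _ _).trans (Nat.mul_le_mul_left 2 (hP p (hTP hp)))
  let c : MvPolynomial E ℚ →+* ℝ := eval₂Hom (algebraMap ℚ ℝ) fun e => coeff e.1 f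
  have hF : ∀ x, eval₂ c x F = eval x f := fun x => by
    have hsupp : f.support ⊆ E := fun e he => by
      refine Finset.mem_Iic.2 fun i => ?_
      exact ((monomial_le_degreeOf i he).trans (degreeOf_le_totalDegree f i)).trans hf
    simp only [F, eval₂_sum, eval₂_monomial, c, coe_eval₂Hom, eval₂_X]
    rw [eval_eq, Finset.sum_coe_sort E fun e => coeff e f * e.prod fun n k => x n ^ k]
    refine (Finset.sum_subset hsupp fun e _ he => ?_).symm
    rw [notMem_support_iff.1 he, zero_mul]
  have hZ : fiberZeros c (Ideal.span {F}) = {x | ∀ p ∈ P, eval x p = 0} := by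
    ext x
    have h1 : x ∈ fiberZeros c (Ideal.span {F}) ↔ eval₂ c x F = 0 := by
      change Ideal.span {F} ≤ RingHom.ker (eval₂Hom c x) ↔ _
      rw [Ideal.span_singleton_le_iff_mem, RingHom.mem_ker, coe_eval₂Hom]
    have h2 : (∀ p ∈ P, eval x p = 0) ↔ ∀ p ∈ T, eval x p = 0 := by
      change P ⊆ RingHom.ker (eval x) ↔ (T : Set (MvPolynomial σ ℝ)) ⊆ RingHom.ker (eval x)
      rw [← Ideal.span_le, ← Ideal.span_le]
      exact Eq.to_iff (congrArg (· ≤ RingHom.ker (eval x)) hT)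
    rw [h1, hF, Set.mem_ofPred_eq, h2]
    simp only [f, map_sum, map_pow]
    rw [Finset.sum_eq_zero_iff_of_nonneg fun _ _ => sq_nonneg _]
    simp
  by_contra! h
  refine hcard.not_ge (hN c S fun x hx => ?_)
  rw [hZ]
  exact ⟨hS x hx, h x hx⟩

/-- Freezing all points but the `i`-th one to their positions in `y`. -/
noncomputable def freeze {ι κ : Type*} [DecidableEq ι] (i : ι) (y : ι → κ → ℝ) :
    MvPolynomial (ι × κ) ℝ →ₐ[ℝ] MvPolynomial κ ℝ :=
  aeval fun v => if v.1 = i then X v.2 else MvPolynomial.C (y v.1 v.2)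

theorem eval_freeze {ι κ : Type*} [DecidableEq ι] (i : ι) (y : ι → κ → ℝ) (x : κ → ℝ)
    (p : MvPolynomial (ι × κ) ℝ) :
    eval x (freeze i y p) = eval (fun v => Function.update y i x v.1 v.2) p := by
  rw [freeze, ← coe_aeval_eq_eval, RingHom.coe_coe, ← AlgHom.comp_apply, comp_aeval,
    ← coe_aeval_eq_eval, RingHom.coe_coe]
  congr 2
  funext v
  by_cases h : v.1 = i
  · simp [h]
  · simp [h]

theorem totalDegree_freeze_le {ι κ : Type*} [DecidableEq ι] (i : ι) (y : ι → κ → ℝ)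
    (p : MvPolynomial (ι × κ) ℝ) : (freeze i y p).totalDegree ≤ p.totalDegree := by
  rw [freeze, aeval_def, eval₂_eq]
  refine totalDegree_finsetSum_le fun m hm => ?_
  refine (totalDegree_mul _ _).trans ?_
  rw [algebraMap_eq, totalDegree_C, zero_add]
  refine (totalDegree_finsetProd _ _).trans (le_trans ?_ (le_totalDegree hm))
  refine Finset.sum_le_sum fun v _ => (totalDegree_pow _ _).trans ?_
  refine (Nat.mul_le_mul_left _ ?_).trans (mul_one _).le
  split_ifs
  · simp
  · simp

theorem exists_enlargement_accPt {ι κ : Type*} [DecidableEq ι] {D N : ℕ}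
    (hN : ∀ P : Set (MvPolynomial κ ℝ), (∀ p ∈ P, p.totalDegree ≤ D) →
      ∀ S : Finset (κ → ℝ), (∀ x ∈ S, ∀ p ∈ P, eval x p = 0) → N < S.card →
        ∃ x ∈ S, AccPt x (𝓟 {x | ∀ p ∈ P, eval x p = 0}))
    (P : Set (MvPolynomial (ι × κ) ℝ)) (hP : ∀ p ∈ P, p.totalDegree ≤ D)
    (A : ι → Finset (κ → ℝ)) (hA : ∀ i, N < (A i).card)
    (hAP : ∀ a : ι → κ → ℝ, (∀ i, a i ∈ A i) → ∀ p ∈ P, eval (fun v => a v.1 v.2) p = 0)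
    (s : Finset ι) :
    ∃ Y : ι → Set (κ → ℝ), (∀ i, (A i : Set (κ → ℝ)) ⊆ Y i) ∧
      (∀ i ∈ s, ∃ a ∈ A i, AccPt a (𝓟 (Y i))) ∧
      ∀ y : ι → κ → ℝ, (∀ i, y i ∈ Y i) → ∀ p ∈ P, eval (fun v => y v.1 v.2) p = 0 := by
  induction s using Finset.induction_on with
  | empty => exact ⟨fun i => A i, fun _ => subset_rfl, by simp, hAP⟩
  | insert i s _ ih =>
    obtain ⟨Y, hAY, hacc, hY⟩ := ih
    let R : Set (MvPolynomial κ ℝ) :=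
      {r | ∃ y : ι → κ → ℝ, (∀ j, y j ∈ Y j) ∧ ∃ p ∈ P, freeze i y p = r}
    let Z : Set (κ → ℝ) := {x | ∀ r ∈ R, eval x r = 0}
    have hYZ : Y i ⊆ Z := by
      rintro x hx r ⟨y, hy, p, hp, rfl⟩
      rw [eval_freeze]
      refine hY _ (fun j => ?_) p hp
      obtain rfl | hj := eq_or_ne j i
      · simpa using hx
      · simpa [hj] using hy j
    obtain ⟨a, haA, ha⟩ := hN R
      (by rintro r ⟨y, -, p, hp, rfl⟩; exact (totalDegree_freeze_le i y p).trans (hP p hp))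
      (A i) (fun x hx => hYZ (hAY i hx)) (hA i)
    have hYY : ∀ j, Y j ⊆ Function.update Y i Z j := fun j => by
      obtain rfl | hj := eq_or_ne j i
      · simpa using hYZ
      · simp [hj]
    refine ⟨Function.update Y i Z, fun j => (hAY j).trans (hYY j), fun j hj => ?_,
      fun y hy p hp => ?_⟩
    · obtain rfl | hj := Finset.mem_insert.1 hj
      · exact ⟨a, haA, by simpa using ha⟩
      · obtain ⟨b, hb, hb'⟩ := hacc j hj
        exact ⟨b, hb, hb'.mono (principal_mono.2 (hYY j))⟩
    · obtain ⟨b, hb⟩ : (A i).Nonempty := Finset.card_pos.1 (by have := hA i; omega)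
      have hyi : y i ∈ Z := by simpa using hy i
      have h := hyi _ ⟨Function.update y i b, fun j => ?_, p, hp, rfl⟩
      · rwa [eval_freeze, Function.update_idem, Function.update_eq_self] at h
      · obtain rfl | hj := eq_or_ne j i
        · simpa using hAY j hb
        · simpa [hj] using hy j

end MvPolynomial

end

/-- effective compactness for the multipartite setting: for all positive
`d, D, k` there is `N` such that for all finite sets `P`, `Q` of polynomials in the
`d·k` coordinates of `k` points of `ℝ^d`, all of total degree at most `D`, the
predicate `Φ(x₁,…,x_k) := (∀ p ∈ P, p = 0) ∧ (∀ q ∈ Q, q > 0)` holds everywhere on a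
product of `k` sets of cardinality `N` iff it holds everywhere on a product of `k`
infinite sets. -/
theorem stmt5 (d D k : ℕ) (hd : 0 < d) (hD : 0 < D) (hk : 0 < k) :
    ∃ N : ℕ, ∀ P Q : Finset (MvPolynomial (Fin k × Fin d) ℝ),
      (∀ p ∈ P, p.totalDegree ≤ D) → (∀ q ∈ Q, q.totalDegree ≤ D) →
      ((∃ A : Fin k → Finset (Fin d → ℝ), (∀ i, (A i).card = N) ∧
          ∀ a : Fin k → Fin d → ℝ, (∀ i, a i ∈ A i) →
            (∀ p ∈ P, MvPolynomial.eval (fun v => a v.1 v.2) p = 0) ∧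
            (∀ q ∈ Q, 0 < MvPolynomial.eval (fun v => a v.1 v.2) q)) ↔
       (∃ X : Fin k → Set (Fin d → ℝ), (∀ i, (X i).Infinite) ∧
          ∀ x : Fin k → Fin d → ℝ, (∀ i, x i ∈ X i) →
            (∀ p ∈ P, MvPolynomial.eval (fun v => x v.1 v.2) p = 0) ∧
            (∀ q ∈ Q, 0 < MvPolynomial.eval (fun v => x v.1 v.2) q))) := by
  classical
  obtain ⟨N, hN⟩ := MvPolynomial.exists_accPt_zeros_of_lt_card (Fin d) D
  refine ⟨N + 1, fun P Q hP _ => ⟨?_, ?_⟩⟩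
  · rintro ⟨A, hcard, hA⟩
    obtain ⟨Y, hAY, hacc, hY⟩ := MvPolynomial.exists_enlargement_accPt hN (P : Set _) hP A
      (fun i => by have := hcard i; omega) (fun a ha => (hA a ha).1) Finset.univ
    choose a haA ha using fun i => hacc i (Finset.mem_univ i)
    have hQ : ∀ᶠ x : Fin k → Fin d → ℝ in nhds a,
        ∀ q ∈ Q, 0 < MvPolynomial.eval (fun v => x v.1 v.2) q := by
      rw [Filter.eventually_all_finset]
      intro q hq
      have hcont : Continuous fun x : Fin k → Fin d → ℝ =>
          MvPolynomial.eval (fun v => x v.1 v.2) q :=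
        (MvPolynomial.continuous_eval q).comp (by fun_prop)
      exact hcont.continuousAt.eventually_const_lt ((hA a haA).2 q hq)
    rw [Filter.Eventually, nhds_pi, Filter.mem_pi'] at hQ
    obtain ⟨I, U, hU, hUQ⟩ := hQ
    refine ⟨fun i => Y i ∩ U i, fun i => ?_, fun x hx => ⟨?_, ?_⟩⟩
    · have h : AccPt (a i) (Filter.principal (Y i ∩ U i)) := by
        have hi := ha i
        rw [accPt_iff_frequently] at hi ⊢
        exact (hi.and_eventually (hU i)).mono fun y hy => ⟨hy.1.1, hy.1.2, hy.2⟩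
      exact .of_accPt h
    · exact hY x fun i => (hx i).1
    · exact hUQ fun i _ => (hx i).2
  · rintro ⟨X, hX, hXΦ⟩
    choose A hAX hAcard using fun i => (hX i).exists_subset_card_eq (N + 1)
    exact ⟨A, hAcard, fun a ha => hXΦ a fun i => hAX i (ha i)⟩
end

section
/- There exists a constant R₀ such that for every real R ≥ R₀ and every n ≥ 1, setting N := 2^(R^(2n)) (rounded up to an integer), every sequence (a₁,…,a_N) of real numbers admits an R-growing sequence b = (b₁,…,bₙ) of length n, real numbers A and B, and a transformation f ∈ {f₁, f₂} with f₁(x,X,Y) := X + Y·x and f₂(x,X,Y) := X + Y/x, such that either (f(b₁,A,B), f(b₂,A,B), …, f(bₙ,A,B)) or (f(bₙ,A,B), f(b_{n−1},A,B), …, f(b₁,A,B)) is a subsequence of (a₁,…,a_N). -/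
/-- A sequence `b` is `R`-growing if `b₁ ≥ R` and `b_{i+1} ≥ b_i ^ R`
(real exponentiation). -/
def RGrowing (R : ℝ) {n : ℕ} (b : Fin n → ℝ) : Prop :=
  (∀ h : 0 < n, R ≤ b ⟨0, h⟩) ∧
  ∀ i : ℕ, ∀ h : i + 1 < n, b ⟨i, Nat.lt_of_succ_lt h⟩ ^ R ≤ b ⟨i + 1, h⟩

/-- The two-parametric transformation `f₁(x, X, Y) = X + Y·x`. -/
noncomputable def f₁ (x X Y : ℝ) : ℝ := X + Y * x

/-- The two-parametric transformation `f₂(x, X, Y) = X + Y/x`. -/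
noncomputable def f₂ (x X Y : ℝ) : ℝ := X + Y / x

/-- `Spreads R T S σ p` (with `σ = ±1`): some `p + 1` points of `S` lie to the left (`σ = 1`) or to
the right (`σ = -1`) of a point `C ∈ S`, at distances exceeding `T` and growing by factors of at
least `R`. -/
def Spreads (R T : ℝ) (S : Finset ℝ) (σ : ℝ) (p : ℕ) : Prop :=
  ∃ C ∈ S, ∃ s : ℕ → ℝ, (∀ i ≤ p, s i ∈ S) ∧ T < σ * (C - s 0) ∧
    ∀ i < p, R * (σ * (C - s i)) ≤ σ * (C - s (i + 1))

theorem Spreads.extend {R T : ℝ} {S S' : Finset ℝ} {σ e : ℝ} {p : ℕ} (hS : S' ⊆ S) (he : e ∈ S)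
    (hfar : ∀ C ∈ S', ∀ s ∈ S', R * (σ * (C - s)) ≤ σ * (C - e))
    (h : Spreads R T S' σ p) : Spreads R T S σ (p + 1) := by
  obtain ⟨C, hC, s, hs, hT, hg⟩ := h
  refine ⟨C, hS hC, Function.update s (p + 1) e, fun i hi => ?_, ?_, fun i hi => ?_⟩
  · rcases Nat.lt_or_ge p i with h | h
    · obtain rfl : i = p + 1 := by omega
      simpa using he
    · rw [Function.update_of_ne (by omega)]
      exact hS (hs i h)
  · rwa [Function.update_of_ne (by omega)]
  · rw [Function.update_of_ne (by omega)]
    rcases Nat.lt_or_ge i p with h | h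
    · rw [Function.update_of_ne (by omega)]
      exact hg i h
    · obtain rfl : i = p := by omega
      simpa using hfar C hC _ (hs i le_rfl)

theorem Spreads.mono {R T : ℝ} {S S' : Finset ℝ} {σ : ℝ} {p : ℕ} (hS : S' ⊆ S)
    (h : Spreads R T S' σ p) : Spreads R T S σ p := by
  obtain ⟨C, hC, s, hs, hT, hg⟩ := h
  exact ⟨C, hS hC, s, fun i hi => hS (hs i hi), hT, hg⟩

/-- Points at comparable distances from `e` contain a cluster of small relative diameter. -/
theorem exists_cluster {R : ℝ} (hR : 1 < R) {δ D σ e : ℝ} (hδ : 0 < δ) (hδ1 : δ ≤ 1) (hD : 0 < D)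
    {S : Finset ℝ} (hlo : ∀ z ∈ S, δ * D ≤ σ * (z - e)) (hhi : ∀ z ∈ S, σ * (z - e) ≤ D)
    {K : ℝ} (hK : (R + 1) * Real.log δ⁻¹ + 1 ≤ K) {m : ℝ} (hm : 0 ≤ m) (hcard : K * m ≤ S.card) :
    ∃ S' ⊆ S, m ≤ S'.card ∧ ∀ C ∈ S', ∀ s ∈ S', R * (σ * (C - s)) ≤ σ * (C - e) := by
  classical
  set l := Real.log (1 + R⁻¹)
  have hR0 : 0 < R := by linarith
  have hl0 : (R + 1)⁻¹ ≤ l := by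
    have := Real.one_sub_inv_le_log_of_pos (show 0 < 1 + R⁻¹ by positivity)
    refine le_trans (le_of_eq ?_) this
    field_simp
    ring
  have hlpos : 0 < l := lt_of_lt_of_le (by positivity) hl0
  have hlogδ : 0 ≤ Real.log δ⁻¹ := Real.log_nonneg ((one_le_inv₀ hδ).2 hδ1)
  let c : ℝ → ℕ := fun z => ⌊Real.log (D / (σ * (z - e))) / l⌋₊
  have hpos : ∀ z ∈ S, 0 < σ * (z - e) := fun z hz => lt_of_lt_of_le (by positivity) (hlo z hz)
  have hlog : ∀ z ∈ S, 0 ≤ Real.log (D / (σ * (z - e))) := fun z hz =>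
    Real.log_nonneg ((one_le_div (hpos z hz)).2 (hhi z hz))
  set k := ⌊(R + 1) * Real.log δ⁻¹⌋₊ + 1 with hk
  have hkK : (k : ℝ) ≤ K := by
    refine le_trans ?_ hK
    rw [hk]
    push_cast
    have := Nat.floor_le (show 0 ≤ (R + 1) * Real.log δ⁻¹ by positivity)
    linarith
  have hmaps : ∀ z ∈ S, c z ∈ Finset.range k := by
    intro z hz
    rw [Finset.mem_range, hk, Nat.lt_succ_iff]
    apply Nat.floor_le_floor
    have h1 : Real.log (D / (σ * (z - e))) ≤ Real.log δ⁻¹ := by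
      apply Real.log_le_log (div_pos hD (hpos z hz))
      rw [div_le_iff₀ (hpos z hz)]
      have := hlo z hz
      rw [← div_eq_inv_mul, le_div_iff₀ hδ]
      linarith
    rw [div_le_iff₀ hlpos]
    have h2 : 1 ≤ (R + 1) * l := by
      rwa [inv_le_iff_one_le_mul₀' (by positivity)] at hl0
    nlinarith
  obtain ⟨i, -, hi⟩ := Finset.exists_le_card_fiber_of_nsmul_le_card_of_maps_to (b := m) hmaps
    ⟨0, by simp [hk]⟩ (by
      rw [Finset.card_range, nsmul_eq_mul]
      exact (mul_le_mul_of_nonneg_right hkK hm).trans hcard)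
  refine ⟨_, Finset.filter_subset _ _, hi, fun C hC s hs => ?_⟩
  rw [Finset.mem_filter] at hC hs
  have hC0 := hpos C hC.1
  have hs0 := hpos s hs.1
  have h1 := Nat.lt_floor_add_one (Real.log (D / (σ * (s - e))) / l)
  have h2 := Nat.floor_le (div_nonneg (hlog C hC.1) hlpos.le)
  have e1 : ⌊Real.log (D / (σ * (s - e))) / l⌋₊ = i := hs.2
  have e2 : ⌊Real.log (D / (σ * (C - e))) / l⌋₊ = i := hC.2
  rw [e1, div_lt_iff₀ hlpos, Real.log_div hD.ne' hs0.ne'] at h1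
  rw [e2, le_div_iff₀ hlpos, Real.log_div hD.ne' hC0.ne'] at h2
  have h3 : Real.log (σ * (C - e)) ≤ Real.log ((1 + R⁻¹) * (σ * (s - e))) := by
    rw [Real.log_mul (by positivity) hs0.ne']
    linarith
  rw [Real.log_le_log_iff hC0 (by positivity)] at h3
  have h4 := mul_le_mul_of_nonneg_left h3 hR0.le
  have h5 : R * ((1 + R⁻¹) * (σ * (s - e))) = (R + 1) * (σ * (s - e)) := by
    field_simp
  rw [h5] at h4
  rcases le_total (σ * (s - e)) (σ * (C - e)) with h6 | h6 <;> nlinarith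

/-- A large set `S` of reals, all of whose subsets of size `h₀` have diameter exceeding `T`, contains
points at growing distances from some `C ∈ S`, on the left of `C` or on its right. The points of
`S` in the upper `255 / 256` of its range are clustered by their distance to `min S`, the others by
their distance to `max S`. -/
theorem spreads_or_spreads {R T h₀ : ℝ} (hR : 1 < R) (hh : 1 < h₀) (p q : ℕ) (S : Finset ℝ)
    (hsep : ∀ S' ⊆ S, h₀ ≤ S'.card → ∃ u ∈ S', ∃ v ∈ S', T < v - u)
    (hcard : h₀ * (2 * (6 * R + 7)) ^ p * (2 * (R / 255 + 2)) ^ q ≤ S.card) :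
    Spreads R T S 1 p ∨ Spreads R T S (-1) q := by
  classical
  have hx : 1 ≤ 2 * (6 * R + 7) := by linarith
  have hy : 1 ≤ 2 * (R / 255 + 2) := by linarith
  have hh0 : h₀ ≤ S.card := by
    refine le_trans ?_ hcard
    have h1 := one_le_pow₀ hx (n := p)
    have h2 := one_le_pow₀ hy (n := q)
    rw [mul_assoc]
    exact le_mul_of_one_le_right (by linarith) (one_le_mul_of_one_le_of_one_le h1 h2)
  induction hr : p + q generalizing p q S with
  | zero =>
    obtain ⟨rfl, rfl⟩ : p = 0 ∧ q = 0 := by omega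
    obtain ⟨u, hu, v, hv, huv⟩ := hsep S subset_rfl hh0
    exact Or.inl ⟨v, hv, fun _ => u, fun _ _ => hu, by simpa using huv, by simp⟩
  | succ r ih =>
    obtain ⟨u, hu, v, hv, huv⟩ := hsep S subset_rfl hh0
    rcases p with _ | p
    · exact Or.inl ⟨v, hv, fun _ => u, fun _ _ => hu, by simpa using huv, by simp⟩
    rcases q with _ | q
    · exact Or.inr ⟨u, hu, fun _ => v, fun _ _ => hv, by simpa using huv, by simp⟩
    have hone : 1 < S.card := by exact_mod_cast hh.trans_le hh0
    have hne : S.Nonempty := Finset.card_pos.1 (by omega)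
    set a := S.min' hne
    set b := S.max' hne
    have hD : 0 < b - a := sub_pos.2 (Finset.min'_lt_max'_of_card S hone)
    have hlow : ∀ z ∈ S, a ≤ z := fun z hz => Finset.min'_le S z hz
    have hup : ∀ z ∈ S, z ≤ b := fun z hz => Finset.le_max' S z hz
    set P := S.filter (fun z => 1 / 256 * (b - a) ≤ z - a)
    set Q := S.filter (fun z => ¬ 1 / 256 * (b - a) ≤ z - a)
    have hPQ : (P.card : ℝ) + Q.card = S.card := by
      exact_mod_cast Finset.card_filter_add_card_filter_not (s := S) _
    set x := 2 * (6 * R + 7) with hxd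
    set y := 2 * (R / 255 + 2) with hyd
    set m₁ := h₀ * x ^ p * y ^ (q + 1) with hm₁
    set m₂ := h₀ * x ^ (p + 1) * y ^ q with hm₂
    have hm₁0 : 0 ≤ m₁ := by positivity
    have hm₂0 : 0 ≤ m₂ := by positivity
    have hsum : (6 * R + 7) * m₁ + (R / 255 + 2) * m₂ ≤ P.card + Q.card := by
      rw [hPQ]
      refine le_trans (le_of_eq ?_) hcard
      rw [hm₁, hm₂, show 6 * R + 7 = x / 2 by rw [hxd]; ring,
        show R / 255 + 2 = y / 2 by rw [hyd]; ring]
      ring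
    have hbig : ∀ k l : ℕ, h₀ ≤ h₀ * x ^ k * y ^ l := fun k l => by
      have h1 := one_le_pow₀ hx (n := k)
      have h2 := one_le_pow₀ hy (n := l)
      rw [mul_assoc]
      exact le_mul_of_one_le_right (by linarith) (one_le_mul_of_one_le_of_one_le h1 h2)
    have hlog256 : Real.log (1 / 256 : ℝ)⁻¹ ≤ 6 := by
      have h := Real.log_two_lt_d9
      rw [show (1 / 256 : ℝ)⁻¹ = 2 ^ 8 by norm_num, Real.log_pow]
      push_cast
      linarith
    have hlog255 : Real.log (255 / 256 : ℝ)⁻¹ ≤ 1 / 255 := by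
      have h := Real.log_le_sub_one_of_pos (show (0 : ℝ) < (255 / 256 : ℝ)⁻¹ by norm_num)
      norm_num at h ⊢
      linarith
    rcases le_or_gt ((6 * R + 7) * m₁) P.card with h | h
    · obtain ⟨S', hS', hc, hfar⟩ := exists_cluster hR (δ := 1 / 256) (σ := 1) (e := a)
        (by norm_num) (by norm_num) hD (S := P) (fun z hz => by
          simpa using (Finset.mem_filter.1 hz).2)
        (fun z hz => by
          have := hup z (Finset.mem_filter.1 hz).1
          linarith) (K := 6 * R + 7) (by nlinarith) hm₁0 h
      have hsub : S' ⊆ S := hS'.trans (Finset.filter_subset _ _)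
      rcases ih p (q + 1) S' (fun U hU => hsep U (hU.trans hsub)) hc ((hbig _ _).trans hc)
        (by omega) with h | h
      · exact Or.inl (h.extend hsub (Finset.min'_mem _ _) hfar)
      · exact Or.inr (h.mono hsub)
    · obtain ⟨S', hS', hc, hfar⟩ := exists_cluster hR (δ := 255 / 256) (σ := -1) (e := b)
        (by norm_num) (by norm_num) hD (S := Q) (fun z hz => by
          have := (Finset.mem_filter.1 hz).2
          linarith)
        (fun z hz => by
          have := hlow z (Finset.mem_filter.1 hz).1
          linarith) (K := R / 255 + 2) (by nlinarith) hm₂0 (by linarith)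
      have hsub : S' ⊆ S := hS'.trans (Finset.filter_subset _ _)
      rcases ih (p + 1) q S' (fun U hU => hsep U (hU.trans hsub)) hc ((hbig _ _).trans hc)
        (by omega) with h | h
      · exact Or.inl (h.mono hsub)
      · exact Or.inr (h.extend hsub (Finset.max'_mem _ _) hfar)

/-- The Erdős–Szekeres theorem. -/
theorem exists_strictMonoOn_or_strictAntiOn {α β : Type*} [LinearOrder α] [LinearOrder β]
    {f : α → β} (k m : ℕ) (s : Finset α) (hf : Set.InjOn f s) (hs : k * m < s.card) :
    ∃ t ⊆ s, (k < t.card ∧ StrictMonoOn f t) ∨ (m < t.card ∧ StrictAntiOn f t) := by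
  classical
  induction k generalizing s with
  | zero =>
    obtain ⟨x, hx⟩ := Finset.card_pos.1 (show 0 < s.card by omega)
    exact ⟨{x}, by simpa using hx, Or.inl (by simp)⟩
  | succ k ih =>
    set J := s.filter (fun i => ∀ j ∈ s, j < i → f i ≤ f j)
    have hJs : J ⊆ s := Finset.filter_subset _ _
    rcases Nat.lt_or_ge m J.card with h | h
    · refine ⟨J, hJs, Or.inr ⟨h, fun i hi j hj hij => ?_⟩⟩
      have hi' := hJs hi
      have hj' := Finset.mem_filter.1 hj
      exact lt_of_le_of_ne (hj'.2 i hi' hij) fun e => hij.ne' (hf hj'.1 hi' e)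
    · have hc : (s \ J).card = s.card - J.card := Finset.card_sdiff_of_subset hJs
      obtain ⟨t, ht, h⟩ := ih (s \ J) (hf.mono (by simp))
        (by rw [hc, Nat.lt_sub_iff_add_lt]; rw [Nat.succ_mul] at hs; omega)
      have hts : t ⊆ s := ht.trans Finset.sdiff_subset
      rcases h with ⟨hk, hmono⟩ | h
      · have hne : t.Nonempty := Finset.card_pos.1 (by omega)
        have hmem := Finset.mem_sdiff.1 (ht (t.min'_mem hne))
        obtain ⟨j, hj, hji, hfj⟩ : ∃ j ∈ s, j < t.min' hne ∧ f j < f (t.min' hne) := by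
          by_contra! h
          exact hmem.2 (Finset.mem_filter.2 ⟨hmem.1, h⟩)
        have hlt : ∀ i ∈ t, j < i := fun i hi => hji.trans_le (t.min'_le i hi)
        have hflt : ∀ i ∈ t, f j < f i := fun i hi =>
          hfj.trans_le (hmono.monotoneOn (t.min'_mem hne) hi (t.min'_le i hi))
        refine ⟨insert j t, Finset.insert_subset hj hts, Or.inl ⟨?_, ?_⟩⟩
        · rw [Finset.card_insert_of_notMem fun h => (hlt j h).false]
          omega
        · intro u hu v hv huv
          rw [Finset.mem_coe, Finset.mem_insert] at hu hv
          rcases hu with rfl | hu <;> rcases hv with rfl | hv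
          · exact absurd huv (lt_irrefl _)
          · exact hflt v hv
          · exact absurd (huv.trans (hlt u hu)) (lt_irrefl _)
          · exact hmono hu hv huv
      · exact ⟨t, hts, Or.inr h⟩

theorem RGrowing.strictMono {R : ℝ} (hR : 1 < R) {n : ℕ} {b : Fin n → ℝ} (hb : RGrowing R b) :
    (∀ j, 1 < b j) ∧ StrictMono b := by
  have hone : ∀ i (h : i < n), 1 < b ⟨i, h⟩ := by
    intro i
    induction i with
    | zero => exact fun h => hR.trans_le (hb.1 h)
    | succ i ih =>
      exact fun h => (Real.one_lt_rpow (ih (by omega)) (by linarith)).trans_le (hb.2 i h)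
  refine ⟨fun j => hone j j.2, ?_⟩
  rcases n with _ | n
  · exact fun i => i.elim0
  refine Fin.strictMono_iff_lt_succ.2 fun i => ?_
  refine lt_of_lt_of_le ?_ (hb.2 i (by omega))
  exact Real.self_lt_rpow_of_one_lt (hone i (by omega)) hR

theorem rGrowing_exp {R : ℝ} {n : ℕ} {L : ℕ → ℝ} (h0 : R ≤ Real.exp (L 0))
    (h : ∀ i, i + 1 < n → R * L i ≤ L (i + 1)) :
    RGrowing R fun j : Fin n => Real.exp (L j) := by
  refine ⟨fun _ => h0, fun i hi => ?_⟩
  rw [← Real.exp_mul, mul_comm]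
  exact Real.exp_le_exp.2 (h i hi)

theorem add_mul_log_two_le_log {M : ℕ} {d : ℕ → ℝ} (h0 : 0 < d 0)
    (hd : ∀ i < M, 2 * d i ≤ d (i + 1)) {i j : ℕ} (hij : i ≤ j) (hj : j ≤ M) :
    0 < d i ∧ Real.log (d i) + (j - i : ℝ) * Real.log 2 ≤ Real.log (d j) := by
  have hpos : ∀ i ≤ M, 0 < d i := by
    intro i
    induction i with
    | zero => exact fun _ => h0
    | succ i ih => exact fun hi => by linarith [ih (by omega), hd i hi]
  refine ⟨hpos i (hij.trans hj), ?_⟩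
  induction j, hij using Nat.le_induction with
  | base => simp
  | succ j hij ih =>
    have hdj := hpos j (by omega)
    have h := Real.log_le_log (by positivity) (hd j hj)
    rw [Real.log_mul two_ne_zero hdj.ne'] at h
    push_cast
    linarith [ih (by omega)]

theorem exists_doubling {M : ℕ} {S : Finset ℝ} (hS : 2 ^ (8 * M + 1) ≤ S.card) :
    ∃ σ : ℝ, (σ = 1 ∨ σ = -1) ∧ Spreads 2 0 S σ M := by
  have hsep : ∀ S' ⊆ S, (2 : ℝ) ≤ S'.card → ∃ u ∈ S', ∃ v ∈ S', 0 < v - u := by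
    intro S' _ h
    have h1 : 1 < S'.card := by exact_mod_cast h
    have hne : S'.Nonempty := Finset.card_pos.1 (by omega)
    exact ⟨_, S'.min'_mem hne, _, S'.max'_mem hne,
      sub_pos.2 (Finset.min'_lt_max'_of_card S' h1)⟩
  have hS' : (2 : ℝ) ^ (8 * M + 1) ≤ S.card := by exact_mod_cast hS
  rcases spreads_or_spreads one_lt_two one_lt_two M M S hsep (by
    refine le_trans ?_ hS'
    rw [mul_assoc, ← mul_pow, pow_succ, pow_mul, mul_comm]
    gcongr
    norm_num) with h | h
  · exact ⟨1, Or.inl rfl, h⟩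
  · exact ⟨-1, Or.inr rfl, h⟩

theorem exists_rGrowing_mem {R : ℝ} (hR : 1000 ≤ R) {n M : ℕ} (hM : R ^ (2 * n + 1) ≤ M)
    {S : Finset ℝ} (hS : 2 ^ (8 * M + 1) ≤ S.card) :
    ∃ b : Fin (n + 1) → ℝ, RGrowing R b ∧ ∃ A B : ℝ, B ≠ 0 ∧ ∃ f : ℝ → ℝ → ℝ → ℝ,
      (f = f₁ ∨ f = f₂) ∧ ∀ j, f (b j) A B ∈ S := by
  classical
  obtain ⟨σ, hσ, A, -, s, hs, h0, hg⟩ := exists_doubling hS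
  set d : ℕ → ℝ := fun i => σ * (A - s i) with hd
  have hl2 := Real.log_two_gt_d9
  have hlog : ∀ i j, i ≤ j → j ≤ M → 0 < d i ∧
      Real.log (d i) + (j - i : ℝ) * Real.log 2 ≤ Real.log (d j) :=
    fun i j hij hj => add_mul_log_two_le_log h0 hg hij hj
  set y : ℕ → ℝ := fun i => Real.log (d i) with hy
  have hyinj : Set.InjOn y (Finset.range (M + 1)) := by
    have key : ∀ i j, i < j → j ≤ M → y i < y j := fun i j hij hj => by
      have h1 := (hlog i j hij.le hj).2
      have h2 : (0 : ℝ) < (j : ℝ) - i := sub_pos.2 (by exact_mod_cast hij)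
      have h3 : 0 < ((j : ℝ) - i) * Real.log 2 := by positivity
      simp only [hy]
      linarith
    intro i hi j hj hij
    simp only [Finset.coe_range, Set.mem_Iio] at hi hj
    by_contra hne
    rcases Nat.lt_or_gt_of_ne hne with h | h
    · exact (key i j h (by omega)).ne hij
    · exact (key j i h (by omega)).ne hij.symm
  have hcard : ((Finset.range (M + 1)).image y).card = M + 1 := by
    rw [Finset.card_image_of_injOn hyinj, Finset.card_range]
  have hsep : ∀ S' ⊆ (Finset.range (M + 1)).image y, R ≤ S'.card →
      ∃ u ∈ S', ∃ v ∈ S', Real.log R < v - u := by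
    intro S' hS' hc
    obtain ⟨I, hI, rfl⟩ := Finset.subset_image_iff.1 hS'
    rw [Finset.card_image_of_injOn (hyinj.mono hI)] at hc
    have hne : I.Nonempty := by
      rw [← Finset.card_pos, ← Nat.cast_pos (α := ℝ)]
      linarith
    have hmax := I.max'_mem hne
    have hle := I.min'_le _ hmax
    have hwidth : I.card ≤ I.max' hne + 1 - I.min' hne := by
      rw [← Nat.card_Icc]
      exact Finset.card_le_card fun i hi => Finset.mem_Icc.2 ⟨I.min'_le i hi, I.le_max' i hi⟩
    have hwidth' : (I.card : ℝ) ≤ I.max' hne + 1 - I.min' hne := by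
      rw [Nat.le_sub_iff_add_le (by omega)] at hwidth
      rw [le_sub_iff_add_le]
      exact_mod_cast hwidth
    have h1 := (hlog _ _ hle (Nat.lt_succ_iff.1 (Finset.mem_range.1 (hI hmax)))).2
    refine ⟨_, Finset.mem_image_of_mem y (I.min'_mem hne), _, Finset.mem_image_of_mem y hmax, ?_⟩
    have h2 : Real.log R ≤ R / 4 + 1 := by
      have h := Real.log_le_sub_one_of_pos (show 0 < R / 4 by linarith)
      rw [Real.log_div (by linarith) (by norm_num), show (4 : ℝ) = 2 ^ 2 by norm_num,
        Real.log_pow] at h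
      push_cast at h
      linarith [Real.log_two_lt_d9]
    simp only [hy] at h1 ⊢
    nlinarith
  have hbound : R * (2 * (6 * R + 7)) ^ n * (2 * (R / 255 + 2)) ^ n ≤
      ((Finset.range (M + 1)).image y).card := by
    rw [hcard, mul_assoc, ← mul_pow]
    push_cast
    have h1 : 2 * (6 * R + 7) * (2 * (R / 255 + 2)) ≤ R ^ 2 := by nlinarith
    calc _ ≤ R * (R ^ 2) ^ n := by gcongr
      _ = R ^ (2 * n + 1) := by rw [← pow_mul]; ring
      _ ≤ _ := by linarith
  have hval : ∀ z ∈ (Finset.range (M + 1)).image y, A - σ * Real.exp z ∈ S := by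
    intro z hz
    obtain ⟨i, hi, rfl⟩ := Finset.mem_image.1 hz
    have hi' : i ≤ M := Nat.lt_succ_iff.1 (Finset.mem_range.1 hi)
    rw [Real.exp_log (hlog i i le_rfl hi').1]
    have hσσ : σ * σ = 1 := by rcases hσ with rfl | rfl <;> norm_num
    have : A - σ * d i = s i := by
      simp only [hd]
      linear_combination -(A - s i) * hσσ
    rw [this]
    exact hs i hi'
  have hσ0 : σ ≠ 0 := by rcases hσ with rfl | rfl <;> norm_num
  rcases spreads_or_spreads (by linarith) (by linarith) n n _ hsep hbound with
    ⟨C, -, t, ht, ht0, htg⟩ | ⟨C, -, t, ht, ht0, htg⟩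
  · refine ⟨_, rGrowing_exp (L := fun i => 1 * (C - t i)) ?_ fun i hi => htg i (by omega),
      A, -σ * Real.exp C, mul_ne_zero (neg_ne_zero.2 hσ0) (Real.exp_ne_zero _), f₂, Or.inr rfl,
      fun j => ?_⟩
    · exact ((Real.log_lt_iff_lt_exp (by linarith)).1 ht0).le
    · convert hval _ (ht j (by omega)) using 1
      rw [f₂, mul_div_assoc, ← Real.exp_sub]
      ring_nf
  · refine ⟨_, rGrowing_exp (L := fun i => -1 * (C - t i)) ?_ fun i hi => htg i (by omega),
      A, -σ * Real.exp C, mul_ne_zero (neg_ne_zero.2 hσ0) (Real.exp_ne_zero _), f₁, Or.inl rfl,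
      fun j => ?_⟩
    · exact ((Real.log_lt_iff_lt_exp (by linarith)).1 ht0).le
    · convert hval _ (ht j (by omega)) using 1
      rw [f₁, mul_assoc, ← Real.exp_add]
      ring_nf

theorem strictMono_or_strictAnti_apply {f : ℝ → ℝ → ℝ → ℝ} (hf : f = f₁ ∨ f = f₂) {n : ℕ}
    {b : Fin n → ℝ} (hpos : ∀ j, 0 < b j) (hb : StrictMono b) (A : ℝ) {B : ℝ} (hB : B ≠ 0) :
    StrictMono (fun j => f (b j) A B) ∨ StrictAnti (fun j => f (b j) A B) := by
  rcases hf with rfl | rfl <;> rcases hB.lt_or_gt with h | h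
  · exact Or.inr fun i j hij => by simpa [f₁] using mul_lt_mul_of_neg_left (hb hij) h
  · exact Or.inl fun i j hij => by simpa [f₁] using mul_lt_mul_of_pos_left (hb hij) h
  · refine Or.inl fun i j hij => ?_
    have := one_div_lt_one_div_of_lt (hpos i) (hb hij)
    simp only [f₂, div_eq_mul_one_div B]
    nlinarith
  · refine Or.inr fun i j hij => ?_
    have := one_div_lt_one_div_of_lt (hpos i) (hb hij)
    simp only [f₂, div_eq_mul_one_div B]
    nlinarith

theorem strictMono_or_strictAnti_of_comp {n N : ℕ} {a : Fin N → ℝ} {T : Finset (Fin N)}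
    (ha : StrictMonoOn a T ∨ StrictAntiOn a T) {t : Fin n → Fin N} (ht : ∀ j, t j ∈ T)
    (h : StrictMono (a ∘ t) ∨ StrictAnti (a ∘ t)) : StrictMono t ∨ StrictAnti t := by
  rcases ha with ha | ha <;> rcases h with h | h
  · exact Or.inl fun i j hij => (ha.lt_iff_lt (ht i) (ht j)).1 (h hij)
  · exact Or.inr fun i j hij => (ha.lt_iff_lt (ht j) (ht i)).1 (h hij)
  · exact Or.inr fun i j hij => (ha.lt_iff_gt (ht i) (ht j)).1 (h hij)
  · exact Or.inl fun i j hij => (ha.lt_iff_gt (ht j) (ht i)).1 (h hij)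

theorem exists_strictMono_const_or_large_injOn {N k : ℕ} (n : ℕ) (a : Fin N → ℝ)
    (hN : n * k < N) :
    (∃ φ : Fin n → Fin N, StrictMono φ ∧ ∃ c, ∀ j, a (φ j) = c) ∨
      ∃ I : Finset (Fin N), Set.InjOn a I ∧ k < I.card := by
  classical
  by_cases h : ∃ c, n ≤ (Finset.univ.filter fun i => a i = c).card
  · obtain ⟨c, hc⟩ := h
    obtain ⟨U, hU, hUc⟩ := Finset.exists_subset_card_eq hc
    exact Or.inl ⟨U.orderEmbOfFin hUc, (U.orderEmbOfFin hUc).strictMono, c, fun j =>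
      (Finset.mem_filter.1 (hU (U.orderEmbOfFin_mem hUc j))).2⟩
  · push Not at h
    right
    obtain ⟨I, -, hinj, hI⟩ := Finset.exists_subset_injOn_image_eq_of_surjOn
      Set.univ (Finset.univ.image a) (f := a) (by simp [Set.SurjOn])
    refine ⟨I, hinj, ?_⟩
    have hle := Finset.card_le_mul_card_image (f := a) Finset.univ n fun c _ => (h c).le
    rw [Finset.card_univ, Fintype.card_fin, ← hI, Finset.card_image_of_injOn hinj] at hle
    exact lt_of_mul_lt_mul_left (hN.trans_le hle) (Nat.zero_le n)

theorem card_bound {R : ℝ} (hR : 1000 ≤ R) {n N : ℕ}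
    (hN : N = ⌈(2 : ℝ) ^ (R ^ (2 * ((n + 1 : ℕ) : ℝ)))⌉₊) :
    ∃ M : ℕ, R ^ (2 * n + 1) ≤ M ∧ (n + 1) * (2 ^ (8 * M + 1) * 2 ^ (8 * M + 1)) < N := by
  refine ⟨⌈R ^ (2 * n + 1)⌉₊, Nat.le_ceil _, ?_⟩
  set M := ⌈R ^ (2 * n + 1)⌉₊
  have hR1 : 1 ≤ R := by linarith
  have hX : (n : ℝ) + 1 ≤ R ^ (2 * n + 1) := by
    have h := one_add_mul_le_pow (a := R - 1) (by linarith) (2 * n + 1)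
    rw [add_sub_cancel] at h
    refine le_trans ?_ h
    push_cast
    nlinarith [Nat.cast_nonneg (α := ℝ) n]
  have hML : (M : ℝ) < R ^ (2 * n + 1) + 1 := Nat.ceil_lt_add_one (by positivity)
  have hnM : n + 1 ≤ M := by
    have : ((n + 1 : ℕ) : ℝ) ≤ M := by push_cast; exact hX.trans (Nat.le_ceil _)
    exact_mod_cast this
  have hexp : ((17 * M + 2 : ℕ) : ℝ) ≤ R ^ (2 * ((n + 1 : ℕ) : ℝ)) := by
    rw [show 2 * ((n + 1 : ℕ) : ℝ) = ((2 * n + 1 + 1 : ℕ) : ℝ) by push_cast; ring,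
      Real.rpow_natCast, pow_succ]
    push_cast
    nlinarith [Nat.cast_nonneg (α := ℝ) n]
  have h2 : 2 ^ (17 * M + 2) ≤ N := by
    have h := Real.rpow_le_rpow_of_exponent_le one_le_two hexp
    rw [Real.rpow_natCast] at h
    have h' := h.trans (Nat.le_ceil _)
    rw [← hN] at h'
    exact_mod_cast h'
  refine lt_of_lt_of_le ?_ h2
  have h3 : n + 1 < 2 ^ M := hnM.trans_lt Nat.lt_two_pow_self
  calc _ < 2 ^ M * (2 ^ (8 * M + 1) * 2 ^ (8 * M + 1)) := by gcongr
    _ = 2 ^ (17 * M + 2) := by rw [← pow_add, ← pow_add]; congr 1; ring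

/-- there is `R₀` such that for all `R ≥ R₀`, `n ≥ 1`, and
`N = ⌈2^(R^(2n))⌉`, every `N`-term real sequence admits an `R`-growing sequence `b` of
length `n`, parameters `A, B ∈ ℝ`, and `f ∈ {f₁, f₂}` such that the image of `b` or of
its reversal under `f(·, A, B)` is a subsequence of the given sequence. -/
theorem stmt7 :
    ∃ R₀ : ℝ, ∀ R : ℝ, R₀ ≤ R → ∀ n : ℕ, 1 ≤ n → ∀ N : ℕ,
      N = ⌈(2 : ℝ) ^ (R ^ (2 * (n : ℝ)))⌉₊ →
      ∀ a : Fin N → ℝ, ∃ b : Fin n → ℝ, RGrowing R b ∧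
        ∃ A B : ℝ, ∃ f : ℝ → ℝ → ℝ → ℝ, (f = f₁ ∨ f = f₂) ∧
          ∃ φ : Fin n → Fin N, StrictMono φ ∧
            ((∀ j : Fin n, a (φ j) = f (b j) A B) ∨
             (∀ j : Fin n, a (φ j) = f (b j.rev) A B)) := by
  classical
  refine ⟨1000, fun R hR n hn N hN a => ?_⟩
  obtain ⟨n, rfl⟩ := Nat.exists_eq_succ_of_ne_zero (show n ≠ 0 by omega)
  obtain ⟨M, hM, hMN⟩ := card_bound hR hN
  rcases exists_strictMono_const_or_large_injOn (n + 1) a hMN with ⟨φ, hφ, c, hc⟩ | ⟨I, hI, hIc⟩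
  · refine ⟨_, rGrowing_exp (L := fun i => R ^ (i + 1)) ?_ fun i _ => (pow_succ' R (i + 1)).ge,
      c, 0, f₁, Or.inl rfl, φ, hφ, Or.inl fun j => by simp [f₁, hc]⟩
    linarith [Real.add_one_le_exp R, pow_one R, congrArg Real.exp (pow_one R)]
  · obtain ⟨T, hTI, hT⟩ := exists_strictMonoOn_or_strictAntiOn _ _ I hI hIc
    have hTc : 2 ^ (8 * M + 1) ≤ (T.image a).card := by
      rw [Finset.card_image_of_injOn (hI.mono hTI)]
      rcases hT with hT | hT <;> exact hT.1.le
    obtain ⟨b, hb, A, B, hB, f, hf, hmem⟩ := exists_rGrowing_mem hR hM hTc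
    choose t ht hat using fun j => Finset.mem_image.1 (hmem j)
    obtain ⟨hb1, hbm⟩ := hb.strictMono (by linarith)
    have hcomp : a ∘ t = fun j => f (b j) A B := funext hat
    refine ⟨b, hb, A, B, f, hf, ?_⟩
    rcases strictMono_or_strictAnti_of_comp (hT.imp And.right And.right) ht
      (hcomp ▸ strictMono_or_strictAnti_apply hf (fun j => by linarith [hb1 j]) hbm A hB)
      with h | h
    · exact ⟨t, h, Or.inl hat⟩
    · exact ⟨t ∘ Fin.rev, h.comp Fin.rev_strictAnti, Or.inr fun j => hat j.rev⟩
end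

section
/- For every finite set Q of polynomials in ℝ[y₁,…,y_k,X,Y] there exist constants C₁ and R₀ such that for every n ≥ 1 and every real R ≥ R₀ there exists N ≤ 2^(R^(C₁·n)) such that every sequence (a₁,…,a_N) of real numbers admits an R-growing sequence b = (b₁,…,bₙ), real numbers A, B, and a transformation f ∈ {f₁, f₂} with f₁(x,X,Y) := X + Y·x and f₂(x,X,Y) := X + Y/x, such that either (f(b₁,A,B),…,f(bₙ,A,B)) or (f(bₙ,A,B),…,f(b₁,A,B)) is a subsequence of (a₁,…,a_N), and moreover b is R-well-placed with respect to q, A, B for every q ∈ Q. -/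
/-- A polynomial `q ∈ ℝ[y₁,…,y_k,X,Y]` is taken as a polynomial in `y₁,…,y_k` whose
coefficients `q_α` are polynomials in the two variables `X, Y`; `coeffVal q α A B` is
the value `q_α(A,B)`. -/
noncomputable def coeffVal {k : ℕ} (q : MvPolynomial (Fin k) (MvPolynomial (Fin 2) ℝ))
    (α : Fin k →₀ ℕ) (A B : ℝ) : ℝ :=
  MvPolynomial.eval ![A, B] (MvPolynomial.coeff α q)

/-- An `R`-growing sequence `b = (b₁,…,bₙ)` is `R`-well-placed w.r.t. `q, A, B` if for
all `α, β ∈ Λ(q)`, either `R·|q_α(A,B)| ≤ b₁·|q_β(A,B)|` (the ratio is dwarfed) or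
`|q_α(A,B)| ≥ bₙ^R·|q_β(A,B)|` (the ratio is gigantic). -/
def WellPlaced (R : ℝ) {n k : ℕ} (b : Fin n → ℝ)
    (q : MvPolynomial (Fin k) (MvPolynomial (Fin 2) ℝ)) (A B : ℝ) : Prop :=
  ∀ h0 : 0 < n, ∀ α ∈ q.support, ∀ β ∈ q.support,
    R * |coeffVal q α A B| ≤ b ⟨0, h0⟩ * |coeffVal q β A B| ∨
    b ⟨n - 1, Nat.sub_lt h0 Nat.one_pos⟩ ^ R * |coeffVal q β A B| ≤ |coeffVal q α A B|

/-- From a non-constant family one can extract a far point `u` and a large subfamily lying on one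
side of `u` whose diameter is at most `1 / R` times its distance to `u`. -/
theorem exists_far_point {ι : Type*} [LinearOrder ι] (x : ι → ℝ) {R : ℝ} (hR : 1 ≤ R) {m : ℕ}
    (S : Finset ι) (hne : ∃ i ∈ S, ∃ j ∈ S, x i ≠ x j) (hS : (4 * ⌈R⌉₊ + 4) * m ≤ S.card) :
    ∃ u ∈ S, ∃ S' ⊆ S, m ≤ S'.card ∧ (∀ i ∈ S', x u ≠ x i) ∧
      (∀ i ∈ S', ∀ j ∈ S', R * |x j - x i| ≤ |x u - x i|) ∧
      ((∀ i ∈ S', i < u) ∨ ∀ i ∈ S', u < i) := by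
  classical
  obtain ⟨i, hi, j, hj, hij⟩ := hne
  obtain ⟨p, hp, hpmin⟩ := S.exists_min_image x ⟨i, hi⟩
  obtain ⟨r, hr, hrmax⟩ := S.exists_max_image x ⟨i, hi⟩
  have hL : 0 < x r - x p := by
    rcases lt_or_gt_of_ne hij with h | h
    · linarith [hpmin i hi, hrmax j hj]
    · linarith [hpmin j hj, hrmax i hi]
  set L := x r - x p with hLdef
  set k : ℕ := 2 * ⌈R⌉₊ + 1 with hk
  have hkR : 2 * R + 1 ≤ (k : ℝ) := by
    have := Nat.le_ceil R
    push_cast [hk]; linarith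
  set y : ι → ℝ := fun i => (x i - x p) / L * k with hy
  have hxy : ∀ i, x i = x p + L / k * y i := by
    intro i
    have : (k : ℝ) ≠ 0 := by positivity
    simp only [hy]; field_simp; ring
  have hLk : 0 < L / k := by positivity
  have hy0 : ∀ i ∈ S, 0 ≤ y i := fun i hi =>
    mul_nonneg (div_nonneg (by linarith [hpmin i hi]) hL.le) (by positivity)
  have hyk : ∀ i ∈ S, y i ≤ k := fun i hi =>
    mul_le_of_le_one_left (by positivity) ((div_le_one hL).2 (by linarith [hrmax i hi]))
  have hyp : y p = 0 := by simp [hy]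
  have hyr : y r = k := by simp only [hy]; rw [← hLdef, div_self hL.ne', one_mul]
  set far : ℕ → ι := fun c => if 2 * c < k then r else p with hfar
  have hmaps : ∀ i ∈ S, (⌊y i⌋₊, decide (i < far ⌊y i⌋₊)) ∈
      Finset.range (k + 1) ×ˢ (Finset.univ : Finset Bool) := by
    intro i hi
    simp only [Finset.mem_product, Finset.mem_range, Finset.mem_univ, and_true]
    exact Nat.lt_succ_of_le (Nat.floor_le_of_le (hyk i hi))
  obtain ⟨⟨c, s⟩, -, hcard⟩ := Finset.exists_le_card_fiber_of_mul_le_card_of_maps_to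
    (n := m) hmaps ⟨(0, true), by simp⟩ (by
      simp only [Finset.card_product, Finset.card_range, Finset.card_univ, Fintype.card_bool]
      refine le_trans (le_of_eq ?_) hS
      rw [hk]; ring)
  have key : ∀ i ∈ S, ⌊y i⌋₊ = c → (c : ℝ) ≤ y i ∧ y i < c + 1 := fun i hi hc =>
    (Nat.floor_eq_iff (hy0 i hi)).1 hc
  have hdist : ∀ i ∈ S, ⌊y i⌋₊ = c → R ≤ |y (far c) - y i| := by
    intro i hi hc
    obtain ⟨h1, h2⟩ := key i hi hc
    simp only [hfar]
    split_ifs with h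
    · have : (2 * c + 1 : ℝ) ≤ k := by exact_mod_cast h
      rw [hyr]
      exact le_trans (by linarith) (le_abs_self _)
    · have : (k : ℝ) ≤ 2 * c := by exact_mod_cast not_lt.1 h
      rw [hyp]
      exact le_trans (by linarith) (neg_le_abs _)
  have habs : ∀ i j, |x i - x j| = L / k * |y i - y j| := by
    intro i j
    rw [hxy i, hxy j, ← abs_of_pos hLk, ← abs_mul, abs_of_pos hLk]
    congr 1; ring
  refine ⟨far c, ?_, _, Finset.filter_subset _ _, hcard, ?_, ?_, ?_⟩
  · simp only [hfar]; split_ifs <;> assumption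
  · intro i hi heq
    simp only [Finset.mem_filter, Prod.mk.injEq] at hi
    have h1 := hdist i hi.1 hi.2.1
    have h2 := habs (far c) i
    rw [heq, sub_self, abs_zero] at h2
    have : 0 < L / k * |y (far c) - y i| := mul_pos hLk (by linarith)
    linarith
  · intro i hi j hj
    simp only [Finset.mem_filter, Prod.mk.injEq] at hi hj
    have h1 := hdist i hi.1 hi.2.1
    obtain ⟨h2, h3⟩ := key i hi.1 hi.2.1
    obtain ⟨h4, h5⟩ := key j hj.1 hj.2.1
    have h6 : |y j - y i| ≤ 1 := abs_le.2 ⟨by linarith, by linarith⟩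
    rw [habs, habs]
    have h7 : R * |y j - y i| ≤ |y (far c) - y i| :=
      le_trans (mul_le_of_le_one_right (by linarith) h6) h1
    calc R * (L / k * |y j - y i|) = L / k * (R * |y j - y i|) := by ring
      _ ≤ _ := mul_le_mul_of_nonneg_left h7 hLk.le
  · cases s
    · right
      intro i hi
      simp only [Finset.mem_filter, Prod.mk.injEq, decide_eq_false_iff_not] at hi
      obtain ⟨hi, hc, hlt⟩ := hi
      rw [hc, not_lt] at hlt
      refine lt_of_le_of_ne hlt fun h => ?_
      have := hdist i hi hc
      rw [h, sub_self, abs_zero] at this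
      linarith
    · left
      intro i hi
      simp only [Finset.mem_filter, Prod.mk.injEq, decide_eq_true_eq] at hi
      exact hi.2.1 ▸ hi.2.2

theorem exists_pairwise_separated_list {ι : Type*} [LinearOrder ι] (x : ι → ℝ) {R : ℝ}
    (hR : 1 ≤ R) {e : ℕ} (he : 1 ≤ e) (T : ℕ) (S : Finset ι)
    (hfib : ∀ v, (S.filter (fun i => x i = v)).card < e)
    (hS : e * (4 * ⌈R⌉₊ + 4) ^ T ≤ S.card) :
    ∃ i₀ ∈ S, ∃ l : List ι, l.length = T ∧ (∀ u ∈ l, u ∈ S ∧ x u ≠ x i₀) ∧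
      l.Pairwise (fun u v => R * |x v - x i₀| ≤ |x u - x i₀| ∧
        (u < i₀ → u < v) ∧ (i₀ < u → v < u)) := by
  induction T generalizing S with
  | zero =>
    obtain ⟨i, hi⟩ : S.Nonempty := Finset.card_pos.1 (by simp at hS; omega)
    exact ⟨i, hi, [], by simp⟩
  | succ T ih =>
    have hecard : e ≤ S.card :=
      le_trans (Nat.le_mul_of_pos_right e (by positivity)) hS
    have hne : ∃ i ∈ S, ∃ j ∈ S, x i ≠ x j := by
      by_contra! h
      obtain ⟨i, hi⟩ : S.Nonempty := Finset.card_pos.1 (by omega)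
      have := hfib (x i)
      rw [Finset.filter_true_of_mem fun j hj => h j hj i hi] at this
      omega
    obtain ⟨u, hu, S', hS', hcard, hxu, hfar, hside⟩ := exists_far_point x hR
      (m := e * (4 * ⌈R⌉₊ + 4) ^ T) S hne (le_trans (le_of_eq (by ring)) hS)
    obtain ⟨i₀, hi₀, l, hl, hmem, hpw⟩ := ih S' (fun v =>
      lt_of_le_of_lt (Finset.card_le_card (Finset.filter_subset_filter _ hS')) (hfib v)) hcard
    refine ⟨i₀, hS' hi₀, u :: l, by simp [hl], ?_, List.pairwise_cons.2 ⟨?_, hpw⟩⟩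
    · intro w hw
      rcases List.mem_cons.1 hw with rfl | hw
      · exact ⟨hu, hxu i₀ hi₀⟩
      · exact ⟨hS' (hmem w hw).1, (hmem w hw).2⟩
    · intro v hv
      have hv' := (hmem v hv).1
      refine ⟨hfar i₀ hi₀ v hv', fun h => ?_, fun h => ?_⟩
      · rcases hside with hs | hs
        · exact absurd (hs i₀ hi₀) h.asymm
        · exact hs v hv'
      · rcases hside with hs | hs
        · exact hs v hv'
        · exact absurd (hs i₀ hi₀) h.asymm

theorem exists_four_mul_length_filter {α : Type*} (l : List α) (P Q : α → Bool) (n : ℕ)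
    (hl : 4 * n ≤ l.length) :
    ∃ s t : Bool, n ≤ (l.filter fun a => P a == s && Q a == t).length := by
  by_contra! h
  have h1 := h true true
  have h2 := h true false
  have h3 := h false true
  have h4 := h false false
  have : l.length = (l.filter fun a => P a == true && Q a == true).length +
      (l.filter fun a => P a == true && Q a == false).length +
      (l.filter fun a => P a == false && Q a == true).length +
      (l.filter fun a => P a == false && Q a == false).length := by
    clear h h1 h2 h3 h4 hl
    induction l with
    | nil => simp
    | cons a l ih =>
      rcases hp : P a <;> rcases hq : Q a <;> simp [hp, hq] at ih ⊢ <;> omega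
  omega

/-- A long family of reals whose values are not too often repeated contains a monotone (in the
index) subsequence whose distances to some member `x i₀`, all on one side, grow by a factor `R`. -/
theorem exists_geometric_subsequence_s8 {ι : Type*} [LinearOrder ι] (x : ι → ℝ) {R : ℝ}
    (hR : 1 ≤ R) {e : ℕ} (he : 1 ≤ e) (n : ℕ) (S : Finset ι)
    (hfib : ∀ v, (S.filter (fun i => x i = v)).card < e)
    (hS : e * (4 * ⌈R⌉₊ + 4) ^ (4 * n) ≤ S.card) :
    ∃ i₀ : ι, ∃ p : Fin n → ι, ∃ σ : ℝ, (σ = 1 ∨ σ = -1) ∧ (StrictMono p ∨ StrictAnti p) ∧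
      (∀ j, 0 < σ * (x (p j) - x i₀)) ∧
      ∀ i j, i < j → R * (σ * (x (p i) - x i₀)) ≤ σ * (x (p j) - x i₀) := by
  obtain ⟨i₀, hi₀, l, hl, hmem, hpw⟩ := exists_pairwise_separated_list x hR he (4 * n) S hfib hS
  obtain ⟨s, t, hst⟩ := exists_four_mul_length_filter l (fun u => decide (x i₀ < x u))
    (fun u => decide (i₀ < u)) n hl.ge
  set l' := l.filter fun a => decide (x i₀ < x a) == s && decide (i₀ < a) == t with hl'
  have hpw' := List.pairwise_iff_getElem.1 (hpw.sublist (List.filter_sublist (l := l)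
    (p := fun a => decide (x i₀ < x a) == s && decide (i₀ < a) == t)))
  rw [← hl'] at hpw'
  have hmem' : ∀ u ∈ l', x u ≠ x i₀ ∧ (decide (x i₀ < x u) = s) ∧ (decide (i₀ < u) = t) := by
    intro u hu
    simp only [hl', List.mem_filter, Bool.and_eq_true, beq_iff_eq] at hu
    exact ⟨(hmem u hu.1).2, hu.2⟩
  set p : Fin n → ι := fun j => l'[(j.rev : ℕ)]'(by have := j.rev.2; omega) with hp
  have hpmem : ∀ j, p j ∈ l' := fun j => List.getElem_mem _
  have hrel : ∀ i j : Fin n, i < j → R * |x (p i) - x i₀| ≤ |x (p j) - x i₀| ∧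
      (p j < i₀ → p j < p i) ∧ (i₀ < p j → p i < p j) := fun i j hij =>
    hpw' _ _ _ _ (Fin.rev_lt_rev.2 hij)
  obtain ⟨σ, hσ, habs⟩ : ∃ σ : ℝ, (σ = 1 ∨ σ = -1) ∧
      ∀ j, |x (p j) - x i₀| = σ * (x (p j) - x i₀) := by
    cases s
    · refine ⟨-1, Or.inr rfl, fun j => ?_⟩
      have := (hmem' _ (hpmem j)).2.1
      simp only [decide_eq_false_iff_not, not_lt] at this
      rw [abs_of_nonpos (by linarith)]; ring
    · refine ⟨1, Or.inl rfl, fun j => ?_⟩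
      have := (hmem' _ (hpmem j)).2.1
      simp only [decide_eq_true_eq] at this
      rw [abs_of_nonneg (by linarith)]; ring
  refine ⟨i₀, p, σ, hσ, ?_, fun j => ?_, fun i j hij => ?_⟩
  · cases t
    · right
      intro i j hij
      obtain ⟨h1, -, h3⟩ := hmem' _ (hpmem j)
      simp only [decide_eq_false_iff_not, not_lt] at h3
      exact (hrel i j hij).2.1 (lt_of_le_of_ne h3 fun h => h1 (by rw [h]))
    · left
      intro i j hij
      have h3 := (hmem' _ (hpmem j)).2.2
      simp only [decide_eq_true_eq] at h3
      exact (hrel i j hij).2.2 h3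
  · rw [← habs]
    exact abs_pos.2 (sub_ne_zero.2 (hmem' _ (hpmem j)).1)
  · rw [← habs, ← habs]
    exact (hrel i j hij).1

/-- Every long enough sequence contains the image, under `f₁` or `f₂`, of a sequence growing as
fast as an `R`-growing one. -/
theorem exists_growing_preimage {R : ℝ} (hR : 2 ≤ R) (n : ℕ) (hn : 1 ≤ n) {N : ℕ}
    (hN : n * (4 * ⌈R⌉₊ + 4) ^ (4 * (2 * (4 * ⌈R⌉₊ + 4) ^ (4 * n))) ≤ N) (a : Fin N → ℝ) :
    ∃ b : Fin n → ℝ, (∀ i, R ≤ b i) ∧ (∀ i j, i < j → b i ^ R ≤ b j) ∧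
      ∃ A B : ℝ, ∃ f : ℝ → ℝ → ℝ → ℝ, (f = f₁ ∨ f = f₂) ∧
        ∃ p : Fin n → Fin N, (StrictMono p ∨ StrictAnti p) ∧ ∀ j, a (p j) = f (b j) A B := by
  by_cases hfib : ∀ v, (Finset.univ.filter (fun i => a i = v)).card < n
  · obtain ⟨i₀, p, σ, hσ, hp, hpos, hgeo⟩ := exists_geometric_subsequence_s8 a (by linarith) hn
      (2 * (4 * ⌈R⌉₊ + 4) ^ (4 * n)) Finset.univ hfib (by simpa using hN)
    have hσσ : σ * σ = 1 := by rcases hσ with rfl | rfl <;> norm_num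
    set t := fun j => Real.log (σ * (a (p j) - a i₀)) with ht
    have hsep : ∀ i j, i < j → Real.log R + t i ≤ t j := by
      intro i j hij
      simp only [ht]
      rw [← Real.log_mul (by linarith) (hpos i).ne']
      exact Real.log_le_log (mul_pos (by linarith) (hpos i)) (hgeo i j hij)
    have hlog : 0 < Real.log R := Real.log_pos (by linarith)
    have hmono : StrictMono t := fun i j hij => by linarith [hsep i j hij]
    obtain ⟨k₀, p', σ', hσ', hp', hpos', hgeo'⟩ := exists_geometric_subsequence_s8 t
      (R := R) (by linarith) (e := 2) (by norm_num) n Finset.univ (fun v => by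
        refine Nat.lt_succ_of_le (Finset.card_le_one.2 fun i hi j hj => hmono.injective ?_)
        rw [(Finset.mem_filter.1 hi).2, (Finset.mem_filter.1 hj).2]) (by simp)
    have hexp : ∀ j, σ * Real.exp (t j) = a (p j) - a i₀ := by
      intro j
      simp only [ht]
      rw [Real.exp_log (hpos j), ← mul_assoc, hσσ, one_mul]
    refine ⟨fun j => Real.exp (σ' * (t (p' j) - t k₀)), fun i => ?_, fun i j hij => ?_,
      a i₀, σ * Real.exp (t k₀), if σ' = 1 then f₁ else f₂, by split_ifs <;> simp,
      p ∘ p', ?_, fun j => ?_⟩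
    · rw [← Real.log_le_iff_le_exp (by linarith)]
      have h0 := hpos' i
      rcases lt_trichotomy (p' i) k₀ with h | h | h
      · have := hsep _ _ h
        rcases hσ' with rfl | rfl <;> linarith
      · rw [h] at h0; simp at h0
      · have := hsep _ _ h
        rcases hσ' with rfl | rfl <;> linarith
    · rw [← Real.exp_mul]
      exact Real.exp_le_exp.2 (by rw [mul_comm]; exact hgeo' i j hij)
    · rcases hp with hp | hp <;> rcases hp' with hp' | hp'
      · exact Or.inl (hp.comp hp')
      · exact Or.inr (hp.comp_strictAnti hp')
      · exact Or.inr (hp.comp_strictMono hp')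
      · exact Or.inl (hp.comp hp')
    · have h := hexp (p' j)
      rcases hσ' with rfl | rfl
      · rw [if_pos rfl, f₁, mul_assoc, ← Real.exp_add, Function.comp_apply]
        rw [show t k₀ + 1 * (t (p' j) - t k₀) = t (p' j) by ring, h]; ring
      · rw [if_neg (by norm_num), f₂, mul_div_assoc, ← Real.exp_sub, Function.comp_apply]
        rw [show t k₀ - -1 * (t (p' j) - t k₀) = t (p' j) by ring, h]; ring
  · push Not at hfib
    obtain ⟨v, hv⟩ := hfib
    obtain ⟨S, hS, hcard⟩ := Finset.exists_subset_card_eq hv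
    refine ⟨fun j => Real.exp (R ^ ((j : ℕ) + 1)), fun i => ?_, fun i j hij => ?_, v, 0, f₁,
      Or.inl rfl, S.orderEmbOfFin hcard, Or.inl (S.orderEmbOfFin hcard).strictMono, fun j => ?_⟩
    · have h1 : R ≤ R ^ ((i : ℕ) + 1) := le_self_pow₀ (by linarith) (by omega)
      linarith [Real.add_one_le_exp (R ^ ((i : ℕ) + 1))]
    · rw [← Real.exp_mul, ← pow_succ]
      exact Real.exp_le_exp.2 (pow_le_pow_right₀ (by linarith) (by simpa using hij))
    · rw [(Finset.mem_filter.1 (hS (S.orderEmbOfFin_mem hcard j))).2, f₁]; ring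

/-- Cutting a growing sequence into more than `#F` blocks of length `n`, one of the blocks avoids
all the ratios `u c / v c`, `c ∈ F`. -/
theorem exists_wellPlaced_block {γ : Type*} (F : Finset γ) (u v : γ → ℝ)
    (hv : ∀ c, 0 ≤ v c) {R : ℝ} (hR : 2 ≤ R) (n : ℕ)
    (b : Fin ((F.card + 1) * (n + 1)) → ℝ) (hb : ∀ i, R ≤ b i)
    (hg : ∀ i j, i < j → b i ^ R ≤ b j) :
    ∃ ψ : Fin n → Fin ((F.card + 1) * (n + 1)), StrictMono ψ ∧ ∀ c ∈ F, ∀ i j,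
      R * u c ≤ b (ψ i) * v c ∨ b (ψ j) ^ R * v c ≤ u c := by
  set ψ : Fin (F.card + 1) → Fin (n + 1) → Fin ((F.card + 1) * (n + 1)) :=
    fun k i => finProdFinEquiv (k, i) with hψ
  have hval : ∀ k i, ((ψ k i : Fin _) : ℕ) = i + (n + 1) * k := fun k i => rfl
  have hlt : ∀ k l i j, k < l → ψ k i < ψ l j := by
    intro k l i j hkl
    rw [Fin.lt_def, hval, hval]
    have h1 : (k : ℕ) + 1 ≤ l := hkl
    have h2 := Nat.mul_le_mul_left (n + 1) h1
    have := i.2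
    rw [mul_add] at h2
    omega
  have hmono : ∀ k, StrictMono (ψ k) := fun k i j hij => by
    rw [Fin.lt_def, hval, hval]
    have : (i : ℕ) < j := hij
    omega
  by_contra! h
  have hbad : ∀ k, ∃ c ∈ F, ∃ i j : Fin n,
      b (ψ k i.castSucc) * v c < R * u c ∧ u c < b (ψ k j.castSucc) ^ R * v c := fun k =>
    h (fun i => ψ k i.castSucc) ((hmono k).comp (Fin.strictMono_castSucc))
  choose c hc i j h1 h2 using hbad
  obtain ⟨k, -, l, -, hkl, hkc⟩ := Finset.exists_ne_map_eq_of_card_lt_of_maps_to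
    (s := Finset.univ) (t := F) (f := c) (by simp) (fun k _ => hc k)
  have contra : ∀ k l, k < l → c k = c l → False := by
    intro k l hkl hkc
    have h3 := h1 l
    have h4 := h2 k
    rw [← hkc] at h3
    have h5 := hg _ _ (hmono k (Fin.castSucc_lt_last (j k)))
    have h6 := hg _ _ (hlt k l (Fin.last n) (i l).castSucc hkl)
    set w := b (ψ k (Fin.last n)) with hw
    have hwR : R ≤ w := hb _
    have h7 : R * w ≤ w ^ R := by
      calc R * w ≤ w * w := by nlinarith
        _ = w ^ (2 : ℝ) := by rw [Real.rpow_two, sq]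
        _ ≤ w ^ R := Real.rpow_le_rpow_of_exponent_le (by linarith) hR
    have h8 := mul_le_mul_of_nonneg_right (h7.trans h6) (hv (c k))
    have h9 := mul_le_mul_of_nonneg_right h5 (hv (c k))
    nlinarith
  rcases lt_or_gt_of_ne hkl with h | h
  · exact contra k l h hkc
  · exact contra l k h hkc.symm

theorem mul_pow_le_two_pow {K n : ℕ} (hK : 9 ≤ K) (hn : 1 ≤ n) :
    n * K ^ (4 * (2 * K ^ (4 * n))) ≤ 2 ^ K ^ (6 * n) := by
  have h1 : n ≤ 2 ^ K ^ (4 * n) := by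
    have h1 : n < K ^ n := Nat.lt_pow_self (by omega)
    have h2 : K ^ n ≤ K ^ (4 * n) := Nat.pow_le_pow_right (by omega) (by omega)
    have h3 : K ^ (4 * n) < 2 ^ K ^ (4 * n) := Nat.lt_two_pow_self
    omega
  have h2 : K ≤ 2 ^ K := Nat.lt_two_pow_self.le
  calc n * K ^ (4 * (2 * K ^ (4 * n)))
      ≤ 2 ^ K ^ (4 * n) * (2 ^ K) ^ (4 * (2 * K ^ (4 * n))) := by gcongr
    _ = 2 ^ (K ^ (4 * n) * (1 + 8 * K)) := by rw [← pow_mul, ← pow_add]; ring_nf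
    _ ≤ 2 ^ (K ^ (4 * n) * (K ^ 2)) := by gcongr <;> nlinarith
    _ ≤ 2 ^ K ^ (6 * n) := by
      rw [← pow_add]
      exact Nat.pow_le_pow_right (by omega) (Nat.pow_le_pow_right (by omega) (by omega))

/-- for every finite set `Q` of polynomials in `ℝ[y₁,…,y_k,X,Y]` there are
`C₁` and `R₀` such that for every `n ≥ 1` and `R ≥ R₀` there is `N ≤ 2^(R^(C₁·n))` such
that every `N`-term sequence admits an `R`-growing sequence `b`, parameters `A, B`, and
`f ∈ {f₁, f₂}` with the image of `b` or of its reversal under `f(·,A,B)` a subsequence,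
and with `b` `R`-well-placed w.r.t. every `q ∈ Q`, `A`, `B`. -/
theorem stmt8 (k : ℕ) (Q : Finset (MvPolynomial (Fin k) (MvPolynomial (Fin 2) ℝ))) :
    ∃ C₁ R₀ : ℝ, ∀ n : ℕ, 1 ≤ n → ∀ R : ℝ, R₀ ≤ R →
      ∃ N : ℕ, (N : ℝ) ≤ (2 : ℝ) ^ (R ^ (C₁ * (n : ℝ))) ∧
      ∀ a : Fin N → ℝ, ∃ b : Fin n → ℝ, RGrowing R b ∧
        ∃ A B : ℝ, ∃ f : ℝ → ℝ → ℝ → ℝ, (f = f₁ ∨ f = f₂) ∧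
          (∃ φ : Fin n → Fin N, StrictMono φ ∧
            ((∀ j : Fin n, a (φ j) = f (b j) A B) ∨
             (∀ j : Fin n, a (φ j) = f (b j.rev) A B))) ∧
          ∀ q ∈ Q, WellPlaced R b q A B := by
  set F := Q.sigma fun q => q.support ×ˢ q.support with hF
  refine ⟨24 * (F.card + 1), 8, fun n hn R hR => ?_⟩
  set n' := (F.card + 1) * (n + 1) with hn'
  have hn'pos : 1 ≤ n' := Nat.mul_pos (by omega) (by omega)
  set K := 4 * ⌈R⌉₊ + 4 with hK
  refine ⟨n' * K ^ (4 * (2 * K ^ (4 * n'))), ?_, fun a => ?_⟩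
  · have hceil : 8 ≤ ⌈R⌉₊ := by
      exact_mod_cast hR.trans (Nat.le_ceil R)
    have hKR : (K : ℝ) ≤ R ^ 2 := by
      have := Nat.ceil_lt_add_one (show 0 ≤ R by linarith)
      push_cast [hK]; nlinarith
    have hexp : 2 * (6 * n') ≤ 24 * (F.card + 1) * n := by
      have : n + 1 ≤ 2 * n := by omega
      have := Nat.mul_le_mul_left (F.card + 1) this
      rw [hn']; nlinarith
    have hle : ((K ^ (6 * n') : ℕ) : ℝ) ≤ R ^ (24 * ((F.card : ℝ) + 1) * n) := by
      calc ((K ^ (6 * n') : ℕ) : ℝ) ≤ (R ^ 2) ^ (6 * n') := by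
            push_cast; gcongr
        _ ≤ R ^ (24 * (F.card + 1) * n) := by
            rw [← pow_mul]; exact pow_le_pow_right₀ (by linarith) hexp
        _ = R ^ (24 * ((F.card : ℝ) + 1) * n) := by
            rw [← Real.rpow_natCast]; push_cast; rfl
    calc ((n' * K ^ (4 * (2 * K ^ (4 * n'))) : ℕ) : ℝ) ≤ ((2 ^ K ^ (6 * n') : ℕ) : ℝ) :=
          Nat.cast_le.2 (mul_pow_le_two_pow (by omega) hn'pos)
      _ = (2 : ℝ) ^ ((K ^ (6 * n') : ℕ) : ℝ) := by rw [Real.rpow_natCast, Nat.cast_pow]; rfl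
      _ ≤ _ := Real.rpow_le_rpow_of_exponent_le (by norm_num) hle
  · obtain ⟨b, hb, hg, A, B, f, hf, p, hp, hpf⟩ :=
      exists_growing_preimage (R := R) (by linarith) n' hn'pos le_rfl a
    obtain ⟨ψ, hψ, hwell⟩ := exists_wellPlaced_block F
      (fun c => |coeffVal c.1 c.2.1 A B|) (fun c => |coeffVal c.1 c.2.2 A B|)
      (fun c => abs_nonneg _) (by linarith) n b hb hg
    refine ⟨b ∘ ψ, ⟨fun h => hb _, fun i h => hg _ _ (hψ (Fin.mk_lt_mk.2 (Nat.lt_succ_self i)))⟩,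
      A, B, f, hf, ?_, fun q hq h0 α hα β hβ => ?_⟩
    · rcases hp with hp | hp
      · exact ⟨p ∘ ψ, hp.comp hψ, Or.inl fun j => hpf (ψ j)⟩
      · exact ⟨fun j => p (ψ j.rev), fun i j hij => hp (hψ (Fin.rev_lt_rev.2 hij)),
          Or.inr fun j => hpf (ψ j.rev)⟩
    · exact hwell ⟨q, α, β⟩ (by simp only [hF, Finset.mem_sigma, Finset.mem_product]; exact ⟨hq, hα, hβ⟩) _ _
end
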